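/- Let f(n) = (1/2)·#{(x,y) ∈ ℤ² : x² + 2y² = n} for positive integers n and f(0) = 1. Then, as x → ∞, max_{n ≤ x} log f(f(n)) = (√(log x)/log₂ x)·( c/√2 + O(log₃ x / log₂ x) ), where c = (8·∑_{l=1}^∞ (log(1 + 1/l))²)^{1/2}. -/

import Mathlib

open Filter

/-- The normalized representation-counting function of the binary quadratic form `x² + 2y²`,
with the convention `f(0) = 1`. -/
noncomputable def fForm (n : ℕ) : ℕ :=
  if n = 0 then 1 else Nat.card {p : ℤ × ℤ // p.1 ^ 2 + 2 * p.2 ^ 2 = (n : ℤ)} / 2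

/-- The constant `c = (8·∑_{l=1}^∞ (log(1 + 1/l))²)^{1/2}`. -/
noncomputable def cBEFS : ℝ :=
  Real.sqrt (8 * ∑' l : ℕ, (Real.log (1 + 1 / ((l : ℝ) + 1))) ^ 2)

namespace BE
open Filter Complex MeasureTheory Topology

set_option linter.unusedSectionVars false

lemma cpow_succ' {x : ℂ} (hx : x ≠ 0) (a : ℂ) : x ^ (a + 1) = x ^ a * x := by
  rw [Complex.cpow_add _ _ hx, Complex.cpow_one]

lemma char_partial {N : ℕ} [NeZero N] (χ : DirichletCharacter ℂ N) :
    ∃ (κ : ℂ) (M : ℝ), 0 ≤ M ∧ ∀ n : ℕ, ‖(∑ k ∈ Finset.Icc 1 n, χ (k : ZMod N)) - κ * n‖ ≤ M := by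
  have hN : (N : ℂ) ≠ 0 := by exact_mod_cast NeZero.ne N
  set A : ℕ → ℂ := fun n => ∑ k ∈ Finset.Icc 1 n, χ (k : ZMod N) with hA
  set κ : ℂ := A N / N with hκ
  have hs : ∀ n, A (n + 1) = A n + χ ((n + 1 : ℕ) : ZMod N) := fun n => by
    simp only [hA]; rw [Finset.sum_Icc_succ_top (by omega)]
  have hper : Function.Periodic (fun n : ℕ => A n - κ * n) N := by
    intro n
    induction n with
    | zero =>
      simp only [zero_add, hκ]
      rw [div_mul_cancel₀ _ hN]; simp [hA]
    | succ n ih =>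
      have e : n + 1 + N = (n + N) + 1 := by ring
      simp only at ih ⊢
      rw [e, hs, hs]
      have : ((n + N + 1 : ℕ) : ZMod N) = ((n + 1 : ℕ) : ZMod N) := by push_cast; simp
      rw [this]
      push_cast at ih ⊢
      linear_combination ih
  refine ⟨κ, ∑ j ∈ Finset.range N, ‖A j - κ * j‖, Finset.sum_nonneg fun _ _ => norm_nonneg _, fun n => ?_⟩
  have h1 := hper.map_mod_nat n
  change ‖A n - κ * n‖ ≤ _
  rw [← h1]
  exact Finset.single_le_sum (f := fun j : ℕ => ‖A j - κ * j‖) (fun _ _ => norm_nonneg _)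
    (Finset.mem_range.2 (Nat.mod_lt _ (NeZero.pos N)))

section trunc
variable {N : ℕ} [NeZero N] (χ : DirichletCharacter ℂ N) (κ : ℂ) (K : ℕ)

noncomputable def rem (u : ℝ) : ℂ :=
  Set.indicator (Set.Ioi (K : ℝ)) (fun u : ℝ => (∑ k ∈ Finset.Icc 1 ⌊u⌋₊, χ (k : ZMod N)) -
    (∑ k ∈ Finset.Icc 1 K, χ (k : ZMod N)) - κ * (u - K)) u

lemma rem_meas : Measurable (rem χ κ K) := by
  refine Measurable.indicator ?_ measurableSet_Ioi
  have : Measurable (fun u : ℝ => ∑ k ∈ Finset.Icc 1 ⌊u⌋₊, χ (k : ZMod N)) :=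
    (measurable_from_top (f := fun n : ℕ => ∑ k ∈ Finset.Icc 1 n, χ (k : ZMod N))).comp
      Nat.measurable_floor
  fun_prop

lemma rem_bound {M : ℝ} (hM : ∀ n : ℕ, ‖(∑ k ∈ Finset.Icc 1 n, χ (k : ZMod N)) - κ * n‖ ≤ M)
    (u : ℝ) : ‖rem χ κ K u‖ ≤ 2 * M + ‖κ‖ := by
  have hM0 : 0 ≤ M := (norm_nonneg _).trans (hM 0)
  unfold rem
  by_cases hu : u ∈ Set.Ioi (K : ℝ)
  · rw [Set.indicator_of_mem hu]
    have hu0 : 0 ≤ u := (Nat.cast_nonneg K).trans (le_of_lt hu)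
    have e : (∑ k ∈ Finset.Icc 1 ⌊u⌋₊, χ (k : ZMod N)) -
      (∑ k ∈ Finset.Icc 1 K, χ (k : ZMod N)) - κ * (u - K) =
      ((∑ k ∈ Finset.Icc 1 ⌊u⌋₊, χ (k : ZMod N)) - κ * (⌊u⌋₊ : ℕ)) -
      ((∑ k ∈ Finset.Icc 1 K, χ (k : ZMod N)) - κ * K) - κ * ((u - ⌊u⌋₊ : ℝ) : ℂ) := by
      push_cast; ring
    rw [e]
    have h3 : ‖κ * ((u - ⌊u⌋₊ : ℝ) : ℂ)‖ ≤ ‖κ‖ := by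
      rw [norm_mul, Complex.norm_real, Real.norm_eq_abs]
      have h1 := Nat.floor_le hu0
      have h2 := Nat.lt_floor_add_one u
      have : |u - ⌊u⌋₊| ≤ 1 := by rw [abs_le]; constructor <;> linarith
      nlinarith [norm_nonneg κ]
    have := hM ⌊u⌋₊
    have := hM K
    refine (norm_sub_le _ _).trans ?_
    have := norm_sub_le ((∑ k ∈ Finset.Icc 1 ⌊u⌋₊, χ (k : ZMod N)) - κ * (⌊u⌋₊ : ℕ))
      ((∑ k ∈ Finset.Icc 1 K, χ (k : ZMod N)) - κ * K)
    linarith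
  · rw [Set.indicator_of_notMem hu]; simp; positivity

lemma rem_diff {M : ℝ} (hK : 1 ≤ K)
    (hM : ∀ n : ℕ, ‖(∑ k ∈ Finset.Icc 1 n, χ (k : ZMod N)) - κ * n‖ ≤ M)
    {s : ℂ} (hs : 0 < s.re) : DifferentiableAt ℂ (fun s => mellin (rem χ κ K) (-s)) s := by
  have : DifferentiableAt ℂ (mellin (rem χ κ K)) (-s) := by
    refine mellin_differentiableAt_of_isBigO_rpow (a := 0) (b := -s.re - 1) ?_ ?_ (by simpa using hs)
      ?_ (by simp)
    · refine LocallyIntegrable.locallyIntegrableOn ?_ _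
      have hb : LocallyIntegrable (fun _ : ℝ => 2 * M + ‖κ‖) volume := locallyIntegrable_const _
      exact hb.mono (rem_meas χ κ K).aestronglyMeasurable
        (Eventually.of_forall fun u => (rem_bound χ κ K hM u).trans (le_abs_self _))
    · refine Asymptotics.IsBigO.of_bound (2 * M + ‖κ‖) (Eventually.of_forall fun u => ?_)
      simpa using rem_bound χ κ K hM u
    · refine Asymptotics.IsBigO.of_bound 1 ?_
      have : Set.Iio (1 : ℝ) ∈ 𝓝[>] (0 : ℝ) := mem_nhdsWithin_of_mem_nhds (Iio_mem_nhds one_pos)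
      filter_upwards [this] with u hu
      have h1 : u ∉ Set.Ioi (K : ℝ) := by
        have : (1 : ℝ) ≤ K := by exact_mod_cast hK
        simp only [Set.mem_Iio] at hu; simp only [Set.mem_Ioi, not_lt]; linarith
      unfold rem
      rw [Set.indicator_of_notMem h1]; simp
  exact this.comp s differentiableAt_id.neg

lemma mellin_rem (s : ℂ) : mellin (rem χ κ K) (-s) =
    ∫ t : ℝ in Set.Ioi (K : ℝ), (t : ℂ) ^ (-s - 1) * rem χ κ K t := by
  unfold mellin
  have h1 : ∀ t : ℝ, (t : ℂ) ^ (-s - 1) • rem χ κ K t =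
      Set.indicator (Set.Ioi (K : ℝ)) (fun t : ℝ => (t : ℂ) ^ (-s - 1) * rem χ κ K t) t := by
    intro t
    by_cases ht : t ∈ Set.Ioi (K : ℝ)
    · rw [Set.indicator_of_mem ht]; rfl
    · rw [Set.indicator_of_notMem ht]; unfold rem; rw [Set.indicator_of_notMem ht]; simp
  simp_rw [h1]
  rw [setIntegral_indicator measurableSet_Ioi]
  congr 2
  have : (0 : ℝ) ≤ K := Nat.cast_nonneg K
  ext t; simp only [Set.mem_inter_iff, Set.mem_Ioi]
  exact ⟨fun h => h.2, fun h => ⟨lt_of_le_of_lt this h, h⟩⟩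

lemma mellin_rem_bound {M : ℝ} (hK : 1 ≤ K)
    (hM : ∀ n : ℕ, ‖(∑ k ∈ Finset.Icc 1 n, χ (k : ZMod N)) - κ * n‖ ≤ M)
    {s : ℂ} (hs : 0 < s.re) :
    ‖mellin (rem χ κ K) (-s)‖ ≤ (2 * M + ‖κ‖) * ((K : ℝ) ^ (-s.re) / s.re) := by
  have hK0 : (0 : ℝ) < K := by exact_mod_cast hK
  rw [mellin_rem]
  have h2 := integral_Ioi_rpow_of_lt (a := -s.re - 1) (by linarith) hK0
  have h3 : ∫ t : ℝ in Set.Ioi (K : ℝ), (2 * M + ‖κ‖) * t ^ (-s.re - 1) =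
      (2 * M + ‖κ‖) * ((K : ℝ) ^ (-s.re) / s.re) := by
    rw [integral_const_mul, h2]; congr 1
    rw [sub_add_cancel, neg_div_neg_eq]
  rw [← h3]
  refine norm_integral_le_of_norm_le ?_ ?_
  · exact (integrableOn_Ioi_rpow_of_lt (by linarith) hK0).const_mul _
  · refine (ae_restrict_mem measurableSet_Ioi).mono fun t ht => ?_
    have ht0 : 0 < t := hK0.trans ht
    rw [norm_mul, Complex.norm_cpow_eq_rpow_re_of_pos ht0, mul_comm]
    have := rem_bound χ κ K hM t
    simp only [sub_re, neg_re, one_re]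
    gcongr

lemma trunc_gt {M : ℝ} (hK : 1 ≤ K)
    (hM : ∀ n : ℕ, ‖(∑ k ∈ Finset.Icc 1 n, χ (k : ZMod N)) - κ * n‖ ≤ M)
    {s : ℂ} (hs : 1 < s.re) :
    χ.LFunction s = (∑ k ∈ Finset.Icc 1 K, χ (k : ZMod N) * (k : ℂ) ^ (-s)) +
      κ * (K : ℂ) ^ (1 - s) / (s - 1) + s * mellin (rem χ κ K) (-s) := by
  have hK0 : (0 : ℝ) < K := by exact_mod_cast hK
  have hKc : (K : ℂ) ≠ 0 := by exact_mod_cast hK0.ne'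
  have hs1 : s - 1 ≠ 0 := by
    intro h; have := congrArg Complex.re h; simp at this; linarith
  have hs0 : s ≠ 0 := by
    intro h; rw [h] at hs; simp at hs; linarith
  rw [χ.LFunction_eq_LSeries hs]
  set f1 : ℕ → ℂ := fun n => if n ≤ K then χ (n : ZMod N) else 0 with hf1
  set f2 : ℕ → ℂ := fun n => if n ≤ K then 0 else χ (n : ZMod N) with hf2
  have hsplit : (fun n : ℕ => χ (n : ZMod N)) = f1 + f2 := by
    ext n; simp only [hf1, hf2, Pi.add_apply]; split_ifs <;> simp
  have hS := DirichletCharacter.LSeriesSummable_of_one_lt_re χ hs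
  have hS1 : LSeriesSummable f1 s := by
    refine summable_of_hasFiniteSupport ((Set.finite_Iic K).subset fun n hn => ?_)
    by_contra h
    apply hn
    have : ¬ n ≤ K := h
    simp [LSeries.term, hf1, this]
  have hS2 : LSeriesSummable f2 s := by
    have : f2 = (fun n : ℕ => χ (n : ZMod N)) - f1 := by rw [hsplit]; simp
    rw [this]; exact hS.sub hS1
  rw [hsplit, LSeries_add hS1 hS2]
  have e1 : LSeries f1 s = ∑ k ∈ Finset.Icc 1 K, χ (k : ZMod N) * (k : ℂ) ^ (-s) := by
    unfold LSeries
    rw [tsum_eq_sum (s := Finset.Icc 1 K)]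
    · refine Finset.sum_congr rfl fun k hk => ?_
      rw [Finset.mem_Icc] at hk
      rw [LSeries.term_of_ne_zero (by omega)]
      simp only [hf1, hk.2, if_true]
      rw [Complex.cpow_neg]; rfl
    · intro k hk
      rw [Finset.mem_Icc] at hk
      rcases Nat.eq_zero_or_pos k with h | h
      · simp [h]
      · have : ¬ k ≤ K := by omega
        simp [LSeries.term, hf1, this]
  have hsum2 : ∀ n : ℕ, ∑ k ∈ Finset.Icc 1 n, f2 k =
      if K ≤ n then (∑ k ∈ Finset.Icc 1 n, χ (k : ZMod N)) - ∑ k ∈ Finset.Icc 1 K, χ (k : ZMod N)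
      else 0 := by
    intro n
    induction n with
    | zero => simp; intro h; subst h; simp
    | succ n ih =>
      rw [Finset.sum_Icc_succ_top (by omega), ih]
      simp only [hf2]
      rcases lt_trichotomy K (n + 1) with h | h | h
      · rw [if_pos (by omega), if_neg (by omega), if_pos (by omega),
          Finset.sum_Icc_succ_top (by omega)]; push_cast; ring
      · subst h; simp
      · rw [if_neg (by omega), if_pos (by omega), if_neg (by omega)]; simp
  have e2 : LSeries f2 s = κ * (K : ℂ) ^ (1 - s) / (s - 1) + s * mellin (rem χ κ K) (-s) := by
    have hO : (fun n ↦ ∑ k ∈ Finset.Icc 1 n, f2 k) =O[atTop] fun n : ℕ ↦ (n : ℝ) ^ (1 : ℝ) := by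
      refine Asymptotics.IsBigO.of_bound 1 (Eventually.of_forall fun n => ?_)
      rw [Real.rpow_one, Real.norm_of_nonneg (Nat.cast_nonneg n), one_mul]
      refine (norm_sum_le _ _).trans ?_
      refine (Finset.sum_le_card_nsmul _ _ 1 fun k _ => ?_).trans (by simp)
      simp only [hf2]; split_ifs
      · simp
      · exact DirichletCharacter.norm_le_one χ _
    rw [LSeries_eq_mul_integral f2 (r := 1) zero_le_one hs hS2 hO]
    have i1 : ∀ t : ℝ, t ∈ Set.Ioi (1 : ℝ) →
        (∑ k ∈ Finset.Icc 1 ⌊t⌋₊, f2 k) * (t : ℂ) ^ (-(s + 1)) =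
        Set.indicator (Set.Ioi (K : ℝ)) (fun t : ℝ => (t : ℂ) ^ (-s - 1) * rem χ κ K t +
          κ * ((t : ℂ) ^ (-s) - K * (t : ℂ) ^ (-s - 1))) t := by
      intro t ht
      have ht0 : (t : ℂ) ≠ 0 := by
        have : (0 : ℝ) < t := lt_trans one_pos ht
        exact_mod_cast this.ne'
      rw [hsum2]
      by_cases h : t ∈ Set.Ioi (K : ℝ)
      · rw [if_pos (Nat.le_floor (le_of_lt h)), Set.indicator_of_mem h]
        unfold rem
        rw [Set.indicator_of_mem h]
        have : (t : ℂ) ^ (-s) = (t : ℂ) ^ (-s - 1) * t := by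
          rw [← cpow_succ' ht0]; simp
        rw [this, show -(s + 1) = -s - 1 by ring]; ring
      · rw [Set.indicator_of_notMem h]
        rw [Set.mem_Ioi, not_lt] at h
        rcases h.lt_or_eq with h | h
        · rw [if_neg, zero_mul]
          rw [not_le, Nat.floor_lt (by linarith [Set.mem_Ioi.1 ht])]; exact h
        · rw [h, Nat.floor_natCast]; simp
    rw [setIntegral_congr_fun measurableSet_Ioi i1, setIntegral_indicator measurableSet_Ioi]
    have hinter : Set.Ioi (1 : ℝ) ∩ Set.Ioi (K : ℝ) = Set.Ioi (K : ℝ) := by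
      rw [Set.Ioi_inter_Ioi]; congr 1
      exact max_eq_right (by exact_mod_cast hK)
    rw [hinter, integral_add, integral_const_mul, integral_sub, integral_const_mul,
      integral_Ioi_cpow_of_lt (by simpa using hs) hK0,
      integral_Ioi_cpow_of_lt (by simp; linarith) hK0, ← mellin_rem, mul_add, add_comm]
    · congr 1
      have : ((K : ℝ) : ℂ) ^ (-s + 1) = (K : ℂ) ^ (-s) * K := by
        rw [← cpow_succ' hKc]; simp
      rw [this, sub_add_cancel]
      have h2 : (K : ℂ) ^ (1 - s) = (K : ℂ) ^ (-s) * K := by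
        rw [← cpow_succ' hKc]; congr 1; ring
      rw [h2]
      have h3 : -s + 1 ≠ 0 := by
        intro h; apply hs1; linear_combination -h
      simp only [Complex.ofReal_natCast]
      field_simp
      ring
    · exact integrableOn_Ioi_cpow_of_lt (by simpa using hs) hK0
    · exact (integrableOn_Ioi_cpow_of_lt (by simp; linarith) hK0).const_mul _
    · refine Integrable.mul_bdd (c := 2 * M + ‖κ‖) (integrableOn_Ioi_cpow_of_lt (by simp; linarith) hK0)
        (rem_meas χ κ K).aestronglyMeasurable
        (Eventually.of_forall fun u => rem_bound χ κ K hM u)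
    · refine Integrable.const_mul (Integrable.sub ?_ ?_) _
      · exact integrableOn_Ioi_cpow_of_lt (by simpa using hs) hK0
      · exact (integrableOn_Ioi_cpow_of_lt (by simp; linarith) hK0).const_mul _
  rw [e1, e2]; ring

lemma trunc_all {M : ℝ} (hK : 1 ≤ K)
    (hM : ∀ n : ℕ, ‖(∑ k ∈ Finset.Icc 1 n, χ (k : ZMod N)) - κ * n‖ ≤ M)
    {s : ℂ} (hs : 0 < s.re) (hs1 : s.im ≠ 0) :
    χ.LFunction s = (∑ k ∈ Finset.Icc 1 K, χ (k : ZMod N) * (k : ℂ) ^ (-s)) +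
      κ * (K : ℂ) ^ (1 - s) / (s - 1) + s * mellin (rem χ κ K) (-s) := by
  have hK0 : (0 : ℝ) < K := by exact_mod_cast hK
  have hKc : (K : ℂ) ≠ 0 := by exact_mod_cast hK0.ne'
  set e := s.im
  set U : Set ℂ := {z | 0 < z.re} ∩ {z | 0 < e * z.im} with hU
  have hUo : IsOpen U := (isOpen_lt continuous_const Complex.continuous_re).inter
    (isOpen_lt continuous_const (continuous_const.mul Complex.continuous_im))
  have hUc : Convex ℝ U := by
    refine Convex.inter (convex_halfSpace_re_gt 0) ?_
    refine convex_halfSpace_gt (f := fun z : ℂ => e * z.im) ?_ 0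
    constructor
    · intro x y; simp; ring
    · intro c x; simp; ring
  have hne : ∀ z ∈ U, z ≠ 1 := by
    rintro z hz rfl
    have := hz.2; simp at this
  have h1 : AnalyticOnNhd ℂ χ.LFunction U := DifferentiableOn.analyticOnNhd
    (fun z hz => (χ.differentiableAt_LFunction z (Or.inl (hne z hz))).differentiableWithinAt) hUo
  have h2 : AnalyticOnNhd ℂ (fun s => (∑ k ∈ Finset.Icc 1 K, χ (k : ZMod N) * (k : ℂ) ^ (-s)) +
      κ * (K : ℂ) ^ (1 - s) / (s - 1) + s * mellin (rem χ κ K) (-s)) U := by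
    refine DifferentiableOn.analyticOnNhd (fun z hz => DifferentiableAt.differentiableWithinAt ?_) hUo
    refine DifferentiableAt.add (DifferentiableAt.add ?_ ?_) ?_
    · refine DifferentiableAt.fun_sum fun k hk => ?_
      have : (k : ℂ) ≠ 0 := by rw [Finset.mem_Icc] at hk; exact_mod_cast (by omega : k ≠ 0)
      exact (DifferentiableAt.const_cpow (by fun_prop) (Or.inl this)).const_mul _
    · refine DifferentiableAt.div ?_ (by fun_prop) (sub_ne_zero.2 (hne z hz))
      exact (DifferentiableAt.const_cpow (by fun_prop) (Or.inl hKc)).const_mul _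
    · exact differentiableAt_id.mul (rem_diff χ κ K hK hM hz.1)
  have hz0 : (2 + e * I : ℂ) ∈ U := by
    constructor
    · simp
    · simp; positivity
  refine h1.eqOn_of_preconnected_of_eventuallyEq h2 hUc.isPreconnected hz0 ?_ (x := s) ?_
  · have : {z : ℂ | 1 < z.re} ∈ 𝓝 (2 + e * I : ℂ) :=
      (isOpen_lt continuous_const Complex.continuous_re).mem_nhds (by simp)
    filter_upwards [this] with z hz
    exact trunc_gt χ κ K hK hM hz
  · refine ⟨hs, ?_⟩
    exact mul_self_pos.2 hs1

end trunc
end BE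

namespace BE
open Filter Complex MeasureTheory Topology

lemma sum_rpow_le (K : ℕ) : ∑ k ∈ Finset.Icc 1 K, (k : ℝ) ^ (-(29/30 : ℝ)) ≤ 30 * (K : ℝ) ^ (1/30 : ℝ) := by
  induction K with
  | zero => simp
  | succ n ih =>
    rw [Finset.sum_Icc_succ_top (by omega)]
    have hn : (0 : ℝ) < (n : ℝ) + 1 := by positivity
    have hb := rpow_one_add_le_one_add_mul_self (s := -1 / ((n : ℝ) + 1)) (by
      rw [le_div_iff₀ hn]; nlinarith [(Nat.cast_nonneg n : (0:ℝ) ≤ n)]) (p := 1/30) (by norm_num) (by norm_num)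
    have e1 : (1 + -1 / ((n : ℝ) + 1)) = n / (n + 1) := by field_simp; ring
    rw [e1, Real.div_rpow (by positivity) (by positivity), div_le_iff₀ (by positivity)] at hb
    have e2 : ((n : ℝ) + 1) ^ (1/30 : ℝ) = ((n : ℝ) + 1) ^ (-(29/30 : ℝ)) * (n + 1) := by
      rw [← Real.rpow_add_one hn.ne']; norm_num
    have e3 : (1 + 1/30 * (-1 / ((n : ℝ) + 1))) * ((n : ℝ) + 1) ^ (1/30 : ℝ) =
      ((n : ℝ) + 1) ^ (1/30 : ℝ) - 1/30 * ((n : ℝ) + 1) ^ (-(29/30 : ℝ)) := by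
      rw [e2]; field_simp; ring
    rw [e3] at hb
    push_cast
    linarith

lemma growth {N : ℕ} [NeZero N] (χ : DirichletCharacter ℂ N) :
    ∃ C : ℝ, 0 < C ∧ ∀ s : ℂ, 29/30 ≤ s.re → s.re ≤ 4 → 1/2 ≤ |s.im| →
      ‖χ.LFunction s‖ ≤ C * (|s.im| + 2) ^ (1/30 : ℝ) := by
  obtain ⟨κ, M, hM0, hM⟩ := char_partial χ
  refine ⟨60 + ‖κ‖ * 4 + 4 * (2 * M + ‖κ‖), by positivity, fun s h1 h2 h3 => ?_⟩
  set V := |s.im| + 2 with hV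
  have hV2 : 2 ≤ V := by rw [hV]; linarith [abs_nonneg s.im]
  set K := ⌈V⌉₊ with hK
  have hK1 : 1 ≤ K := Nat.one_le_ceil_iff.2 (by linarith)
  have hVK : V ≤ K := Nat.le_ceil V
  have hKV : (K : ℝ) ≤ 2 * V := by
    have := Nat.ceil_lt_add_one (show 0 ≤ V by linarith); linarith
  have hK0 : (0 : ℝ) < K := by linarith
  have hKone : (1 : ℝ) ≤ K := by linarith
  have hpow : (K : ℝ) ^ (1/30 : ℝ) ≤ 2 * V ^ (1/30 : ℝ) := by
    calc (K : ℝ) ^ (1/30 : ℝ) ≤ (2 * V) ^ (1/30 : ℝ) := by gcongr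
      _ = 2 ^ (1/30 : ℝ) * V ^ (1/30 : ℝ) := Real.mul_rpow (by norm_num) (by linarith)
      _ ≤ 2 ^ (1 : ℝ) * V ^ (1/30 : ℝ) := by gcongr <;> norm_num
      _ = _ := by norm_num
  have him : s.im ≠ 0 := by intro h; rw [h] at h3; norm_num at h3
  rw [trunc_all χ κ K hK1 hM (by linarith) him]
  have t1 : ‖∑ k ∈ Finset.Icc 1 K, χ (k : ZMod N) * (k : ℂ) ^ (-s)‖ ≤ 60 * V ^ (1/30 : ℝ) := by
    refine (norm_sum_le _ _).trans ((Finset.sum_le_sum (g := fun k : ℕ => (k : ℝ) ^ (-(29/30 : ℝ))) fun k hk => ?_).trans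
      ((sum_rpow_le K).trans (by linarith)))
    rw [Finset.mem_Icc] at hk
    have hk0 : (1 : ℝ) ≤ k := by exact_mod_cast hk.1
    rw [norm_mul, Complex.norm_natCast_cpow_of_pos (by omega)]
    have := DirichletCharacter.norm_le_one χ (k : ZMod N)
    have h5 : (k : ℝ) ^ (-s).re ≤ (k : ℝ) ^ (-(29/30 : ℝ)) :=
      Real.rpow_le_rpow_of_exponent_le hk0 (by simp; linarith)
    have : 0 ≤ (k : ℝ) ^ (-s).re := by positivity
    nlinarith [norm_nonneg (χ (k : ZMod N))]
  have hnim : ∀ w : ℂ, |w.im| = |s.im| → 1/2 ≤ ‖w‖ := fun w hw => by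
    have := Complex.abs_im_le_norm w; rw [hw] at this; linarith
  have t2 : ‖κ * (K : ℂ) ^ (1 - s) / (s - 1)‖ ≤ ‖κ‖ * 4 * V ^ (1/30 : ℝ) := by
    rw [norm_div, norm_mul, Complex.norm_natCast_cpow_of_pos (by omega)]
    have h5 : (K : ℝ) ^ (1 - s).re ≤ (K : ℝ) ^ (1/30 : ℝ) :=
      Real.rpow_le_rpow_of_exponent_le hKone (by simp; linarith)
    have h6 := hnim (s - 1) (by simp)
    rw [div_le_iff₀ (by linarith)]
    have h7 : (K : ℝ) ^ (1 - s).re ≤ 2 * V ^ (1/30 : ℝ) := h5.trans hpow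
    have h8 : 0 ≤ V ^ (1/30 : ℝ) := by positivity
    calc ‖κ‖ * (K : ℝ) ^ (1 - s).re ≤ ‖κ‖ * (2 * V ^ (1/30 : ℝ)) := by gcongr
      _ = ‖κ‖ * 4 * V ^ (1/30 : ℝ) * (1/2) := by ring
      _ ≤ _ := by gcongr
  have t3 : ‖s * mellin (rem χ κ K) (-s)‖ ≤ 4 * (2 * M + ‖κ‖) * V ^ (1/30 : ℝ) := by
    rw [norm_mul]
    have h5 := mellin_rem_bound χ κ K hK1 hM (s := s) (by linarith)
    have h6 : ‖s‖ ≤ s.re + |s.im| := by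
      have := Complex.norm_le_abs_re_add_abs_im s; rwa [abs_of_pos (show 0 < s.re by linarith)] at this
    have h7 : ‖s‖ / s.re ≤ 2 * V := by
      rw [div_le_iff₀ (by linarith)]; nlinarith [abs_nonneg s.im]
    have h8 : (K : ℝ) ^ (-s.re) ≤ V ^ (-(29/30) : ℝ) :=
      calc (K : ℝ) ^ (-s.re) ≤ (K : ℝ) ^ (-(29/30) : ℝ) :=
            Real.rpow_le_rpow_of_exponent_le hKone (by linarith)
        _ ≤ _ := Real.rpow_le_rpow_of_nonpos (by linarith) hVK (by norm_num)
    have h9 : V ^ (1/30 : ℝ) = V ^ (-(29/30) : ℝ) * V := by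
      rw [← Real.rpow_add_one (by linarith)]; norm_num
    calc ‖s‖ * ‖mellin (rem χ κ K) (-s)‖ ≤ ‖s‖ * ((2 * M + ‖κ‖) * ((K : ℝ) ^ (-s.re) / s.re)) := by gcongr
      _ = (2 * M + ‖κ‖) * (K : ℝ) ^ (-s.re) * (‖s‖ / s.re) := by ring
      _ ≤ (2 * M + ‖κ‖) * V ^ (-(29/30) : ℝ) * (2 * V) := by
        have : 0 ≤ ‖s‖ / s.re := div_nonneg (norm_nonneg _) (by linarith)
        gcongr
      _ = 2 * (2 * M + ‖κ‖) * V ^ (1/30 : ℝ) := by rw [h9]; ring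
      _ ≤ _ := by gcongr; norm_num
  refine (norm_add_le _ _).trans ?_
  have := norm_add_le (∑ k ∈ Finset.Icc 1 K, χ (k : ZMod N) * (k : ℂ) ^ (-s)) (κ * (K : ℂ) ^ (1 - s) / (s - 1))
  nlinarith

lemma near_one {N : ℕ} [NeZero N] (χ : DirichletCharacter ℂ N) :
    ∃ C : ℝ, 0 < C ∧ ∀ x : ℝ, 0 < x → x ≤ 1 → ‖χ.LFunction (1 + x)‖ ≤ C / x := by
  obtain ⟨κ, M, hM0, hM⟩ := char_partial χ
  refine ⟨1 + ‖κ‖ + (2 * M + ‖κ‖), by positivity, fun x h1 h2 => ?_⟩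
  have hre : ((1 : ℂ) + x).re = 1 + x := by simp
  rw [trunc_gt χ κ 1 le_rfl hM (by rw [hre]; linarith)]
  have h5 := mellin_rem_bound χ κ 1 le_rfl hM (s := 1 + x) (by rw [hre]; linarith)
  rw [hre] at h5
  have hn : ‖(1 : ℂ) + x‖ = 1 + x := by
    have : (1 : ℂ) + x = ((1 + x : ℝ) : ℂ) := by push_cast; rfl
    rw [this, Complex.norm_real, Real.norm_of_nonneg (by linarith)]
  have t3 : ‖((1 : ℂ) + x) * mellin (rem χ κ 1) (-(1 + x))‖ ≤ (2 * M + ‖κ‖) := by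
    rw [norm_mul, hn]
    simp only [Nat.cast_one, Real.one_rpow] at h5
    calc _ ≤ (1 + x) * ((2 * M + ‖κ‖) * (1 / (1 + x))) := by gcongr
      _ = _ := by field_simp
  have t2 : ‖κ * ((1 : ℕ) : ℂ) ^ (1 - (1 + x : ℂ)) / (1 + x - 1)‖ = ‖κ‖ / x := by
    simp [abs_of_pos h1]
  refine (norm_add_le _ _).trans ?_
  have t1 := norm_add_le (∑ k ∈ Finset.Icc (1:ℕ) 1, χ (k : ZMod N) * (k : ℂ) ^ (-(1 + x : ℂ))) (κ * ((1 : ℕ) : ℂ) ^ (1 - (1 + x : ℂ)) / (1 + x - 1))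
  have t0 : ‖∑ k ∈ Finset.Icc (1:ℕ) 1, χ (k : ZMod N) * (k : ℂ) ^ (-(1 + x : ℂ))‖ ≤ 1 := by
    simp
  rw [t2] at t1
  have : 1 ≤ 1 / x := by rw [le_div_iff₀ h1]; linarith
  have h6 : (1 + ‖κ‖ + (2 * M + ‖κ‖)) / x = 1 / x + ‖κ‖ / x + (2 * M + ‖κ‖) * (1 / x) := by ring
  rw [h6]
  nlinarith [norm_nonneg κ]

lemma ball_re_im {z w : ℂ} {r : ℝ} (h : w ∈ Metric.closedBall z r) :
    |w.re - z.re| ≤ r ∧ |w.im - z.im| ≤ r := by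
  rw [Metric.mem_closedBall, dist_eq_norm] at h
  exact ⟨by simpa using (Complex.abs_re_le_norm (w - z)).trans h,
    by simpa using (Complex.abs_im_le_norm (w - z)).trans h⟩

lemma two_V {V W : ℝ} (hV : 2 ≤ V) (hW0 : 0 ≤ W) (hW : W ≤ 2 * V) :
    W ^ (1/30 : ℝ) ≤ 2 * V ^ (1/30 : ℝ) := by
  calc W ^ (1/30 : ℝ) ≤ (2 * V) ^ (1/30 : ℝ) := by gcongr
    _ = 2 ^ (1/30 : ℝ) * V ^ (1/30 : ℝ) := Real.mul_rpow (by norm_num) (by linarith)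
    _ ≤ 2 ^ (1 : ℝ) * V ^ (1/30 : ℝ) := by gcongr <;> norm_num
    _ = _ := by norm_num

lemma diffCont {N : ℕ} [NeZero N] (χ : DirichletCharacter ℂ N) {z : ℂ} {r : ℝ}
    (h : ∀ w ∈ Metric.closedBall z r, w.im ≠ 0) : DiffContOnCl ℂ χ.LFunction (Metric.ball z r) := by
  refine DifferentiableOn.diffContOnCl (fun w hw => ?_)
  refine (χ.differentiableAt_LFunction w (Or.inl ?_)).differentiableWithinAt
  rintro rfl
  exact h 1 (Metric.closure_ball_subset_closedBall hw) (by simp)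

lemma growth_deriv {N : ℕ} [NeZero N] (χ : DirichletCharacter ℂ N) (n : ℕ) :
    ∃ C : ℝ, 0 < C ∧ ∀ s : ℂ, 59/60 ≤ s.re → s.re ≤ 3 → 3/4 ≤ |s.im| →
      ‖iteratedDeriv n χ.LFunction s‖ ≤ C * (|s.im| + 2) ^ (1/30 : ℝ) := by
  obtain ⟨C, hC, h⟩ := growth χ
  refine ⟨n.factorial * (C * 2) / (1/60) ^ n, by positivity, fun s h1 h2 h3 => ?_⟩
  have key : ∀ w ∈ Metric.closedBall s (1/60), 29/30 ≤ w.re ∧ w.re ≤ 4 ∧ 1/2 ≤ |w.im| ∧ |w.im| ≤ |s.im| + 1 := by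
    intro w hw
    obtain ⟨a, b⟩ := ball_re_im hw
    rw [abs_le] at a
    have c1 := abs_sub_abs_le_abs_sub s.im w.im
    have c2 := abs_sub_abs_le_abs_sub w.im s.im
    rw [abs_sub_comm] at c1
    refine ⟨by linarith, by linarith, by linarith, by linarith⟩
  have := Complex.norm_iteratedDeriv_le_of_forall_mem_sphere_norm_le (c := s) (R := 1/60)
    (C := C * (2 * (|s.im| + 2) ^ (1/30 : ℝ))) (f := χ.LFunction) n (by norm_num)
    (diffCont χ fun w hw h0 => ?_) ?_
  · refine this.trans (le_of_eq ?_); ring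
  · have := (key w hw).2.2.1; rw [h0] at this; norm_num at this
  · intro w hw
    obtain ⟨a, b, c, d⟩ := key w (Metric.sphere_subset_closedBall hw)
    refine (h w a b c).trans ?_
    gcongr
    exact two_V (by linarith [abs_nonneg s.im]) (by positivity) (by linarith [abs_nonneg s.im])

lemma lower {N : ℕ} [NeZero N] (χ : DirichletCharacter ℂ N) :
    ∃ c : ℝ, 0 < c ∧ ∀ x t : ℝ, 0 < x → x ≤ 1 → 1 ≤ |t| →
      c * x ^ 3 / (|t| + 2) ^ (1/30 : ℝ) ≤ ‖χ.LFunction (1 + x + I * t)‖ ^ 4 := by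
  obtain ⟨C0, hC0, h0⟩ := near_one (1 : DirichletCharacter ℂ N)
  obtain ⟨C2, hC2, h2⟩ := growth (χ ^ 2)
  refine ⟨1 / (C0 ^ 3 * (C2 * 2)), by positivity, fun x t hx hx1 ht => ?_⟩
  have h := DirichletCharacter.norm_LFunction_product_ge_one χ hx t
  rw [norm_mul, norm_mul, norm_pow, norm_pow] at h
  have a0 : ‖DirichletCharacter.LFunctionTrivChar N (1 + x)‖ ≤ C0 / x := h0 x hx hx1
  have a2 := h2 (1 + x + 2 * I * t) (by simp; linarith) (by simp; linarith) (by simp [abs_mul]; linarith)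
  have e : ((1 : ℂ) + x + 2 * I * t).im = 2 * t := by simp
  rw [e] at a2
  have hV := two_V (V := |t| + 2) (W := |2 * t| + 2) (by linarith) (by positivity)
    (by rw [abs_mul, abs_two]; linarith)
  set V := (|t| + 2) ^ (1/30 : ℝ)
  have hVp : 0 < V := by positivity
  set A := ‖χ.LFunction (1 + x + I * t)‖
  have a3 : 1 ≤ (C0 / x) ^ 3 * A ^ 4 * (C2 * (2 * V)) := by
    refine h.le.trans ?_
    gcongr
    exact a2.trans (by gcongr)
  rw [div_le_iff₀ hVp, div_mul_eq_mul_div, div_le_iff₀ (by positivity), one_mul]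
  rw [div_pow, div_mul_eq_mul_div, div_mul_eq_mul_div, le_div_iff₀ (by positivity)] at a3
  linarith

lemma logderiv_bound {N : ℕ} [NeZero N] (χ : DirichletCharacter ℂ N) :
    ∃ C : ℝ, 0 < C ∧ ∀ s : ℂ, 1 < s.re → s.re ≤ 2 → 1 ≤ |s.im| →
      ‖iteratedDeriv 2 (fun z => deriv χ.LFunction z / χ.LFunction z) s‖ ≤ C * (|s.im| + 2) ^ (1/2 : ℝ) := by
  obtain ⟨C, hC, hd⟩ := growth_deriv χ 1
  obtain ⟨c, hc, hl⟩ := lower χ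
  set κ : ℝ := min (1/120) (c / (256 * (2 * C) ^ 4)) with hκ
  have hκ0 : 0 < κ := by positivity
  refine ⟨1 / κ ^ 3, by positivity, fun s h1 h2 h3 => ?_⟩
  set V := |s.im| + 2 with hV
  have hV2 : 3 ≤ V := by rw [hV]; linarith
  set E := V ^ (1/30 : ℝ) with hE
  have hE0 : 1 ≤ E := Real.one_le_rpow (by linarith) (by norm_num)
  have hE15 : E ^ 15 = V ^ (1/2 : ℝ) := by
    rw [hE, ← Real.rpow_natCast, ← Real.rpow_mul (by linarith)]; norm_num
  set η := κ / E ^ 5 with hη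
  have hη0 : 0 < η := by positivity
  have hηκ : η ≤ κ := div_le_self hκ0.le (one_le_pow₀ hE0)
  have hη1 : η ≤ 1/120 := hηκ.trans (min_le_left _ _)
  set x := max (s.re - 1) η with hx
  have hx0 : η ≤ x := le_max_right _ _
  have hx1 : x ≤ 1 := max_le (by linarith) (by linarith)
  have hxs : s.re - 1 ≤ x := le_max_left _ _
  have hxs' : x ≤ s.re - 1 + η := max_le (by linarith) (by linarith)
  set cc : ℂ := 1 + x + I * s.im with hcc
  have hccre : cc.re = 1 + x := by simp [hcc]
  have hccim : cc.im = s.im := by simp [hcc]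
  have key : ∀ w ∈ Metric.closedBall cc (2 * η), 59/60 ≤ w.re ∧ w.re ≤ 3 ∧ 3/4 ≤ |w.im| ∧ |w.im| ≤ |s.im| + 1 := by
    intro w hw
    obtain ⟨a, b⟩ := ball_re_im hw
    rw [hccre, abs_le] at a
    rw [hccim] at b
    have c1 := abs_sub_abs_le_abs_sub s.im w.im
    have c2 := abs_sub_abs_le_abs_sub w.im s.im
    rw [abs_sub_comm] at c1
    refine ⟨by linarith, by linarith, by linarith, by linarith⟩
  have hdb : ∀ w ∈ Metric.closedBall cc (2 * η), ‖deriv χ.LFunction w‖ ≤ 2 * C * E := by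
    intro w hw
    obtain ⟨a, b, c, d⟩ := key w hw
    have := hd w a b c
    rw [iteratedDeriv_one] at this
    refine this.trans ?_
    have := two_V (V := V) (W := |w.im| + 2) (by linarith) (by positivity) (by linarith)
    nlinarith
  have hdiff : ∀ w ∈ Metric.closedBall cc (2 * η), DifferentiableAt ℂ χ.LFunction w := by
    intro w hw
    refine χ.differentiableAt_LFunction w (Or.inl ?_)
    rintro rfl
    have := (key 1 hw).2.2.1
    norm_num at this
  have hlc : 4 * (2 * C) * η * E ≤ ‖χ.LFunction cc‖ := by
    refine le_of_pow_le_pow_left₀ (n := 4) (by norm_num) (norm_nonneg _) ?_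
    have := hl x s.im (hη0.trans_le hx0) hx1 h3
    refine le_trans ?_ this
    rw [le_div_iff₀ (by positivity)]
    have h5 : κ * (256 * (2 * C) ^ 4) ≤ c := by
      have := min_le_right (1/120) (c / (256 * (2 * C) ^ 4))
      rwa [← hκ, le_div_iff₀ (by positivity)] at this
    have h6 : η * E ^ 5 = κ := by rw [hη]; field_simp
    calc (4 * (2 * C) * η * E) ^ 4 * E = η ^ 3 * (256 * (2 * C) ^ 4) * (η * E ^ 5) := by ring
      _ = (κ * (256 * (2 * C) ^ 4)) * η ^ 3 := by rw [h6]; ring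
      _ ≤ c * x ^ 3 := by gcongr
  have hlow : ∀ w ∈ Metric.closedBall cc (2 * η), 2 * (2 * C) * η * E ≤ ‖χ.LFunction w‖ := by
    intro w hw
    have hmv := (convex_closedBall cc (2 * η)).norm_image_sub_le_of_norm_deriv_le (𝕜 := ℂ) hdiff hdb
      hw (Metric.mem_closedBall_self (by positivity))
    have h7 : ‖cc - w‖ ≤ 2 * η := by rw [← dist_eq_norm, dist_comm]; exact hw
    have h8 : ‖χ.LFunction cc‖ - ‖χ.LFunction w‖ ≤ 2 * C * E * (2 * η) :=
      (norm_sub_norm_le _ _).trans (hmv.trans (by gcongr))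
    linarith
  have hsub : Metric.closedBall s η ⊆ Metric.closedBall cc (2 * η) := by
    refine Metric.closedBall_subset_closedBall' ?_
    have : s - cc = ((s.re - 1 - x : ℝ) : ℂ) := by
      apply Complex.ext <;> simp [hcc]; ring
    rw [dist_eq_norm, this, Complex.norm_real, Real.norm_eq_abs]
    have : |s.re - 1 - x| ≤ η := by rw [abs_le]; constructor <;> linarith
    linarith
  have fin := Complex.norm_iteratedDeriv_le_of_forall_mem_sphere_norm_le (c := s) (R := η)
    (C := 1 / (2 * η)) (f := fun z => deriv χ.LFunction z / χ.LFunction z) 2 hη0 ?_ ?_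
  · refine fin.trans (le_of_eq ?_)
    rw [← hE15, hη]; field_simp; norm_num [Nat.factorial]
  · refine DifferentiableOn.diffContOnCl (fun w hw => ?_)
    have hw' := hsub (Metric.closure_ball_subset_closedBall hw)
    have hne : w ≠ 1 := by
      rintro rfl
      have := (key 1 hw').2.2.1
      norm_num at this
    refine DifferentiableAt.differentiableWithinAt ?_
    refine DifferentiableAt.div ?_ (hdiff w hw') ?_
    · have : DifferentiableOn ℂ χ.LFunction {1}ᶜ := fun z hz =>
        (χ.differentiableAt_LFunction z (Or.inl hz)).differentiableWithinAt
      exact (this.deriv isOpen_compl_singleton).differentiableAt (isOpen_compl_singleton.mem_nhds hne)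
    · have h9 := hlow w hw'
      intro h0
      rw [h0, norm_zero] at h9
      have : 0 < 2 * (2 * C) * η * E := by positivity
      linarith
  · intro w hw
    have hw' := hsub (Metric.sphere_subset_closedBall hw)
    have h9 := hlow w hw'
    have h10 := hdb w hw'
    have : 0 < 2 * (2 * C) * η * E := by positivity
    rw [norm_div, div_le_div_iff₀ (by linarith) (by positivity)]
    nlinarith

end BE

namespace BE
open Filter Complex MeasureTheory Topology
open scoped LSeries.notation ArithmeticFunction.vonMangoldt

noncomputable def chi : DirichletCharacter ℂ 8 := ZMod.χ₈'.ringHomComp (Int.castRingHom ℂ)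

lemma chi_apply (n : ℕ) : chi (n : ZMod 8) = ((ZMod.χ₈' (n : ZMod 8) : ℤ) : ℂ) := rfl

lemma chi_ne_one : chi ≠ 1 := by
  intro h
  have h5 := chi_apply 5
  rw [h, ZMod.χ₈'_nat_eq_if_mod_eight, MulChar.one_apply (by decide)] at h5
  norm_num at h5

noncomputable def zch : DirichletCharacter ℂ 1 := 1

lemma zch_L : zch.LFunction = riemannZeta := DirichletCharacter.LFunction_modOne_eq

noncomputable def LD {N : ℕ} [NeZero N] (χ : DirichletCharacter ℂ N) (z : ℂ) : ℂ :=
  deriv χ.LFunction z / χ.LFunction z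

noncomputable def HH (s : ℂ) : ℂ := - LD zch s - LD chi s - zch.LFunction s

noncomputable def aF : ℕ → ℂ := (↗Λ + ((fun n : ℕ => chi n) * ↗Λ)) - 1

lemma sum1 {s : ℂ} (hs : 1 < s.re) : LSeriesSummable (1 : ℕ → ℂ) s := LSeriesSummable_one_iff.2 hs

lemma LSeries_aF {s : ℂ} (hs : 1 < s.re) : LSeries aF s = HH s ∧ LSeriesSummable aF s := by
  have a1 := ArithmeticFunction.LSeriesSummable_vonMangoldt hs
  have a2 := DirichletCharacter.LSeriesSummable_twist_vonMangoldt chi hs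
  refine ⟨?_, (a1.add a2).sub (sum1 hs)⟩
  rw [aF, LSeries_sub (a1.add a2) (sum1 hs), LSeries_add a1 a2,
    ArithmeticFunction.LSeries_vonMangoldt_eq_deriv_riemannZeta_div hs,
    DirichletCharacter.LSeries_twist_vonMangoldt_eq chi hs, LSeries_one_eq_riemannZeta hs,
    ← DirichletCharacter.deriv_LFunction_eq_deriv_LSeries chi hs,
    ← DirichletCharacter.LFunction_eq_LSeries chi hs, HH, LD, LD, zch_L]
  ring

lemma LSeries_b {s : ℂ} (hs : 1 < s.re) :
    LSeries (LSeries.logMul^[2] aF) s = iteratedDeriv 2 HH s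
      ∧ LSeriesSummable (LSeries.logMul^[2] aF) s := by
  have hab : LSeries.abscissaOfAbsConv aF < s.re := by
    have : LSeries.abscissaOfAbsConv aF ≤ ((1:ℝ) : EReal) :=
      LSeries.abscissaOfAbsConv_le_of_forall_lt_LSeriesSummable
        (fun y hy => (LSeries_aF (s := y) (by simpa using hy)).2)
    exact this.trans_lt (by exact_mod_cast hs)
  constructor
  · have h := LSeries_iteratedDeriv 2 hab
    norm_num at h
    rw [Function.iterate_succ, Function.iterate_one, Function.comp_apply] at *
    rw [← h]
    refine Filter.EventuallyEq.iteratedDeriv_eq 2 ?_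
    filter_upwards [(isOpen_lt continuous_const Complex.continuous_re).mem_nhds hs] with z hz
    exact (LSeries_aF hz).1
  · have : LSeries.abscissaOfAbsConv (LSeries.logMul^[2] aF) < s.re := by
      rw [LSeries.absicssaOfAbsConv_logPowMul]; exact hab
    exact LSeriesSummable_of_abscissaOfAbsConv_lt_re this

lemma LD_diffOn {N : ℕ} [NeZero N] (χ : DirichletCharacter ℂ N) :
    DifferentiableOn ℂ (LD χ) ({s | χ.LFunction s ≠ 0} ∩ {1}ᶜ) := by
  intro s hs
  have : DifferentiableOn ℂ χ.LFunction {1}ᶜ := fun z hz =>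
        (χ.differentiableAt_LFunction z (Or.inl hz)).differentiableWithinAt
  have h2 := (this.deriv isOpen_compl_singleton).differentiableAt (isOpen_compl_singleton.mem_nhds hs.2)
  exact (h2.div (χ.differentiableAt_LFunction s (Or.inl hs.2)) hs.1).differentiableWithinAt

lemma anal {N : ℕ} [NeZero N] (χ : DirichletCharacter ℂ N) {s : ℂ} (hs : 1 < s.re) :
    ContDiffAt ℂ 2 χ.LFunction s ∧ ContDiffAt ℂ 2 (LD χ) s := by
  have ho : {z : ℂ | 1 < z.re} ∈ 𝓝 s := (isOpen_lt continuous_const Complex.continuous_re).mem_nhds hs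
  have hne : ∀ z : ℂ, 1 < z.re → z ≠ 1 := by
    rintro z hz rfl; norm_num at hz
  have h1 : DifferentiableOn ℂ χ.LFunction {z : ℂ | 1 < z.re} := fun z hz =>
        (χ.differentiableAt_LFunction z (Or.inl (hne z hz))).differentiableWithinAt
  have h2 : DifferentiableOn ℂ (LD χ) {z : ℂ | 1 < z.re} := (LD_diffOn χ).mono fun z hz =>
    ⟨χ.LFunction_ne_zero_of_one_le_re (Or.inr (hne z hz)) (le_of_lt hz), hne z hz⟩
  exact ⟨(h1.analyticAt ho).contDiffAt, (h2.analyticAt ho).contDiffAt⟩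

lemma H_large : ∃ C : ℝ, 0 < C ∧ ∀ s : ℂ, 1 < s.re → s.re ≤ 2 → 1 ≤ |s.im| →
    ‖iteratedDeriv 2 HH s‖ ≤ C * (|s.im| + 2) ^ (1/2 : ℝ) := by
  obtain ⟨C1, p1, h1⟩ := logderiv_bound zch
  obtain ⟨C2, p2, h2⟩ := logderiv_bound chi
  obtain ⟨C3, p3, h3⟩ := growth_deriv zch 2
  refine ⟨C1 + C2 + C3, by positivity, fun s a b c => ?_⟩
  have e : iteratedDeriv 2 HH s = - iteratedDeriv 2 (LD zch) s - iteratedDeriv 2 (LD chi) s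
      - iteratedDeriv 2 zch.LFunction s := by
    have q1 := (anal zch a); have q2 := anal chi a
    have : HH = (- LD zch - LD chi) - zch.LFunction := rfl
    have n1 : ContDiffAt ℂ 2 (-LD zch) s := q1.2.neg
    have n2 : ContDiffAt ℂ 2 (-LD zch - LD chi) s := n1.sub q2.2
    rw [this, iteratedDeriv_sub n2 q1.1, iteratedDeriv_sub n1 q2.2, iteratedDeriv_neg]
  rw [e]
  refine (norm_sub_le _ _).trans ?_
  have t1 := norm_sub_le (-iteratedDeriv 2 (LD zch) s) (iteratedDeriv 2 (LD chi) s)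
  rw [norm_neg] at t1
  have u1 := h1 s a b c
  have u2 := h2 s a b c
  have u3 := h3 s (by linarith) (by linarith) (by linarith)
  have u4 : (|s.im| + 2) ^ (1/30 : ℝ) ≤ (|s.im| + 2) ^ (1/2 : ℝ) :=
    Real.rpow_le_rpow_of_exponent_le (by linarith) (by norm_num)
  have u5 := mul_le_mul_of_nonneg_left u4 p3.le
  change ‖iteratedDeriv 2 (LD zch) s‖ ≤ _ at u1
  change ‖iteratedDeriv 2 (LD chi) s‖ ≤ _ at u2
  linarith

noncomputable def WW : ℂ → ℂ := DirichletCharacter.LFunctionTrivChar₁ 1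

lemma WW_one : WW 1 = 1 := by simp [WW]
lemma WW_ne {s : ℂ} (hs : s ≠ 1) : WW s = (s - 1) * riemannZeta s := by
  simp only [WW, DirichletCharacter.LFunctionTrivChar₁, Function.update_of_ne hs]
  rw [DirichletCharacter.LFunctionTrivChar, DirichletCharacter.LFunction_modOne_eq]
lemma WW_diff : Differentiable ℂ WW := DirichletCharacter.differentiable_LFunctionTrivChar₁ 1
lemma WW_ne_zero {s : ℂ} (hs : 1 ≤ s.re) : WW s ≠ 0 := by
  rcases eq_or_ne s 1 with rfl | h
  · rw [WW_one]; exact one_ne_zero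
  · rw [WW_ne h]
    exact mul_ne_zero (sub_ne_zero.2 h) (riemannZeta_ne_zero_of_one_le_re hs)

noncomputable def HT (s : ℂ) : ℂ := - (deriv WW s / WW s) - dslope WW 1 s - LD chi s

lemma chi_diff : Differentiable ℂ chi.LFunction := fun s =>
  chi.differentiableAt_LFunction s (Or.inr chi_ne_one)

lemma HT_diff : DifferentiableOn ℂ HT ({s | WW s ≠ 0} ∩ {s | chi.LFunction s ≠ 0}) := by
  intro s hs
  refine DifferentiableAt.differentiableWithinAt ?_
  refine DifferentiableAt.sub (DifferentiableAt.sub (DifferentiableAt.neg ?_) ?_) ?_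
  · exact DifferentiableAt.div (WW_diff.deriv s) (WW_diff s) hs.1
  · exact ((differentiableOn_dslope univ_mem).2 WW_diff.differentiableOn).differentiableAt univ_mem
  · exact DifferentiableAt.div (chi_diff.deriv s) (chi_diff s) hs.2

lemma HT_eq {s : ℂ} (hs : 1 < s.re) : HT s = HH s := by
  have hne : s ≠ 1 := by rintro rfl; norm_num at hs
  have h0 := sub_ne_zero.2 hne
  have hz := riemannZeta_ne_zero_of_one_le_re hs.le
  have hd : deriv WW s = (s - 1) * deriv riemannZeta s + riemannZeta s := by
    have := DirichletCharacter.deriv_LFunctionTrivChar₁_apply_of_ne_one 1 hne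
    rw [DirichletCharacter.LFunctionTrivChar, DirichletCharacter.LFunction_modOne_eq] at this
    exact this
  rw [HT, HH, dslope_of_ne _ hne, slope_def_field, WW_one, hd, WW_ne hne, show LD zch s = deriv riemannZeta s / riemannZeta s by rw [LD, zch_L], zch_L]
  field_simp
  ring

lemma H_small : ∃ C : ℝ, 0 < C ∧ ∀ s : ℂ, 1 < s.re → s.re ≤ 2 → |s.im| ≤ 1 →
    ‖iteratedDeriv 2 HH s‖ ≤ C := by
  set U := ({s : ℂ | WW s ≠ 0} ∩ {s | chi.LFunction s ≠ 0}) with hU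
  have hUo : IsOpen U := (isOpen_ne_fun WW_diff.continuous continuous_const).inter
    (isOpen_ne_fun chi_diff.continuous continuous_const)
  have hK : IsCompact (Set.Icc (1:ℝ) 2 ×ℂ Set.Icc (-1:ℝ) 1) := isCompact_Icc.reProdIm isCompact_Icc
  have hsub : (Set.Icc (1:ℝ) 2 ×ℂ Set.Icc (-1:ℝ) 1) ⊆ U := by
    intro s hs
    rw [Complex.mem_reProdIm] at hs
    exact ⟨WW_ne_zero hs.1.1, chi.LFunction_ne_zero_of_one_le_re (Or.inl chi_ne_one) hs.1.1⟩
  have hc : ContinuousOn (iteratedDeriv 2 HT) U := by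
    rw [iteratedDeriv_succ, iteratedDeriv_one]
    exact ((HT_diff.deriv hUo).deriv hUo).continuousOn
  obtain ⟨C, hC⟩ := hK.exists_bound_of_continuousOn (hc.mono hsub)
  refine ⟨|C| + 1, by positivity, fun s a b c => ?_⟩
  have : iteratedDeriv 2 HH s = iteratedDeriv 2 HT s := by
    refine Filter.EventuallyEq.iteratedDeriv_eq 2 ?_
    filter_upwards [(isOpen_lt continuous_const Complex.continuous_re).mem_nhds a] with z hz
    exact (HT_eq hz).symm
  rw [this]
  have h := hC s (by rw [Complex.mem_reProdIm]; exact ⟨⟨a.le, b⟩, abs_le.1 c⟩)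
  linarith [le_abs_self C]

lemma H_bound : ∃ C : ℝ, 0 < C ∧ ∀ s : ℂ, 1 < s.re → s.re ≤ 2 →
    ‖LSeries (LSeries.logMul^[2] aF) s‖ ≤ C * (|s.im| + 2) ^ (1/2 : ℝ) := by
  obtain ⟨C1, p1, h1⟩ := H_large
  obtain ⟨C2, p2, h2⟩ := H_small
  refine ⟨C1 + C2, by positivity, fun s a b => ?_⟩
  rw [(LSeries_b a).1]
  have h1V : 1 ≤ (|s.im| + 2) ^ (1/2 : ℝ) := Real.one_le_rpow (by linarith [abs_nonneg s.im]) (by norm_num)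
  rcases le_total 1 |s.im| with h | h
  · have := h1 s a b h; nlinarith
  · have := h2 s a b h; nlinarith
end BE

namespace BE
open Filter Complex MeasureTheory Topology

noncomputable def ker (t : ℝ) : ℂ := Set.indicator (Set.Ioc 0 1) (fun _ => 1 : ℝ → ℂ) t
  - Set.indicator (Set.Ioc 0 1) (fun t => (t : ℂ) ^ (1 : ℂ) : ℝ → ℂ) t

lemma ker_eq {t : ℝ} (ht : 0 < t) : ker t = ((max (1 - t) 0 : ℝ) : ℂ) := by
  unfold ker
  by_cases h : t ≤ 1
  · have hm : t ∈ Set.Ioc (0:ℝ) 1 := ⟨ht, h⟩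
    rw [Set.indicator_of_mem hm, Set.indicator_of_mem hm, max_eq_left (by linarith)]
    simp
  · rw [Set.indicator_of_notMem (fun h' => h h'.2), Set.indicator_of_notMem (fun h' => h h'.2),
      max_eq_right (by linarith)]
    simp

lemma ker_mellin {s : ℂ} (hs : 0 < s.re) : HasMellin ker s (1 / (s * (s + 1))) := by
  have h1 := hasMellin_one_Ioc hs
  have h2 := hasMellin_cpow_Ioc (1 : ℂ) (s := s) (by simp; linarith)
  have h := hasMellin_sub h1.1 h2.1
  rw [h1.2, h2.2] at h
  have hs0 : s ≠ 0 := by rintro rfl; simp at hs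
  have hs1 : s + 1 ≠ 0 := by
    intro h0
    have := congrArg Complex.re h0
    simp at this; linarith
  have e : 1 / s - 1 / (s + 1) = 1 / (s * (s + 1)) := by field_simp; ring
  rw [e] at h
  exact h

lemma ker_cont {t : ℝ} (ht : 0 < t) : ContinuousAt ker t := by
  have h : ContinuousAt (fun t : ℝ => ((max (1 - t) 0 : ℝ) : ℂ)) t := by fun_prop
  refine h.congr ?_
  filter_upwards [lt_mem_nhds ht] with u hu using (ker_eq hu).symm

noncomputable def KK (σ t : ℝ) : ℂ := 1 / ((σ + t * I) * ((σ + t * I) + 1))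

lemma norm_lb {σ t : ℝ} (hσ : 1 ≤ σ) : (1 + t ^ 2) ^ (1/2 : ℝ) ≤ ‖(σ + t * I : ℂ)‖ := by
  rw [← Real.sqrt_eq_rpow, Complex.norm_def]
  apply Real.sqrt_le_sqrt
  rw [Complex.normSq_apply]
  simp; nlinarith

lemma KK_norm {σ t : ℝ} (hσ : 1 ≤ σ) : ‖KK σ t‖ ≤ (1 + t ^ 2)⁻¹ := by
  unfold KK
  rw [norm_div, norm_one, norm_mul, one_div]
  have h1 := norm_lb (t := t) hσ
  have h2 := norm_lb (σ := σ + 1) (t := t) (by linarith)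
  have e : ((σ + 1 : ℝ) : ℂ) + t * I = σ + t * I + 1 := by push_cast; ring
  rw [e] at h2
  have hp : 0 < 1 + t ^ 2 := by positivity
  apply inv_anti₀ hp
  calc 1 + t ^ 2 = (1 + t ^ 2) ^ (1/2 : ℝ) * (1 + t ^ 2) ^ (1/2 : ℝ) := by
        rw [← Real.rpow_add hp]; norm_num
    _ ≤ _ := by gcongr

lemma KK_cont {σ : ℝ} (hσ : 1 ≤ σ) : Continuous (KK σ) := by
  unfold KK
  refine Continuous.div continuous_const (by fun_prop) (fun t => ?_)
  have h1 := norm_lb (t := t) hσ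
  have h2 := norm_lb (σ := σ + 1) (t := t) (by linarith)
  have e : ((σ + 1 : ℝ) : ℂ) + t * I = σ + t * I + 1 := by push_cast; ring
  rw [e] at h2
  have hp : 0 < (1 + t ^ 2) ^ (1/2 : ℝ) := by positivity
  exact mul_ne_zero (norm_pos_iff.1 (hp.trans_le h1)) (norm_pos_iff.1 (hp.trans_le h2))

lemma KK_int {σ : ℝ} (hσ : 1 ≤ σ) : Integrable (KK σ) :=
  integrable_inv_one_add_sq.mono' (KK_cont hσ).aestronglyMeasurable
    (ae_of_all _ fun t => KK_norm hσ)

lemma perron {σ : ℝ} (hσ : 1 ≤ σ) {u : ℝ} (hu : 0 < u) :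
    ∫ t : ℝ, (u : ℂ) ^ (-(σ + t * I) : ℂ) * KK σ t = 2 * Real.pi * ((max (1 - u) 0 : ℝ) : ℂ) := by
  have hre : ∀ t : ℝ, 0 < (σ + t * I : ℂ).re := fun t => by simp; linarith
  have hm : ∀ t : ℝ, mellin ker (σ + t * I) = KK σ t := fun t => (ker_mellin (hre t)).2
  have h := mellinInv_mellin_eq σ ker hu (ker_mellin (by simp; linarith)).1
    (by
      unfold Complex.VerticalIntegrable
      simp_rw [hm]
      exact KK_int hσ) (ker_cont hu)
  rw [mellinInv, ker_eq hu] at h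
  simp_rw [hm, smul_eq_mul] at h
  rw [← h]
  have hpi : (Real.pi : ℂ) ≠ 0 := by exact_mod_cast Real.pi_ne_zero
  simp only [Complex.real_smul]
  push_cast
  rw [← mul_assoc, mul_one_div_cancel (mul_ne_zero two_ne_zero hpi), one_mul]

noncomputable def bF : ℕ → ℂ := LSeries.logMul^[2] aF

lemma rpow_norm {a : ℝ} (ha : 0 < a) (σ t : ℝ) : ‖(a : ℂ) ^ (σ + t * I : ℂ)‖ = a ^ σ := by
  rw [Complex.norm_cpow_eq_rpow_re_of_pos ha]; simp

lemma weight : ∃ C : ℝ, 0 < C ∧ ∀ σ : ℝ, 1 < σ → σ ≤ 2 → ∀ x : ℝ, 0 < x →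
    ‖∑' n : ℕ, 2 * Real.pi * (if n = 0 then 0 else bF n * ((max (1 - n / x) 0 : ℝ) : ℂ))‖
      ≤ C * x ^ σ := by
  obtain ⟨C, hC, hb⟩ := H_bound
  have hI : Integrable (fun t : ℝ => (1 + ‖t‖ ^ 2) ^ (-(3/2 : ℝ) / 2)) :=
    integrable_rpow_neg_one_add_norm_sq (by simp; norm_num)
  refine ⟨2 * C * (∫ t : ℝ, (1 + ‖t‖ ^ 2) ^ (-(3/2 : ℝ) / 2)) + 1, by positivity, fun σ h1 h2 x hx => ?_⟩
  set F : ℕ → ℝ → ℂ := fun n t => (x : ℂ) ^ (σ + t * I : ℂ) * LSeries.term bF (σ + t * I) n * KK σ t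
  have hF0 : ∀ t, F 0 t = 0 := fun t => by simp [F]
  have hFn : ∀ n : ℕ, n ≠ 0 → ∀ t, F n t = bF n * ((((n / x : ℝ) : ℂ)) ^ (-(σ + t * I) : ℂ) * KK σ t) := by
    intro n hn t
    simp only [F]
    rw [LSeries.term_of_ne_zero hn, show ((n / x : ℝ) : ℂ) = (((n : ℝ) * x⁻¹ : ℝ) : ℂ) by rw [div_eq_mul_inv],
      Complex.ofReal_mul, Complex.mul_cpow_ofReal_nonneg (by positivity) (by positivity),
      Complex.ofReal_inv, Complex.inv_cpow _ _ (by rw [Complex.arg_ofReal_of_nonneg hx.le]; exact Real.pi_ne_zero.symm),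
      Complex.cpow_neg, Complex.cpow_neg, inv_inv, Complex.ofReal_natCast]
    ring
  have hnorm : ∀ n t, ‖F n t‖ = x ^ σ * ‖LSeries.term bF σ n‖ * ‖KK σ t‖ := by
    intro n t
    simp only [F]
    rw [norm_mul, norm_mul, rpow_norm hx, LSeries.norm_term_eq, LSeries.norm_term_eq]
    simp
  have hcont : ∀ n, Continuous (F n) := by
    intro n
    rcases eq_or_ne n 0 with rfl | hn
    · have : F 0 = fun _ => 0 := funext hF0
      rw [this]; exact continuous_const
    · have : F n = fun t : ℝ => bF n * ((((n / x : ℝ) : ℂ)) ^ (-(σ + t * I) : ℂ) * KK σ t) := funext (hFn n hn)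
      rw [this]
      have hne : ((n / x : ℝ) : ℂ) ≠ 0 := by
        have : (0:ℝ) < n := by exact_mod_cast Nat.pos_of_ne_zero hn
        exact_mod_cast (by positivity : (n / x : ℝ) ≠ 0)
      have c1 := KK_cont h1.le
      have c2 : Continuous fun t : ℝ => (((n / x : ℝ) : ℂ)) ^ (-(σ + t * I) : ℂ) :=
        Continuous.const_cpow (by fun_prop) (Or.inl hne)
      fun_prop
  have hint : ∀ n, Integrable (F n) := by
    intro n
    refine ((KK_int h1.le).norm.const_mul (x ^ σ * ‖LSeries.term bF σ n‖)).mono'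
      (hcont n).aestronglyMeasurable (ae_of_all _ fun t => (hnorm n t).le)
  have hsum : Summable fun n => ∫ t, ‖F n t‖ := by
    simp_rw [hnorm, integral_const_mul]
    have := (LSeries_b (s := σ) (by simpa using h1)).2
    exact (this.norm.mul_left _).mul_right _
  have key := hasSum_integral_of_summable_integral_norm hint hsum
  have e1 : ∀ n, ∫ t, F n t = 2 * Real.pi * (if n = 0 then 0 else bF n * ((max (1 - n / x) 0 : ℝ) : ℂ)) := by
    intro n
    rcases eq_or_ne n 0 with rfl | hn
    · simp [hF0]
    · rw [if_neg hn]
      simp_rw [hFn n hn]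
      have : (0:ℝ) < n := by exact_mod_cast Nat.pos_of_ne_zero hn
      rw [integral_const_mul, perron h1.le (by positivity)]
      ring
  have e2 : ∀ t : ℝ, ∑' n, F n t = (x : ℂ) ^ (σ + t * I : ℂ) * LSeries bF (σ + t * I) * KK σ t := by
    intro t
    simp only [F]
    rw [tsum_mul_right, tsum_mul_left]; rfl
  simp_rw [e1, e2] at key
  rw [key.tsum_eq]
  have hb2 : ∀ t : ℝ, ‖(x : ℂ) ^ (σ + t * I : ℂ) * LSeries bF (σ + t * I) * KK σ t‖ ≤
      (2 * C * x ^ σ) * (1 + ‖t‖ ^ 2) ^ (-(3/2 : ℝ) / 2) := by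
    intro t
    rw [norm_mul, norm_mul, rpow_norm hx]
    have q1 := hb (σ + t * I) (by simpa using h1) (by simpa using h2)
    have q2 := KK_norm (t := t) h1.le
    simp only [add_im, ofReal_im, mul_im, ofReal_re, I_im, mul_one, I_re, mul_zero, add_zero, zero_add] at q1
    have hp : 0 < 1 + t ^ 2 := by positivity
    have q3 : (|t| + 2) ^ (1/2 : ℝ) ≤ 2 * (1 + t ^ 2) ^ (1/4 : ℝ) := by
      have a1 : (|t| + 2) ^ 2 ≤ 16 * (1 + t ^ 2) := by
        have := sq_abs t; nlinarith [abs_nonneg t, sq_nonneg (|t| - 2)]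
      calc (|t| + 2) ^ (1/2 : ℝ) = ((|t| + 2) ^ 2) ^ (1/4 : ℝ) := by
            rw [← Real.rpow_natCast, ← Real.rpow_mul (by positivity)]; norm_num
        _ ≤ (16 * (1 + t ^ 2)) ^ (1/4 : ℝ) := by gcongr
        _ = 16 ^ (1/4 : ℝ) * (1 + t ^ 2) ^ (1/4 : ℝ) := Real.mul_rpow (by norm_num) hp.le
        _ = _ := by
            rw [show (16:ℝ) = 2 ^ (4:ℝ) by norm_num, ← Real.rpow_mul (by norm_num)]; norm_num
    have q4 : (1 + t ^ 2) ^ (1/4 : ℝ) * (1 + t ^ 2)⁻¹ = (1 + ‖t‖ ^ 2) ^ (-(3/2 : ℝ) / 2) := by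
      rw [Real.norm_eq_abs, sq_abs, ← Real.rpow_neg_one, ← Real.rpow_add hp]; norm_num
    rw [← q4]
    calc x ^ σ * ‖LSeries bF (σ + t * I)‖ * ‖KK σ t‖
        ≤ x ^ σ * (C * (2 * (1 + t ^ 2) ^ (1/4 : ℝ))) * (1 + t ^ 2)⁻¹ := by
          have : ‖LSeries bF (σ + t * I)‖ ≤ C * (2 * (1 + t ^ 2) ^ (1/4 : ℝ)) :=
            q1.trans (by gcongr)
          gcongr
      _ = _ := by ring
  refine (norm_integral_le_of_norm_le (hI.const_mul (2 * C * x ^ σ)) (ae_of_all _ hb2)).trans ?_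
  rw [integral_const_mul]
  have : 0 < x ^ σ := by positivity
  nlinarith

lemma E1_bound : ∃ C : ℝ, 0 < C ∧ ∀ x : ℝ, 3 ≤ x →
    ‖∑ n ∈ Finset.Icc 1 ⌊x⌋₊, bF n * ((1 - n / x : ℝ) : ℂ)‖ ≤ C * x := by
  obtain ⟨C, hC, h⟩ := weight
  refine ⟨C * Real.exp 1, by positivity, fun x hx => ?_⟩
  have hx0 : 0 < x := by linarith
  have hl : 1 ≤ Real.log x := by
    rw [Real.le_log_iff_exp_le hx0]; linarith [Real.exp_one_lt_d9]
  have hl' : 1 / Real.log x ≤ 1 := by rw [div_le_one (by linarith)]; exact hl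
  have := h (1 + 1 / Real.log x) (by have : 0 < 1 / Real.log x := by positivity
                                     linarith) (by linarith) x hx0
  have e : x ^ (1 + 1 / Real.log x) = Real.exp 1 * x := by
    rw [Real.rpow_add hx0, Real.rpow_one, Real.rpow_def_of_pos hx0, mul_one_div_cancel (by linarith)]
    ring
  rw [e, tsum_mul_left, norm_mul, tsum_eq_sum (s := Finset.Icc 1 ⌊x⌋₊)] at this
  · have e3 : ∑ n ∈ Finset.Icc 1 ⌊x⌋₊, (if n = 0 then 0 else bF n * ((max (1 - n / x) 0 : ℝ) : ℂ)) =
        ∑ n ∈ Finset.Icc 1 ⌊x⌋₊, bF n * ((1 - n / x : ℝ) : ℂ) := by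
      refine Finset.sum_congr rfl fun n hn => ?_
      rw [Finset.mem_Icc] at hn
      have : (n : ℝ) ≤ x := (Nat.le_floor_iff hx0.le).1 hn.2
      rw [if_neg (by omega), max_eq_left]
      rw [sub_nonneg, div_le_one hx0]; exact this
    rw [e3] at this
    have hpi : 1 ≤ ‖(2 * Real.pi : ℂ)‖ := by
      rw [norm_mul, Complex.norm_real, Real.norm_of_nonneg Real.pi_pos.le]
      simp; linarith [Real.pi_gt_three]
    nlinarith [norm_nonneg (∑ n ∈ Finset.Icc 1 ⌊x⌋₊, bF n * ((1 - n / x : ℝ) : ℂ))]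
  · intro n hn
    split_ifs with h0
    · rfl
    · have : ⌊x⌋₊ < n := by
        rw [Finset.mem_Icc] at hn; omega
      rw [max_eq_right, Complex.ofReal_zero, mul_zero]
      have := (Nat.floor_lt hx0.le).1 this
      rw [sub_nonpos, one_le_div hx0]; exact this.le
end BE

namespace BE
open Filter Topology
open scoped ArithmeticFunction.vonMangoldt

noncomputable def gR (n : ℕ) : ℝ := Λ n * (1 + ((ZMod.χ₈' (n : ZMod 8) : ℤ) : ℝ))

lemma chi_vals (n : ℕ) : (-1 : ℝ) ≤ ((ZMod.χ₈' (n : ZMod 8) : ℤ) : ℝ) ∧ ((ZMod.χ₈' (n : ZMod 8) : ℤ) : ℝ) ≤ 1 := by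
  rw [ZMod.χ₈'_nat_eq_if_mod_eight]
  split_ifs <;> norm_num

lemma gR_nonneg (n : ℕ) : 0 ≤ gR n :=
  mul_nonneg ArithmeticFunction.vonMangoldt_nonneg (by linarith [(chi_vals n).1])

lemma gR_le (n : ℕ) : gR n ≤ 2 * Λ n := by
  have := ArithmeticFunction.vonMangoldt_nonneg (n := n)
  unfold gR; nlinarith [(chi_vals n).2]

lemma bF_eq (n : ℕ) : bF n = (((gR n - 1) * (Real.log n) ^ 2 : ℝ) : ℂ) := by
  simp only [bF, Function.iterate_succ, Function.iterate_zero, Function.comp_apply, LSeries.logMul, id, aF, gR,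
    Pi.sub_apply, Pi.add_apply, Pi.mul_apply, Pi.one_apply, chi_apply]
  push_cast
  rw [← Complex.natCast_log]
  ring

noncomputable def Gw (w : ℕ → ℝ) (z : ℝ) : ℝ := ∑ n ∈ Finset.Icc 1 ⌊z⌋₊, w n * (z - n)
noncomputable def Pw (w : ℕ → ℝ) (z : ℝ) : ℝ := ∑ n ∈ Finset.Icc 1 ⌊z⌋₊, w n

lemma Gw_conv {w : ℕ → ℝ} (hw : ∀ n, 0 ≤ w n) {z z' : ℝ} (h0 : 0 ≤ z) (h : z ≤ z') :
    (z' - z) * Pw w z ≤ Gw w z' - Gw w z ∧ Gw w z' - Gw w z ≤ (z' - z) * Pw w z' := by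
  have hs : Finset.Icc 1 ⌊z⌋₊ ⊆ Finset.Icc 1 ⌊z'⌋₊ := Finset.Icc_subset_Icc_right (Nat.floor_mono h)
  constructor
  · have h1 : ∑ n ∈ Finset.Icc 1 ⌊z⌋₊, w n * (z' - n) ≤ Gw w z' := by
      refine Finset.sum_le_sum_of_subset_of_nonneg hs fun n hn _ => mul_nonneg (hw n) ?_
      have := (Nat.le_floor_iff (h0.trans h)).1 (Finset.mem_Icc.1 hn).2
      linarith
    have h2 : ∑ n ∈ Finset.Icc 1 ⌊z⌋₊, w n * (z' - n) = Gw w z + (z' - z) * Pw w z := by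
      rw [Gw, Pw, Finset.mul_sum, ← Finset.sum_add_distrib]
      exact Finset.sum_congr rfl fun n _ => by ring
    linarith
  · have h1 : ∑ n ∈ Finset.Icc 1 ⌊z'⌋₊, w n * (z - n) ≤ Gw w z := by
      rw [Gw, ← Finset.sum_sdiff hs]
      have : ∑ n ∈ Finset.Icc 1 ⌊z'⌋₊ \ Finset.Icc 1 ⌊z⌋₊, w n * (z - n) ≤ 0 := by
        refine Finset.sum_nonpos fun n hn => mul_nonpos_of_nonneg_of_nonpos (hw n) ?_
        rw [Finset.mem_sdiff, Finset.mem_Icc, Finset.mem_Icc] at hn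
        have : ⌊z⌋₊ < n := by omega
        linarith [(Nat.floor_lt h0).1 this]
      linarith
    have h2 : Gw w z' = ∑ n ∈ Finset.Icc 1 ⌊z'⌋₊, w n * (z - n) + (z' - z) * Pw w z' := by
      rw [Gw, Pw, Finset.mul_sum, ← Finset.sum_add_distrib]
      exact Finset.sum_congr rfl fun n _ => by ring
    linarith

noncomputable def w2 (n : ℕ) : ℝ := (Real.log n) ^ 2
noncomputable def w1 (n : ℕ) : ℝ := gR n * (Real.log n) ^ 2

lemma G_diff : ∃ C : ℝ, 0 < C ∧ ∀ z : ℝ, 3 ≤ z → |Gw w1 z - Gw w2 z| ≤ C * z ^ 2 := by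
  obtain ⟨C, hC, h⟩ := E1_bound
  refine ⟨C, hC, fun z hz => ?_⟩
  have h1 := h z hz
  have e : ∑ n ∈ Finset.Icc 1 ⌊z⌋₊, bF n * ((1 - n / z : ℝ) : ℂ) = (((Gw w1 z - Gw w2 z) / z : ℝ) : ℂ) := by
    rw [Gw, Gw, ← Finset.sum_sub_distrib, Finset.sum_div, Complex.ofReal_sum]
    refine Finset.sum_congr rfl fun n _ => ?_
    rw [bF_eq, ← Complex.ofReal_mul, w1, w2]
    congr 1
    field_simp
  rw [e, Complex.norm_real, Real.norm_eq_abs, abs_div, abs_of_pos (by linarith : 0 < z),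
    div_le_iff₀ (by linarith)] at h1
  calc _ ≤ _ := h1
    _ = _ := by ring

lemma w2_nonneg (n : ℕ) : 0 ≤ w2 n := by unfold w2; positivity
lemma w1_nonneg (n : ℕ) : 0 ≤ w1 n := mul_nonneg (gR_nonneg n) (by positivity)

lemma Q_diff {z z' : ℝ} (h0 : 0 ≤ z) (h : z ≤ z') :
    Pw w2 z' - Pw w2 z ≤ (z' - z + 1) * (Real.log z') ^ 2 := by
  have hs : Finset.Icc 1 ⌊z⌋₊ ⊆ Finset.Icc 1 ⌊z'⌋₊ := Finset.Icc_subset_Icc_right (Nat.floor_mono h)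
  rw [Pw, Pw, ← Finset.sum_sdiff hs, add_sub_cancel_right]
  have h1 : ∀ n ∈ Finset.Icc 1 ⌊z'⌋₊ \ Finset.Icc 1 ⌊z⌋₊, w2 n ≤ (Real.log z') ^ 2 := by
    intro n hn
    have hn := (Finset.mem_sdiff.1 hn).1
    rw [Finset.mem_Icc] at hn
    have h2 := (Nat.le_floor_iff (h0.trans h)).1 hn.2
    have h3 : (1:ℝ) ≤ n := by exact_mod_cast hn.1
    have := Real.log_nonneg h3
    unfold w2
    gcongr
  refine (Finset.sum_le_card_nsmul _ _ _ h1).trans ?_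
  rw [Finset.card_sdiff_of_subset hs, nsmul_eq_mul]
  gcongr
  rw [Nat.cast_sub (Finset.card_le_card hs)]
  simp only [Nat.card_Icc, add_tsub_cancel_right]
  have := Nat.floor_le (h0.trans h)
  have := Nat.lt_floor_add_one z
  linarith

lemma D_bound_large : ∃ C : ℝ, 0 < C ∧ ∀ N : ℕ, 8 ≤ N →
    |Pw w1 N - Pw w2 N| ≤ C * (N * Real.log N) := by
  obtain ⟨C, hC, h⟩ := G_diff
  refine ⟨8 + 5 * C, by positivity, fun N hN => ?_⟩
  have hN8 : (8:ℝ) ≤ N := by exact_mod_cast hN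
  have hl : 2 ≤ Real.log N := by
    have : Real.log 8 ≤ Real.log N := Real.log_le_log (by norm_num) hN8
    have h8 : Real.log 8 = 3 * Real.log 2 := by
      rw [show (8:ℝ) = 2 ^ 3 by norm_num, Real.log_pow]; norm_num
    linarith [Real.log_two_gt_d9]
  have hlN : Real.log N ≤ N := (Real.log_le_sub_one_of_pos (by linarith)).trans (by linarith)
  generalize (N : ℝ) = x at hN8 hl hlN ⊢
  set L := Real.log x
  set k := x / L with hk
  have hkL : k * L = x := by rw [hk]; field_simp
  have hk1 : 1 ≤ k := by rw [hk, one_le_div (by linarith)]; exact hlN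
  have hk2 : k ≤ x / 2 := by rw [hk]; gcongr
  have hlog : Real.log (x + k) ≤ 2 * L := by
    have : Real.log (x + k) ≤ Real.log (x ^ 2) := Real.log_le_log (by linarith) (by nlinarith)
    rw [Real.log_pow] at this; exact_mod_cast this
  have hlog0 : 0 ≤ Real.log (x + k) := Real.log_nonneg (by linarith)
  have a1 := (Gw_conv w1_nonneg (z := x) (z' := x + k) (by linarith) (by linarith)).1
  have a2 := (Gw_conv w2_nonneg (z := x) (z' := x + k) (by linarith) (by linarith)).2
  have a3 := (Gw_conv w1_nonneg (z := x - k) (z' := x) (by linarith) (by linarith)).2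
  have a4 := (Gw_conv w2_nonneg (z := x - k) (z' := x) (by linarith) (by linarith)).1
  have b1 := abs_le.1 (h (x + k) (by linarith))
  have b2 := abs_le.1 (h x (by linarith))
  have b3 := abs_le.1 (h (x - k) (by linarith))
  have c1 := Q_diff (z := x) (z' := x + k) (by linarith) (by linarith)
  have c2 := Q_diff (z := x - k) (z' := x) (by linarith) (by linarith)
  simp only [add_sub_cancel_left, sub_sub_cancel] at a1 a2 a3 a4 c1 c2
  have d1 : (k + 1) * Real.log (x + k) ^ 2 ≤ 8 * (x * L) := by
    have : Real.log (x + k) ^ 2 ≤ (2 * L) ^ 2 := by gcongr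
    calc (k + 1) * Real.log (x + k) ^ 2 ≤ (2 * k) * (2 * L) ^ 2 := by gcongr; linarith
      _ = 8 * (k * L * L) := by ring
      _ = _ := by rw [hkL]
  have d2 : (k + 1) * L ^ 2 ≤ 2 * (x * L) := by
    calc (k + 1) * L ^ 2 ≤ (2 * k) * L ^ 2 := by gcongr; linarith
      _ = 2 * (k * L * L) := by ring
      _ = _ := by rw [hkL]
  have e1 : C * (x + k) ^ 2 + C * x ^ 2 ≤ 5 * C * x ^ 2 := by
    have : (x + k) ^ 2 ≤ (2 * x) ^ 2 := by gcongr; linarith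
    nlinarith
  have e2 : C * (x - k) ^ 2 + C * x ^ 2 ≤ 5 * C * x ^ 2 := by
    have : (x - k) ^ 2 ≤ x ^ 2 := by
      have : x - k ≤ x := by linarith
      have : 0 ≤ x - k := by linarith
      gcongr
    nlinarith [sq_nonneg x]
  have e3 : x ^ 2 = k * (x * L) := by rw [← hkL]; ring
  have hk0 : 0 < k := by linarith
  rw [abs_le]
  constructor
  · have : k * (-(8 + 5 * C) * (x * L)) ≤ k * (Pw w1 x - Pw w2 x) := by
      have f1 : k * (Pw w2 x - Pw w2 (x - k)) ≤ k * (2 * (x * L)) := by gcongr; linarith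
      have f2 : 0 ≤ k * (x * L) := by positivity
      rw [e3] at e2 b2
      nlinarith
    have := le_of_mul_le_mul_left this hk0
    linarith
  · have : k * (Pw w1 x - Pw w2 x) ≤ k * ((8 + 5 * C) * (x * L)) := by
      have f1 : k * (Pw w2 (x + k) - Pw w2 x) ≤ k * (8 * (x * L)) := by gcongr; linarith
      rw [e3] at e1 b2
      nlinarith
    exact le_of_mul_le_mul_left this hk0

lemma D_bound : ∃ C : ℝ, 0 < C ∧ ∀ N : ℕ, 2 ≤ N →
    |Pw w1 N - Pw w2 N| ≤ C * (N * Real.log N) := by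
  obtain ⟨C, hC, h⟩ := D_bound_large
  have hp : ∀ N : ℕ, 2 ≤ N → 0 < (N : ℝ) * Real.log N := fun N hN => by
    have : (2:ℝ) ≤ N := by exact_mod_cast hN
    exact mul_pos (by linarith) (Real.log_pos (by linarith))
  have hs : ∃ A : ℝ, 0 ≤ A ∧ ∀ N : ℕ, N ∈ Finset.Icc (2:ℕ) 8 → |Pw w1 N - Pw w2 N| / (N * Real.log N) ≤ A := by
    refine ⟨∑ i ∈ Finset.Icc (2:ℕ) 8, |Pw w1 i - Pw w2 i| / (i * Real.log i), ?_, fun N hN => ?_⟩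
    · exact Finset.sum_nonneg (fun i hi => div_nonneg (abs_nonneg _) (hp i (Finset.mem_Icc.1 hi).1).le)
    · exact Finset.single_le_sum (f := fun N : ℕ => |Pw w1 N - Pw w2 N| / (N * Real.log N))
        (fun i hi => div_nonneg (abs_nonneg _) (hp i (Finset.mem_Icc.1 hi).1).le) hN
  obtain ⟨A, hA, hs⟩ := hs
  refine ⟨C + A, by positivity, fun N hN => ?_⟩
  have hpN := hp N hN
  rcases le_total 8 N with h8 | h8
  · have := h N h8
    have : 0 ≤ A * (N * Real.log N) := by positivity
    linarith
  · have h1 := hs N (Finset.mem_Icc.2 ⟨hN, h8⟩)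
    rw [div_le_iff₀ hpN] at h1
    have : 0 ≤ C * (N * Real.log N) := by positivity
    linarith
end BE

namespace BE
open Filter Topology
open scoped ArithmeticFunction.vonMangoldt

lemma log_pos2 {n : ℕ} (hn : 2 ≤ n) : 0 < Real.log n :=
  Real.log_pos (by exact_mod_cast (by omega : 1 < n))

noncomputable def SL (N : ℕ) : ℝ := ∑ n ∈ Finset.Icc 2 N, 1 / (Real.log n) ^ 2

lemma log_le_sqrt {x : ℝ} (hx : 0 < x) : Real.log x ≤ 2 * Real.sqrt x := by
  have h := Real.log_le_sub_one_of_pos (Real.sqrt_pos.2 hx)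
  rw [Real.log_sqrt hx.le] at h
  linarith

lemma log_le_r4 {x : ℝ} (hx : 0 < x) : Real.log x ≤ 4 * Real.sqrt (Real.sqrt x) := by
  have h := log_le_sqrt (Real.sqrt_pos.2 hx)
  rw [Real.log_sqrt hx.le] at h
  linarith

lemma log_sq_le {x : ℝ} (hx : 1 ≤ x) : Real.log x ^ 2 ≤ 16 * Real.sqrt x := by
  have h := log_le_r4 (by linarith : 0 < x)
  have h0 := Real.log_nonneg hx
  have : Real.log x ^ 2 ≤ (4 * Real.sqrt (Real.sqrt x)) ^ 2 := by gcongr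
  rw [mul_pow, Real.sq_sqrt (Real.sqrt_nonneg x)] at this
  linarith

lemma log_cb_le {x : ℝ} (hx : 1 ≤ x) : Real.log x ^ 3 ≤ 216 * Real.sqrt x := by
  have h := Real.log_le_sub_one_of_pos (Real.rpow_pos_of_pos (by linarith : 0 < x) (1/6))
  rw [Real.log_rpow (by linarith)] at h
  have h0 := Real.log_nonneg hx
  have h1 : Real.log x ≤ 6 * x ^ (1/6 : ℝ) := by linarith
  have : Real.log x ^ 3 ≤ (6 * x ^ (1/6 : ℝ)) ^ 3 := by gcongr
  rw [mul_pow, ← Real.rpow_natCast (x ^ (1/6 : ℝ)), ← Real.rpow_mul (by linarith)] at this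
  rw [Real.sqrt_eq_rpow]
  norm_num at this ⊢
  linarith

lemma SL_le : ∃ C : ℝ, 0 < C ∧ ∀ N : ℕ, 2 ≤ N → SL N ≤ C * (N / (Real.log N) ^ 2) := by
  refine ⟨68, by norm_num, fun N hN => ?_⟩
  have hl := log_pos2 hN
  have hN2 : (2:ℝ) ≤ N := by exact_mod_cast hN
  have hb : ∀ n ∈ Finset.Icc 2 N, 1 / (Real.log n) ^ 2 ≤
      (if (n:ℝ) ≤ Real.sqrt N then 4 else 0) + 4 / (Real.log N) ^ 2 := by
    intro n hn
    have hn2 := (Finset.mem_Icc.1 hn).1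
    have hn2r : (2:ℝ) ≤ n := by exact_mod_cast hn2
    split_ifs with h
    · have h1 : Real.log 2 ≤ Real.log n := Real.log_le_log (by norm_num) hn2r
      have h2 : 1 / (Real.log n) ^ 2 ≤ 4 := by
        rw [div_le_iff₀ (by have := log_pos2 hn2; positivity)]
        nlinarith [Real.log_two_gt_d9]
      have : 0 ≤ 4 / (Real.log N) ^ 2 := by positivity
      linarith
    · have h1 : Real.log N / 2 ≤ Real.log n := by
        rw [← Real.log_sqrt (by linarith)]
        exact Real.log_le_log (Real.sqrt_pos.2 (by linarith)) (by linarith)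
      have : 1 / (Real.log n) ^ 2 ≤ 1 / (Real.log N / 2) ^ 2 := by gcongr
      calc _ ≤ _ := this
        _ = _ := by field_simp; ring
  refine (Finset.sum_le_sum hb).trans ?_
  rw [Finset.sum_add_distrib, ← Finset.sum_filter, Finset.sum_const, Finset.sum_const]
  simp only [Nat.card_Icc, nsmul_eq_mul]
  have c1 : ((Finset.filter (fun n : ℕ => (n:ℝ) ≤ Real.sqrt N) (Finset.Icc 2 N)).card : ℝ) ≤ Real.sqrt N := by
    have : Finset.filter (fun n : ℕ => (n:ℝ) ≤ Real.sqrt N) (Finset.Icc 2 N) ⊆ Finset.Icc 1 ⌊Real.sqrt N⌋₊ := by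
      intro n hn
      rw [Finset.mem_filter, Finset.mem_Icc] at hn
      rw [Finset.mem_Icc]
      exact ⟨by omega, Nat.le_floor hn.2⟩
    have h := Finset.card_le_card this
    rw [Nat.card_Icc, Nat.add_sub_cancel] at h
    exact (Nat.cast_le.2 h).trans (Nat.floor_le (Real.sqrt_nonneg _))
  have c2 : ((N + 1 - 2 : ℕ) : ℝ) ≤ N := by exact_mod_cast (by omega : N + 1 - 2 ≤ N)
  have c3 : Real.sqrt N * (Real.log N) ^ 2 ≤ 16 * N := by
    have := log_sq_le (x := N) (by linarith)
    nlinarith [Real.sqrt_nonneg N, Real.mul_self_sqrt (show (0:ℝ) ≤ N by linarith)]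
  have c4 : Real.sqrt N ≤ 16 * (N / (Real.log N) ^ 2) := by
    rw [← mul_div_assoc, le_div_iff₀ (by positivity)]; exact c3
  have c5 : ((N + 1 - 2 : ℕ) : ℝ) * (4 / (Real.log N) ^ 2) ≤ 4 * (N / (Real.log N) ^ 2) := by
    calc _ ≤ (N : ℝ) * (4 / (Real.log N) ^ 2) := by gcongr
      _ = _ := by ring
  linarith

noncomputable def dd (n : ℕ) : ℝ := gR n - 1
noncomputable def DD (N : ℕ) : ℝ := Pw w1 N - Pw w2 N

lemma DD_succ (N : ℕ) : DD (N + 1) = DD N + dd (N + 1) * (Real.log (N + 1 : ℕ)) ^ 2 := by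
  unfold DD Pw dd w1 w2
  simp only [Nat.floor_natCast]
  rw [Finset.sum_Icc_succ_top (by omega), Finset.sum_Icc_succ_top (by omega)]
  ring

lemma DD_one : DD 1 = 0 := by
  unfold DD Pw w1 w2
  simp

lemma abel (N : ℕ) (hN : 2 ≤ N) : ∑ n ∈ Finset.Icc 2 N, dd n / Real.log n =
    DD N / (Real.log N) ^ 3 + ∑ n ∈ Finset.Ico 2 N, DD n * (1 / (Real.log n) ^ 3 - 1 / (Real.log (n + 1 : ℕ)) ^ 3) := by
  induction N, hN using Nat.le_induction with
  | base =>
    have := DD_succ 1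
    rw [DD_one] at this
    have h2 := log_pos2 (le_refl 2)
    simp only [Finset.Icc_self, Finset.sum_singleton, Finset.Ico_self, Finset.sum_empty]
    rw [this]
    norm_num at h2 ⊢
    field_simp
  | succ N hN ih =>
    rw [Finset.sum_Icc_succ_top (by omega), ih, Finset.sum_Ico_succ_top hN, DD_succ]
    have h2 := log_pos2 hN
    have h3 := log_pos2 (show 2 ≤ N + 1 by omega)
    field_simp
    ring

lemma log_succ (n : ℕ) (hn : 1 ≤ n) : 0 ≤ n * (Real.log (n + 1 : ℕ) - Real.log n) ∧
    n * (Real.log (n + 1 : ℕ) - Real.log n) ≤ 1 := by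
  have hn0 : (0:ℝ) < n := by exact_mod_cast hn
  have e : Real.log (n + 1 : ℕ) - Real.log n = Real.log (1 + 1 / n) := by
    rw [← Real.log_div (by positivity) hn0.ne']; congr 1; push_cast; field_simp
  rw [e]
  have h1 := Real.log_le_sub_one_of_pos (show (0:ℝ) < 1 + 1 / n by positivity)
  have h2 : 0 ≤ Real.log (1 + 1 / (n:ℝ)) := Real.log_nonneg (by have : 0 < 1 / (n:ℝ) := by positivity
                                                                linarith)
  refine ⟨by positivity, ?_⟩
  calc n * Real.log (1 + 1 / (n:ℝ)) ≤ n * (1 / n) := by gcongr; linarith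
    _ = 1 := by field_simp

lemma abel2 (N : ℕ) (hN : 2 ≤ N) :
    ∑ n ∈ Finset.Ico 2 N, (n * Real.log n) * (1 / (Real.log n) ^ 3 - 1 / (Real.log (n + 1 : ℕ)) ^ 3)
      ≤ 8 + 3 * SL N - N / (Real.log N) ^ 2 := by
  induction N, hN using Nat.le_induction with
  | base =>
    have h1 : 0 ≤ SL 2 := Finset.sum_nonneg fun _ _ => by positivity
    have h2 : (2:ℝ) / (Real.log 2) ^ 2 ≤ 8 := by
      have := Real.log_two_gt_d9
      rw [div_le_iff₀ (by positivity)]; nlinarith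
    simp only [Finset.Ico_self, Finset.sum_empty]
    push_cast
    linarith
  | succ N hN ih =>
    rw [Finset.sum_Ico_succ_top hN, SL, Finset.sum_Icc_succ_top (by omega), ← SL]
    have h2 := log_pos2 hN
    have h3 := log_pos2 (show 2 ≤ N + 1 by omega)
    have h4 := (log_succ N (by omega)).2
    have h5 : 1 ≤ 2 * Real.log (N + 1 : ℕ) := by
      have : Real.log 2 ≤ Real.log (N + 1 : ℕ) := Real.log_le_log (by norm_num) (by exact_mod_cast (by omega : 2 ≤ N + 1))
      linarith [Real.log_two_gt_d9]
    set a := Real.log N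
    set b := Real.log (N + 1 : ℕ)
    have e1 : (N : ℝ) * a * (1 / a ^ 3 - 1 / b ^ 3) = N / a ^ 2 - N * a / b ^ 3 := by field_simp
    have e2 : ((N + 1 : ℕ) : ℝ) / b ^ 2 - N * a / b ^ 3 ≤ 3 * (1 / b ^ 2) := by
      have : ((N + 1 : ℕ) : ℝ) / b ^ 2 - N * a / b ^ 3 = (b + N * (b - a)) / b ^ 3 := by
        push_cast; field_simp; ring
      rw [this]
      have : 3 * (1 / b ^ 2) = 3 * b / b ^ 3 := by field_simp
      rw [this]
      gcongr
      linarith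
    rw [e1]
    linarith

lemma dd_sum : ∃ C : ℝ, 0 < C ∧ ∀ N : ℕ, 2 ≤ N →
    |∑ n ∈ Finset.Icc 2 N, dd n / Real.log n| ≤ C * (N / (Real.log N) ^ 2) := by
  obtain ⟨C, hC, h⟩ := D_bound
  obtain ⟨C2, hC2, hS⟩ := SL_le
  obtain ⟨C3, hC3, h8⟩ : ∃ C3 : ℝ, 0 < C3 ∧ ∀ N : ℕ, 2 ≤ N → 8 ≤ C3 * (N / (Real.log N) ^ 2) := by
    refine ⟨128, by norm_num, fun N hN => ?_⟩
    have hN2 : (2:ℝ) ≤ N := by exact_mod_cast hN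
    have := log_pos2 hN
    rw [← mul_div_assoc, le_div_iff₀ (by positivity)]
    have h1 := log_sq_le (x := N) (by linarith)
    have : Real.sqrt N ≤ N := by
      rw [Real.sqrt_le_left (by linarith)]; nlinarith
    linarith
  refine ⟨C + C * (C3 + 3 * C2), by positivity, fun N hN => ?_⟩
  rw [abel N hN]
  have hl := log_pos2 hN
  refine (abs_add_le _ _).trans ?_
  have t1 : |DD N / (Real.log N) ^ 3| ≤ C * (N / (Real.log N) ^ 2) := by
    rw [abs_div, abs_of_pos (by positivity : 0 < (Real.log N) ^ 3)]
    calc _ ≤ C * (N * Real.log N) / (Real.log N) ^ 3 := by gcongr; exact h N hN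
      _ = _ := by field_simp
  have t2 : |∑ n ∈ Finset.Ico 2 N, DD n * (1 / (Real.log n) ^ 3 - 1 / (Real.log (n + 1 : ℕ)) ^ 3)| ≤
      C * (8 + 3 * SL N) := by
    refine (Finset.abs_sum_le_sum_abs _ _).trans ?_
    have : ∀ n ∈ Finset.Ico 2 N, |DD n * (1 / (Real.log n) ^ 3 - 1 / (Real.log (n + 1 : ℕ)) ^ 3)| ≤
        C * ((n * Real.log n) * (1 / (Real.log n) ^ 3 - 1 / (Real.log (n + 1 : ℕ)) ^ 3)) := by
      intro n hn
      have hn2 := (Finset.mem_Ico.1 hn).1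
      have hl := log_pos2 hn2
      have : 0 ≤ 1 / (Real.log n) ^ 3 - 1 / (Real.log (n + 1 : ℕ)) ^ 3 := by
        rw [sub_nonneg]
        have : Real.log n ≤ Real.log (n + 1 : ℕ) := Real.log_le_log (by exact_mod_cast (by omega : 0 < n)) (by push_cast; linarith)
        gcongr
      rw [abs_mul, abs_of_nonneg this, ← mul_assoc]
      gcongr
      exact h n hn2
    refine (Finset.sum_le_sum this).trans ?_
    rw [← Finset.mul_sum]
    have := abel2 N hN
    have : 0 ≤ N / (Real.log N) ^ 2 := by positivity
    gcongr
    linarith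
  have := hS N hN
  have := h8 N hN
  have : C * (8 + 3 * SL N) ≤ C * (C3 * (N / (Real.log N) ^ 2) + 3 * (C2 * (N / (Real.log N) ^ 2))) := by
    gcongr
  calc _ ≤ _ := add_le_add t1 (t2.trans this)
    _ = _ := by ring

lemma li_sum : ∃ C : ℝ, 0 < C ∧ ∀ N : ℕ, 2 ≤ N →
    |∑ n ∈ Finset.Icc 2 N, 1 / Real.log n - N / Real.log N| ≤ C * (N / (Real.log N) ^ 2) := by
  obtain ⟨C2, hC2, hS⟩ := SL_le
  have key : ∀ N : ℕ, 2 ≤ N → -4 ≤ ∑ n ∈ Finset.Icc 2 N, 1 / Real.log n - N / Real.log N ∧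
      ∑ n ∈ Finset.Icc 2 N, 1 / Real.log n - N / Real.log N ≤ 2 * SL N := by
    intro N hN
    have h2 := log_pos2 (le_refl 2)
    have hq : Real.log (2:ℕ) ≥ 1 / 2 := by push_cast; linarith [Real.log_two_gt_d9]
    induction N, hN using Nat.le_induction with
    | base =>
      simp only [Finset.Icc_self, Finset.sum_singleton]
      have h3 : 0 ≤ SL 2 := Finset.sum_nonneg fun _ _ => by positivity
      have h4 : (1:ℝ) / Real.log (2:ℕ) ≤ 4 := by rw [div_le_iff₀ h2]; norm_num at hq ⊢; linarith
      have h5 : (0:ℝ) < 1 / Real.log (2:ℕ) := by positivity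
      have h6 : ((2:ℕ):ℝ) / Real.log (2:ℕ) = 2 * (1 / Real.log (2:ℕ)) := by push_cast; ring
      rw [h6]
      constructor <;> linarith
    | succ N hN ih =>
      rw [Finset.sum_Icc_succ_top (by omega), SL, Finset.sum_Icc_succ_top (by omega), ← SL]
      have h2 := log_pos2 hN
      have h3 := log_pos2 (show 2 ≤ N + 1 by omega)
      have h4 := log_succ N (by omega)
      have h7 : Real.log (N + 1 : ℕ) ≤ 2 * Real.log N := by
        have : Real.log (N + 1 : ℕ) ≤ Real.log ((N:ℝ) ^ 2) := by
          apply Real.log_le_log (by positivity)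
          have : (2:ℝ) ≤ N := by exact_mod_cast hN
          push_cast; nlinarith
        rw [Real.log_pow] at this; exact_mod_cast this
      set a := Real.log N
      set b := Real.log (N + 1 : ℕ)
      have e1 : 1 / b - ((N + 1 : ℕ) : ℝ) / b + N / a = N * (b - a) / (a * b) := by
        push_cast; field_simp; ring
      have e2 : 0 ≤ N * (b - a) / (a * b) := div_nonneg h4.1 (by positivity)
      have e3 : N * (b - a) / (a * b) ≤ 2 * (1 / b ^ 2) := by
        have : 2 * (1 / b ^ 2) = 1 / (b / 2 * b) := by field_simp
        rw [this]
        have : b / 2 ≤ a := by linarith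
        have := h4.2
        gcongr
      obtain ⟨i1, i2⟩ := ih
      constructor <;> linarith
  refine ⟨64 + 2 * C2, by positivity, fun N hN => ?_⟩
  have h1 := key N hN
  have h2 := hS N hN
  have h3 : 4 ≤ 64 * (N / (Real.log N) ^ 2) := by
    have hN2 : (2:ℝ) ≤ N := by exact_mod_cast hN
    have := log_pos2 hN
    rw [← mul_div_assoc, le_div_iff₀ (by positivity)]
    have h1 := log_sq_le (x := N) (by linarith)
    have : Real.sqrt N ≤ N := by
      rw [Real.sqrt_le_left (by linarith)]; nlinarith
    linarith
  rw [abs_le]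
  constructor
  · have : 0 ≤ C2 * (N / (Real.log N) ^ 2) := by positivity
    linarith
  · have : 0 ≤ 64 * (N / (Real.log N) ^ 2) := by positivity
    linarith
end BE

namespace BE
open Filter Topology
open scoped ArithmeticFunction.vonMangoldt

def Tq (q : ℕ) : Prop := q.Prime ∧ (q % 8 = 1 ∨ q % 8 = 3)
instance : DecidablePred Tq := fun q => by unfold Tq; infer_instance
def TF (N : ℕ) : Finset ℕ := (Finset.Icc 1 N).filter Tq
noncomputable def piN (N : ℕ) : ℝ := ((TF N).card : ℝ)

lemma pt_bound (n : ℕ) (hn : 2 ≤ n) : |gR n / Real.log n - (if Tq n then 2 else 0)| ≤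
    (if n = 2 then 1 else 0) + (if ¬ n.Prime then 4 * Λ n else 0) := by
  have hl := log_pos2 hn
  by_cases hp : n.Prime
  · have e : gR n / Real.log n = 1 + ((ZMod.χ₈' (n : ZMod 8) : ℤ) : ℝ) := by
      unfold gR
      rw [ArithmeticFunction.vonMangoldt_apply_prime hp]; field_simp
    rw [e, ZMod.χ₈'_nat_eq_if_mod_eight]
    simp only [hp, not_true, if_false, Tq, true_and]
    rcases hp.eq_two_or_odd with h2 | ho
    · subst h2; norm_num
    · have : n ≠ 2 := by omega
      have ho' : ¬ n % 2 = 0 := by omega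
      rw [if_neg this, if_neg ho']
      split_ifs <;> norm_num
  · have : ¬ Tq n := fun h => hp h.1
    simp only [this, if_false, hp, not_false_eq_true, if_true, sub_zero]
    rw [abs_of_nonneg (div_nonneg (gR_nonneg n) hl.le)]
    have h0 := ArithmeticFunction.vonMangoldt_nonneg (n := n)
    have h1 : gR n / Real.log n ≤ 4 * Λ n := by
      rw [div_le_iff₀ hl]
      have : Real.log 2 ≤ Real.log n := Real.log_le_log (by norm_num) (by exact_mod_cast hn)
      nlinarith [gR_le n, Real.log_two_gt_d9]
    split_ifs <;> linarith

lemma piN_eq (N : ℕ) : ∑ n ∈ Finset.Icc 2 N, (if Tq n then (2:ℝ) else 0) = 2 * piN N := by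
  rw [← Finset.sum_filter, Finset.sum_const, nsmul_eq_mul, mul_comm, piN]
  congr 3
  ext n
  simp only [TF, Finset.mem_filter, Finset.mem_Icc]
  constructor
  · rintro ⟨h, h'⟩; exact ⟨⟨by omega, h.2⟩, h'⟩
  · rintro ⟨h, h'⟩; exact ⟨⟨h'.1.two_le, h.2⟩, h'⟩

lemma one_le_err {N : ℕ} (hN : 2 ≤ N) : 1 ≤ 16 * (N / (Real.log N) ^ 2) := by
  have hN2 : (2:ℝ) ≤ N := by exact_mod_cast hN
  have := log_pos2 hN
  rw [← mul_div_assoc, le_div_iff₀ (by positivity)]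
  have h1 := log_sq_le (x := N) (by linarith)
  have : Real.sqrt N ≤ N := by
    rw [Real.sqrt_le_left (by linarith)]; nlinarith
  linarith

lemma pi_nat : ∃ C : ℝ, 0 < C ∧ ∀ N : ℕ, 2 ≤ N →
    |piN N - N / (2 * Real.log N)| ≤ C * (N / (Real.log N) ^ 2) := by
  obtain ⟨C1, h1, H1⟩ := dd_sum
  obtain ⟨C2, h2, H2⟩ := li_sum
  refine ⟨C1 + C2 + 16 + 8 * 216, by positivity, fun N hN => ?_⟩
  have hN2 : (2:ℝ) ≤ N := by exact_mod_cast hN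
  have hl := log_pos2 hN
  have a1 := H1 N hN
  have a2 := H2 N hN
  have a3 : |∑ n ∈ Finset.Icc 2 N, gR n / Real.log n - 2 * piN N| ≤ 1 + 4 * (2 * Real.sqrt N * Real.log N) := by
    rw [← piN_eq, ← Finset.sum_sub_distrib]
    refine (Finset.abs_sum_le_sum_abs _ _).trans
      ((Finset.sum_le_sum fun n hn => pt_bound n (Finset.mem_Icc.1 hn).1).trans ?_)
    rw [Finset.sum_add_distrib]
    apply add_le_add
    · rw [Finset.sum_ite_eq']; split_ifs <;> norm_num
    · have h := Chebyshev.psi_sub_theta_le (x := N) (by linarith)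
      rw [Chebyshev.psi_sub_theta_eq_sum_not_prime, Nat.floor_natCast] at h
      rw [← Finset.sum_filter, ← Finset.mul_sum]
      refine mul_le_mul_of_nonneg_left (le_trans ?_ h) (by norm_num)
      refine Finset.sum_le_sum_of_subset_of_nonneg ?_ fun _ _ _ => ArithmeticFunction.vonMangoldt_nonneg
      intro n hn
      simp only [Finset.mem_filter, Finset.mem_Icc, Finset.mem_Ioc] at hn ⊢
      exact ⟨⟨by omega, hn.1.2⟩, hn.2⟩
  have a4 : ∑ n ∈ Finset.Icc 2 N, dd n / Real.log n = ∑ n ∈ Finset.Icc 2 N, gR n / Real.log n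
      - ∑ n ∈ Finset.Icc 2 N, 1 / Real.log n := by
    rw [← Finset.sum_sub_distrib]
    exact Finset.sum_congr rfl fun n _ => by unfold dd; ring
  rw [a4] at a1
  have a5 := one_le_err hN
  have a6 : Real.sqrt N * Real.log N ≤ 216 * (N / (Real.log N) ^ 2) := by
    rw [← mul_div_assoc, le_div_iff₀ (by positivity)]
    have := log_cb_le (x := N) (by linarith)
    have h3 := Real.mul_self_sqrt (show (0:ℝ) ≤ N by linarith)
    have h4 := Real.sqrt_nonneg N
    calc Real.sqrt N * Real.log N * Real.log N ^ 2 = Real.sqrt N * Real.log N ^ 3 := by ring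
      _ ≤ Real.sqrt N * (216 * Real.sqrt N) := by gcongr
      _ = 216 * (Real.sqrt N * Real.sqrt N) := by ring
      _ = _ := by rw [h3]
  have e : (N:ℝ) / (2 * Real.log N) = (N / Real.log N) / 2 := by field_simp
  rw [e]
  rw [abs_le] at *
  constructor <;> linarith [a1.1, a1.2, a2.1, a2.2, a3.1, a3.2]

noncomputable def SPi (N : ℕ) : ℝ := ∑ k ∈ Finset.Icc 2 N, piN k

lemma tele (N : ℕ) (hN : 2 ≤ N) :
    -8 ≤ ∑ n ∈ Finset.Icc 2 N, n / Real.log n - N ^ 2 / (2 * Real.log N) ∧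
      ∑ n ∈ Finset.Icc 2 N, n / Real.log n - N ^ 2 / (2 * Real.log N) ≤
        2 * ∑ n ∈ Finset.Icc 2 N, n / (Real.log n) ^ 2 := by
  induction N, hN using Nat.le_induction with
  | base =>
    have h2 := log_pos2 (le_refl 2)
    have h3 : (0:ℝ) ≤ (2:ℕ) / Real.log (2:ℕ) ^ 2 := by positivity
    simp only [Finset.Icc_self, Finset.sum_singleton]
    have : ((2:ℕ):ℝ) / Real.log (2:ℕ) - ((2:ℕ):ℝ) ^ 2 / (2 * Real.log (2:ℕ)) = 0 := by
      field_simp; norm_num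
    rw [this]
    constructor
    · norm_num
    · linarith
  | succ N hN ih =>
    rw [Finset.sum_Icc_succ_top (by omega), Finset.sum_Icc_succ_top (by omega)]
    have hN2 : (2:ℝ) ≤ N := by exact_mod_cast hN
    have h2 := log_pos2 hN
    have h3 := log_pos2 (show 2 ≤ N + 1 by omega)
    have h4 := log_succ N (by omega)
    have h7 : Real.log (N + 1 : ℕ) ≤ 2 * Real.log N := by
      have : Real.log (N + 1 : ℕ) ≤ Real.log ((N:ℝ) ^ 2) := by
        apply Real.log_le_log (by positivity)
        push_cast; nlinarith
      rw [Real.log_pow] at this; exact_mod_cast this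
    have h8 : Real.log (N + 1 : ℕ) ≤ N := by
      have := Real.log_le_sub_one_of_pos (show (0:ℝ) < (N + 1 : ℕ) by positivity)
      push_cast at this ⊢; linarith
    set a := Real.log N
    set b := Real.log (N + 1 : ℕ)
    have e1 : ((N + 1 : ℕ) : ℝ) / b - ((N + 1 : ℕ) : ℝ) ^ 2 / (2 * b) + N ^ 2 / (2 * a) =
        1 / (2 * b) + N * (N * (b - a)) / (2 * a * b) := by
      push_cast; field_simp; ring
    have e2 : 0 ≤ N * (N * (b - a)) / (2 * a * b) := div_nonneg (mul_nonneg (by linarith) h4.1) (by positivity)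
    have e3 : N * (N * (b - a)) / (2 * a * b) ≤ ((N + 1 : ℕ) : ℝ) / b ^ 2 := by
      calc N * (N * (b - a)) / (2 * a * b) ≤ ((N + 1 : ℕ) : ℝ) * 1 / (b * b) := by
            have := h4.2
            have := h4.1
            gcongr
            · linarith
        _ = _ := by ring
    have e4 : 1 / (2 * b) ≤ ((N + 1 : ℕ) : ℝ) / b ^ 2 := by
      rw [div_le_div_iff₀ (by positivity) (by positivity)]
      push_cast at *
      nlinarith
    have e5 : 0 < 1 / (2 * b) := by positivity
    obtain ⟨i1, i2⟩ := ih
    constructor <;> linarith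

lemma SPi_nat : ∃ C : ℝ, 0 < C ∧ ∀ N : ℕ, 2 ≤ N →
    |SPi N - N ^ 2 / (4 * Real.log N)| ≤ C * (N ^ 2 / (Real.log N) ^ 2) := by
  obtain ⟨C1, h1, H1⟩ := pi_nat
  obtain ⟨C2, h2, H2⟩ := SL_le
  refine ⟨C1 * C2 + C2 + 128, by positivity, fun N hN => ?_⟩
  have hN2 : (2:ℝ) ≤ N := by exact_mod_cast hN
  have hl := log_pos2 hN
  have hs : ∑ n ∈ Finset.Icc 2 N, n / (Real.log n) ^ 2 ≤ C2 * (N ^ 2 / (Real.log N) ^ 2) := by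
    calc ∑ n ∈ Finset.Icc 2 N, n / (Real.log n) ^ 2 ≤ ∑ n ∈ Finset.Icc 2 N, N * (1 / (Real.log n) ^ 2) := by
          refine Finset.sum_le_sum fun n hn => ?_
          rw [mul_one_div]
          have : (n:ℝ) ≤ N := by exact_mod_cast (Finset.mem_Icc.1 hn).2
          gcongr
      _ = N * SL N := by rw [SL, Finset.mul_sum]
      _ ≤ N * (C2 * (N / (Real.log N) ^ 2)) := by gcongr; exact H2 N hN
      _ = _ := by ring
  have a1 : |SPi N - ∑ n ∈ Finset.Icc 2 N, n / (2 * Real.log n)| ≤ C1 * ∑ n ∈ Finset.Icc 2 N, n / (Real.log n) ^ 2 := by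
    rw [SPi, ← Finset.sum_sub_distrib, Finset.mul_sum]
    exact (Finset.abs_sum_le_sum_abs _ _).trans (Finset.sum_le_sum fun n hn => H1 n (Finset.mem_Icc.1 hn).1)
  have a2 : ∑ n ∈ Finset.Icc 2 N, (n:ℝ) / (2 * Real.log n) = (∑ n ∈ Finset.Icc 2 N, n / Real.log n) / 2 := by
    rw [Finset.sum_div]
    exact Finset.sum_congr rfl fun n _ => by rw [div_div, mul_comm]
  rw [a2] at a1
  obtain ⟨t1, t2⟩ := tele N hN
  have a3 : C1 * ∑ n ∈ Finset.Icc 2 N, n / (Real.log n) ^ 2 ≤ C1 * (C2 * (N ^ 2 / (Real.log N) ^ 2)) := by gcongr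
  have a4 : 1 ≤ 16 * (N ^ 2 / (Real.log N) ^ 2) := by
    have := one_le_err hN
    have : (N:ℝ) / Real.log N ^ 2 ≤ N ^ 2 / Real.log N ^ 2 := by gcongr; nlinarith
    linarith
  have e : (N:ℝ) ^ 2 / (4 * Real.log N) = (N ^ 2 / (2 * Real.log N)) / 2 := by field_simp; norm_num
  rw [e]
  have p1 : 0 < C2 * (N ^ 2 / (Real.log N) ^ 2) := by positivity
  rw [abs_le] at *
  constructor <;> linarith [a1.1, a1.2]

lemma TF_succ_sum (N : ℕ) (f : ℕ → ℝ) (h : f (N + 1) = 0) : ∑ q ∈ TF (N + 1), f q = ∑ q ∈ TF N, f q := by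
  unfold TF
  rw [Finset.sum_filter, Finset.sum_filter, Finset.sum_Icc_succ_top (by omega)]
  simp [h]

lemma Pi_eq (N : ℕ) (hN : 1 ≤ N) : ∑ q ∈ TF N, ((N:ℝ) + 1 - q) = SPi N := by
  induction N, hN using Nat.le_induction with
  | base =>
    have : TF 1 = ∅ := by decide
    simp [this, SPi]
  | succ N hN ih =>
    rw [SPi, Finset.sum_Icc_succ_top (by omega), ← SPi, ← ih, ← TF_succ_sum N _ (by push_cast; ring), piN,
      Finset.cast_card, ← Finset.sum_add_distrib]
    refine Finset.sum_congr rfl fun q _ => ?_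
    push_cast; ring

lemma floor_facts {z : ℝ} (hz : 3 ≤ z) : 3 ≤ ⌊z⌋₊ ∧ (⌊z⌋₊:ℝ) ≤ z ∧ z ≤ ⌊z⌋₊ + 1 ∧
    Real.log ⌊z⌋₊ ≤ Real.log z ∧ Real.log z ≤ 2 * Real.log ⌊z⌋₊ ∧ (⌊z⌋₊:ℝ) / Real.log ⌊z⌋₊ ≤ z / Real.log z := by
  have h3 : 3 ≤ ⌊z⌋₊ := Nat.le_floor (by exact_mod_cast hz)
  have h3r : (3:ℝ) ≤ ⌊z⌋₊ := by exact_mod_cast h3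
  have h4 := Nat.floor_le (by linarith : 0 ≤ z)
  have h5 := Nat.lt_floor_add_one z
  refine ⟨h3, h4, h5.le, Real.log_le_log (by linarith) h4, ?_, ?_⟩
  · have : Real.log z ≤ Real.log ((⌊z⌋₊:ℝ) ^ 2) := Real.log_le_log (by linarith) (by nlinarith)
    rw [Real.log_pow] at this; exact_mod_cast this
  · have he := Real.exp_one_lt_d9
    have := Real.log_div_self_antitoneOn (a := (⌊z⌋₊:ℝ)) (b := z) (by show Real.exp 1 ≤ _; linarith)
      (by show Real.exp 1 ≤ _; linarith) h4
    have l1 : 0 < Real.log z := Real.log_pos (by linarith)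
    have l2 : 0 < Real.log ⌊z⌋₊ := Real.log_pos (by linarith)
    simp only at this
    rw [div_le_div_iff₀ (by linarith) (by linarith)] at this
    rw [div_le_div_iff₀ l2 l1]
    linarith

lemma err_real {z : ℝ} (hz : 3 ≤ z) : (⌊z⌋₊:ℝ) / (Real.log ⌊z⌋₊) ^ 2 ≤ 4 * (z / (Real.log z) ^ 2) := by
  obtain ⟨h3, h4, h5, h6, h7, h8⟩ := floor_facts hz
  have l1 : 0 < Real.log z := Real.log_pos (by linarith)
  have l2 : 0 < Real.log ⌊z⌋₊ := by linarith
  have : 4 * (z / (Real.log z) ^ 2) = z / (Real.log z / 2) ^ 2 := by field_simp; norm_num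
  rw [this]
  have : Real.log z / 2 ≤ Real.log ⌊z⌋₊ := by linarith
  gcongr

lemma one_le_errz {z : ℝ} (hz : 3 ≤ z) : 1 ≤ 16 * (z / (Real.log z) ^ 2) := by
  have l1 : 0 < Real.log z := Real.log_pos (by linarith)
  rw [← mul_div_assoc, le_div_iff₀ (by positivity)]
  have h1 := log_sq_le (x := z) (by linarith)
  have : Real.sqrt z ≤ z := by
    rw [Real.sqrt_le_left (by linarith)]; nlinarith
  linarith

lemma pi_lo : ∃ C : ℝ, 0 < C ∧ ∀ z : ℝ, 3 ≤ z →
    z / (2 * Real.log z) - C * (z / (Real.log z) ^ 2) ≤ piN ⌊z⌋₊ := by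
  obtain ⟨C1, p1, H1⟩ := pi_nat
  refine ⟨4 * C1 + 16, by positivity, fun z hz => ?_⟩
  obtain ⟨h3, h4, h5, h6, h7, h8⟩ := floor_facts hz
  have a1 := (abs_le.1 (H1 ⌊z⌋₊ (by omega))).1
  have a2 := err_real hz
  have a3 := one_le_errz hz
  have a4 : C1 * ((⌊z⌋₊:ℝ) / (Real.log ⌊z⌋₊) ^ 2) ≤ C1 * (4 * (z / (Real.log z) ^ 2)) := by gcongr
  have l1 : 1 ≤ Real.log z := by
    rw [Real.le_log_iff_exp_le (by linarith)]; linarith [Real.exp_one_lt_d9]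
  have l2 : 0 < Real.log ⌊z⌋₊ := by linarith
  have a5 : z / (2 * Real.log z) ≤ (⌊z⌋₊:ℝ) / (2 * Real.log ⌊z⌋₊) + 1 := by
    calc z / (2 * Real.log z) ≤ (⌊z⌋₊ + 1) / (2 * Real.log z) := by gcongr
      _ = (⌊z⌋₊:ℝ) / (2 * Real.log z) + 1 / (2 * Real.log z) := by ring
      _ ≤ _ := by
        gcongr
        rw [div_le_one (by linarith)]; linarith
  linarith

lemma sq_real {z : ℝ} (hz : 3 ≤ z) : (⌊z⌋₊:ℝ) ^ 2 / (4 * Real.log ⌊z⌋₊) ≤ z ^ 2 / (4 * Real.log z) ∧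
    (⌊z⌋₊:ℝ) ^ 2 / (Real.log ⌊z⌋₊) ^ 2 ≤ 4 * (z ^ 2 / (Real.log z) ^ 2) := by
  obtain ⟨h3, h4, h5, h6, h7, h8⟩ := floor_facts hz
  have l1 : 0 < Real.log z := Real.log_pos (by linarith)
  have l2 : 0 < Real.log ⌊z⌋₊ := by linarith
  constructor
  · calc (⌊z⌋₊:ℝ) ^ 2 / (4 * Real.log ⌊z⌋₊) = ⌊z⌋₊ / 4 * (⌊z⌋₊ / Real.log ⌊z⌋₊) := by field_simp
      _ ≤ z / 4 * (z / Real.log z) := by gcongr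
      _ = _ := by field_simp
  · calc (⌊z⌋₊:ℝ) ^ 2 / (Real.log ⌊z⌋₊) ^ 2 = ⌊z⌋₊ * (⌊z⌋₊ / (Real.log ⌊z⌋₊) ^ 2) := by ring
      _ ≤ z * (4 * (z / (Real.log z) ^ 2)) := by gcongr; exact err_real hz
      _ = _ := by ring

lemma Pi_up : ∃ C : ℝ, 0 < C ∧ ∀ z : ℝ, 3 ≤ z →
    ∑ q ∈ TF ⌊z⌋₊, (z - q) ≤ z ^ 2 / (4 * Real.log z) + C * (z ^ 2 / (Real.log z) ^ 2) := by
  obtain ⟨C1, p1, H1⟩ := SPi_nat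
  refine ⟨4 * C1, by positivity, fun z hz => ?_⟩
  obtain ⟨h3, h4, h5, h6, h7, h8⟩ := floor_facts hz
  have a1 := (abs_le.1 (H1 ⌊z⌋₊ (by omega))).2
  have a2 := sq_real hz
  have a3 : ∑ q ∈ TF ⌊z⌋₊, (z - q) ≤ SPi ⌊z⌋₊ := by
    rw [← Pi_eq _ (by omega)]
    exact Finset.sum_le_sum fun q _ => by linarith
  have a4 := mul_le_mul_of_nonneg_left a2.2 p1.le
  linarith [a2.1]

lemma sig_up : ∃ C : ℝ, 0 < C ∧ ∀ z : ℝ, 3 ≤ z →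
    ∑ q ∈ TF ⌊z⌋₊, (q : ℝ) ≤ z ^ 2 / (4 * Real.log z) + C * (z ^ 2 / (Real.log z) ^ 2) := by
  obtain ⟨C1, p1, H1⟩ := SPi_nat
  obtain ⟨C2, p2, H2⟩ := pi_nat
  refine ⟨4 * (C1 + 2 * C2 + 1), by positivity, fun z hz => ?_⟩
  obtain ⟨h3, h4, h5, h6, h7, h8⟩ := floor_facts hz
  have a1 := (abs_le.1 (H1 ⌊z⌋₊ (by omega))).1
  have b1 := (abs_le.1 (H2 ⌊z⌋₊ (by omega))).2
  have a2 := sq_real hz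
  set N := ⌊z⌋₊
  have hN3 : (3:ℝ) ≤ N := by exact_mod_cast h3
  have l1 : 1 ≤ Real.log N := by
    rw [Real.le_log_iff_exp_le (by linarith)]; linarith [Real.exp_one_lt_d9]
  have l3 : Real.log N ≤ N := (Real.log_le_sub_one_of_pos (by linarith)).trans (by linarith)
  have a3 : ∑ q ∈ TF N, (q : ℝ) = (N + 1) * piN N - SPi N := by
    rw [← Pi_eq _ (by omega), Finset.sum_sub_distrib, Finset.sum_const, nsmul_eq_mul, piN]
    ring
  have a4 : (N + 1) * piN N ≤ (N + 1) * (N / (2 * Real.log N) + C2 * (N / (Real.log N) ^ 2)) := by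
    gcongr; linarith
  have a5 : ((N:ℝ) + 1) * (N / (2 * Real.log N) + C2 * (N / (Real.log N) ^ 2)) ≤
      2 * (N ^ 2 / (4 * Real.log N)) + N ^ 2 / (Real.log N) ^ 2 + 2 * C2 * (N ^ 2 / (Real.log N) ^ 2) := by
    have e1 : ((N:ℝ) + 1) * (N / (2 * Real.log N)) = 2 * (N ^ 2 / (4 * Real.log N)) + N / (2 * Real.log N) := by
      field_simp; ring
    have e2 : (N:ℝ) / (2 * Real.log N) ≤ N ^ 2 / (Real.log N) ^ 2 := by
      rw [div_le_div_iff₀ (by positivity) (by positivity)]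
      nlinarith [mul_le_mul l3 (le_refl (Real.log N)) (by linarith) (by linarith : (0:ℝ) ≤ N), mul_pos (show (0:ℝ) < N by linarith) (show 0 < Real.log N by linarith)]
    have e3 : ((N:ℝ) + 1) * (C2 * (N / (Real.log N) ^ 2)) ≤ 2 * C2 * (N ^ 2 / (Real.log N) ^ 2) := by
      calc ((N:ℝ) + 1) * (C2 * (N / (Real.log N) ^ 2)) ≤ (2 * N) * (C2 * (N / (Real.log N) ^ 2)) := by
            gcongr; linarith
        _ = _ := by ring
    linarith
  rw [a3]
  have a6 := mul_le_mul_of_nonneg_left a2.2 (show 0 ≤ C1 + 2 * C2 + 1 by positivity)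
  linarith [a2.1]
end BE

namespace BE

def S (n : ℤ) : Set (ℤ × ℤ) := {p | p.1 ^ 2 + 2 * p.2 ^ 2 = n}
noncomputable def r (n : ℤ) : ℕ := (S n).ncard

lemma S_fin (n : ℤ) : (S n).Finite := by
  refine (Set.finite_Icc ((-n, -n) : ℤ × ℤ) (n, n)).subset fun p hp => ?_
  have hp : p.1 ^ 2 + 2 * p.2 ^ 2 = n := hp
  rw [Set.mem_Icc, Prod.le_def, Prod.le_def]
  have h1 := sq_nonneg p.1
  have h2 := sq_nonneg p.2
  have h3 : p.1 ≤ p.1 ^ 2 := Int.le_self_sq _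
  have h4 : p.2 ≤ p.2 ^ 2 := Int.le_self_sq _
  have h5 : -p.1 ≤ (-p.1) ^ 2 := Int.le_self_sq _
  have h6 : -p.2 ≤ (-p.2) ^ 2 := Int.le_self_sq _
  rw [neg_sq] at h5 h6
  refine ⟨⟨?_, ?_⟩, ?_, ?_⟩ <;> simp only <;> linarith

lemma r_one : r 1 = 2 := by
  have : S 1 = {(1, 0), (-1, 0)} := by
    ext ⟨x, y⟩
    simp only [S, Set.mem_setOf_eq, Set.mem_insert_iff, Set.mem_singleton_iff, Prod.mk.injEq]
    constructor
    · intro h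
      have hy : y = 0 := by
        by_contra hy
        have : 0 < y ^ 2 := by positivity
        nlinarith [sq_nonneg x]
      subst hy
      have : x ^ 2 = 1 := by linarith
      have h2 : (x - 1) * (x + 1) = 0 := by linear_combination this
      rcases mul_eq_zero.1 h2 with h | h
      · exact Or.inl ⟨by omega, rfl⟩
      · exact Or.inr ⟨by omega, rfl⟩
    · rintro (⟨rfl, rfl⟩ | ⟨rfl, rfl⟩) <;> norm_num
  rw [r, this, Set.ncard_pair (by decide)]

lemma r_two (n : ℤ) : r (2 * n) = r n := by
  have : S (2 * n) = (fun p : ℤ × ℤ => (2 * p.2, p.1)) '' S n := by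
    ext ⟨x, y⟩
    simp only [S, Set.mem_setOf_eq, Set.mem_image, Prod.mk.injEq, Prod.exists]
    constructor
    · intro h
      have hx : Even x := by
        have : Even (x ^ 2) := ⟨n - y ^ 2, by linarith⟩
        exact (Int.even_pow.1 this).1
      obtain ⟨k, hk⟩ := hx
      refine ⟨y, k, ?_, by omega, rfl⟩
      subst hk
      nlinarith
    · rintro ⟨a, b, h, rfl, rfl⟩
      nlinarith
  rw [r, this, Set.ncard_image_of_injective, r]
  rintro ⟨a, b⟩ ⟨a', b'⟩ h
  simp only [Prod.mk.injEq] at h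
  ext <;> simp <;> omega

lemma r_smul (p n : ℤ) (hp : p ≠ 0) (h : ∀ a b : ℤ, a ^ 2 + 2 * b ^ 2 = p * p * n → p ∣ a ∧ p ∣ b) :
    r (p * p * n) = r n := by
  have : S (p * p * n) = (fun z : ℤ × ℤ => (p * z.1, p * z.2)) '' S n := by
    ext ⟨x, y⟩
    simp only [S, Set.mem_setOf_eq, Set.mem_image, Prod.mk.injEq, Prod.exists]
    constructor
    · intro hxy
      obtain ⟨⟨a, rfl⟩, ⟨b, rfl⟩⟩ := h x y hxy
      refine ⟨a, b, ?_, rfl, rfl⟩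
      apply mul_left_cancel₀ (mul_ne_zero hp hp)
      linarith
    · rintro ⟨a, b, h, rfl, rfl⟩
      rw [← h]; ring
  rw [r, this, Set.ncard_image_of_injective, r]
  rintro ⟨a, b⟩ ⟨a', b'⟩ h
  simp only [Prod.mk.injEq, mul_right_inj' hp] at h
  ext <;> simp [h.1, h.2]

lemma bad_dvd {p : ℕ} (hp : p.Prime) (h : p % 8 = 5 ∨ p % 8 = 7) (a b : ℤ)
    (hab : (p : ℤ) ∣ a ^ 2 + 2 * b ^ 2) : (p : ℤ) ∣ a ∧ (p : ℤ) ∣ b := by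
  haveI := Fact.mk hp
  have hpi : Prime (p : ℤ) := Nat.prime_iff_prime_int.1 hp
  have hb : (p : ℤ) ∣ b := by
    by_contra hb
    have hb0 : (b : ZMod p) ≠ 0 := by
      rwa [Ne, ZMod.intCast_zmod_eq_zero_iff_dvd]
    have h0 : ((a ^ 2 + 2 * b ^ 2 : ℤ) : ZMod p) = 0 := (ZMod.intCast_zmod_eq_zero_iff_dvd _ _).2 hab
    push_cast at h0
    have hs : IsSquare (-2 : ZMod p) := by
      refine ⟨a / b, ?_⟩
      field_simp
      linear_combination -h0
    have := (ZMod.exists_sq_eq_neg_two_iff (by omega)).1 hs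
    omega
  refine ⟨?_, hb⟩
  have : (p : ℤ) ∣ a ^ 2 := by
    have h2 : (p : ℤ) ∣ 2 * b ^ 2 := (dvd_pow hb two_ne_zero).mul_left 2
    exact (dvd_add_left h2).1 hab
  exact hpi.dvd_of_dvd_pow this

lemma good_rep {p : ℕ} (hp : p.Prime) (h : p % 8 = 1 ∨ p % 8 = 3) : ∃ c d : ℤ, c ^ 2 + 2 * d ^ 2 = p := by
  haveI := Fact.mk hp
  obtain ⟨s, hs⟩ := (ZMod.exists_sq_eq_neg_two_iff (p := p) (by omega)).2 h
  set k := Nat.sqrt p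
  have hk1 : p < (k + 1) * (k + 1) := Nat.lt_succ_sqrt p
  have hk2 : k * k ≤ p := Nat.sqrt_le p
  have hk3 : k * k ≠ p := fun h' => by
    have : IsSquare p := ⟨k, h'.symm⟩
    exact (Nat.prime_iff.1 hp).irreducible.not_isSquare this
  have hk4 : k * k < p := lt_of_le_of_ne hk2 hk3
  obtain ⟨u, hu, v, hv, huv, he⟩ := Finset.exists_ne_map_eq_of_card_lt_of_maps_to
    (s := Finset.range (k + 1) ×ˢ Finset.range (k + 1)) (t := (Finset.univ : Finset (ZMod p)))
    (f := fun x => (x.1 : ZMod p) - s * x.2)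
    (by rw [Finset.card_product, Finset.card_range, Finset.card_univ, ZMod.card]; exact hk1)
    (fun _ _ => Finset.mem_univ _)
  simp only [Finset.mem_product, Finset.mem_range] at hu hv
  set a : ℤ := (u.1 : ℤ) - v.1 with ha
  set b : ℤ := (u.2 : ℤ) - v.2 with hb
  have hdvd : (p : ℤ) ∣ a ^ 2 + 2 * b ^ 2 := by
    rw [← ZMod.intCast_zmod_eq_zero_iff_dvd]
    have e1 : (a : ZMod p) = s * b := by
      rw [ha, hb]; push_cast; linear_combination he
    push_cast
    rw [e1]
    linear_combination (-(b : ZMod p) ^ 2) * hs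
  have hsq : ∀ t : ℤ, -(k:ℤ) ≤ t → t ≤ k → t ^ 2 ≤ k * k := fun t h1 h2 => by nlinarith
  have a2 := hsq a (by omega) (by omega)
  have b2 := hsq b (by omega) (by omega)
  have hk5 : (k:ℤ) * k < p := by exact_mod_cast hk4
  have hpos : 0 < a ^ 2 + 2 * b ^ 2 := by
    by_contra hn
    have h1 : a ^ 2 = 0 := by nlinarith [sq_nonneg a, sq_nonneg b]
    have h2 : b ^ 2 = 0 := by nlinarith [sq_nonneg a, sq_nonneg b]
    have h1 : a = 0 := by simpa using h1
    have h2 : b = 0 := by simpa using h2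
    exact huv (Prod.ext (by omega) (by omega))
  obtain ⟨m, hm⟩ := hdvd
  have hp0 : (0:ℤ) < p := by exact_mod_cast hp.pos
  have hm1 : 0 < m := by
    by_contra h'; nlinarith
  have hm3 : m < 3 := by
    by_contra h'; nlinarith
  have : m = 1 ∨ m = 2 := by omega
  rcases this with rfl | rfl
  · exact ⟨a, b, by linarith⟩
  · have hx : Even a := by
      have : Even (a ^ 2) := ⟨p - b ^ 2, by linarith⟩
      exact (Int.even_pow.1 this).1
    obtain ⟨k, hk⟩ := hx
    exact ⟨b, k, by rw [hk] at hm; nlinarith⟩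

lemma good_inc {p : ℕ} (hp : p.Prime) (h : p % 8 = 1 ∨ p % 8 = 3) (n : ℤ) :
    r (p * n) + ({z : ℤ × ℤ | z ∈ S (p * n) ∧ (p : ℤ) ∣ z.1 ∧ (p : ℤ) ∣ z.2}).ncard = 2 * r n := by
  obtain ⟨c, d, hcd⟩ := good_rep hp h
  have hpi : Prime (p : ℤ) := Nat.prime_iff_prime_int.1 hp
  have hp0 : (p:ℤ) ≠ 0 := hpi.ne_zero
  have hp2 : ¬ (p:ℤ) ∣ 2 := by
    intro h2
    have := Int.le_of_dvd (by norm_num) h2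
    have := hp.two_le
    omega
  have key : ∀ c d : ℤ, c ^ 2 + 2 * d ^ 2 = p → ¬ (p:ℤ) ∣ c ∧ ¬ (p:ℤ) ∣ d := by
    intro c d hcd
    have h1 : ∀ c d : ℤ, c ^ 2 + 2 * d ^ 2 = p → (p:ℤ) ∣ c → (p:ℤ) ∣ d → False := by
      rintro c d hcd ⟨u, rfl⟩ ⟨v, rfl⟩
      have : (p:ℤ) * (u ^ 2 + 2 * v ^ 2) = 1 := by
        apply mul_left_cancel₀ hp0; linarith
      exact hpi.not_unit (IsUnit.of_mul_eq_one _ this)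
    constructor
    · intro hc
      refine h1 c d hcd hc ?_
      have : (p:ℤ) ∣ 2 * d ^ 2 := by
        have : 2 * d ^ 2 = p - c ^ 2 := by linarith
        rw [this]; exact dvd_sub (dvd_refl _) (dvd_pow hc two_ne_zero)
      exact hpi.dvd_of_dvd_pow ((hpi.dvd_or_dvd this).resolve_left hp2)
    · intro hd
      refine h1 c d hcd ?_ hd
      have : (p:ℤ) ∣ c ^ 2 := by
        have : c ^ 2 = p - 2 * d ^ 2 := by linarith
        rw [this]; exact dvd_sub (dvd_refl _) ((dvd_pow hd two_ne_zero).mul_left 2)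
      exact hpi.dvd_of_dvd_pow this
  have img : ∀ d : ℤ, c ^ 2 + 2 * d ^ 2 = p →
      (fun z : ℤ × ℤ => (c * z.1 - 2 * d * z.2, c * z.2 + d * z.1)) '' S n =
        {z | z ∈ S (p * n) ∧ (p:ℤ) ∣ c * z.2 - d * z.1} := by
    intro d hcd
    ext ⟨x, y⟩
    simp only [S, Set.mem_setOf_eq, Set.mem_image, Prod.mk.injEq, Prod.exists]
    constructor
    · rintro ⟨a, b, hab, rfl, rfl⟩
      refine ⟨by rw [← hab, ← hcd]; ring, b, by rw [← hcd]; ring⟩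
    · rintro ⟨hxy, t, ht⟩
      have h1 : (c * x + 2 * d * y) ^ 2 = p * (p * n - 2 * p * t ^ 2) := by
        have : (c * x + 2 * d * y) ^ 2 + 2 * (c * y - d * x) ^ 2 = (c ^ 2 + 2 * d ^ 2) * (x ^ 2 + 2 * y ^ 2) := by ring
        rw [hcd, hxy, ht] at this
        linarith
      obtain ⟨u, hu⟩ := hpi.dvd_of_dvd_pow (Dvd.intro _ h1.symm)
      have e1 : c * u - 2 * d * t = x := by
        apply mul_left_cancel₀ hp0
        have : p * (c * u - 2 * d * t) = c * (p * u) - 2 * d * (p * t) := by ring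
        rw [this, ← hu, ← ht, ← hcd]; ring
      have e2 : c * t + d * u = y := by
        apply mul_left_cancel₀ hp0
        have : p * (c * t + d * u) = c * (p * t) + d * (p * u) := by ring
        rw [this, ← hu, ← ht, ← hcd]; ring
      refine ⟨u, t, ?_, e1, e2⟩
      apply mul_left_cancel₀ hp0
      rw [← hxy, ← e1, ← e2, ← hcd]; ring
  have inj : ∀ d : ℤ, c ^ 2 + 2 * d ^ 2 = p →
      Function.Injective (fun z : ℤ × ℤ => (c * z.1 - 2 * d * z.2, c * z.2 + d * z.1)) := by
    rintro d hcd ⟨a, b⟩ ⟨a', b'⟩ h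
    simp only [Prod.mk.injEq] at h
    obtain ⟨h1, h2⟩ := h
    ext
    · apply mul_left_cancel₀ hp0
      simp only
      rw [← hcd]; linear_combination c * h1 + 2 * d * h2
    · apply mul_left_cancel₀ hp0
      simp only
      rw [← hcd]; linear_combination c * h2 - d * h1
  have hcd' : c ^ 2 + 2 * (-d) ^ 2 = p := by rw [neg_sq]; exact hcd
  have n1 := Set.ncard_image_of_injective (S n) (inj d hcd)
  have n2 := Set.ncard_image_of_injective (S n) (inj (-d) hcd')
  rw [img d hcd] at n1
  rw [img (-d) hcd'] at n2
  set A := {z | z ∈ S (p * n) ∧ (p:ℤ) ∣ c * z.2 - d * z.1}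
  set B := {z | z ∈ S (p * n) ∧ (p:ℤ) ∣ c * z.2 - (-d) * z.1}
  have hU : A ∪ B = S (p * n) := by
    ext ⟨x, y⟩
    simp only [A, B, Set.mem_union, Set.mem_setOf_eq]
    constructor
    · rintro (h | h) <;> exact h.1
    · intro hxy
      have : (p:ℤ) ∣ (c * y - d * x) * (c * y - (-d) * x) := by
        refine ⟨y ^ 2 - d ^ 2 * n, ?_⟩
        have hxy' : x ^ 2 + 2 * y ^ 2 = p * n := hxy
        linear_combination (y ^ 2) * hcd - d ^ 2 * hxy'
      rcases hpi.dvd_or_dvd this with h | h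
      · exact Or.inl ⟨hxy, h⟩
      · exact Or.inr ⟨hxy, h⟩
  have hI : A ∩ B = {z : ℤ × ℤ | z ∈ S (p * n) ∧ (p : ℤ) ∣ z.1 ∧ (p : ℤ) ∣ z.2} := by
    ext ⟨x, y⟩
    simp only [A, B, Set.mem_inter_iff, Set.mem_setOf_eq]
    constructor
    · rintro ⟨⟨h1, h2⟩, -, h3⟩
      refine ⟨h1, ?_, ?_⟩
      · have : (p:ℤ) ∣ 2 * (d * x) := by
          have := dvd_sub h3 h2
          have e : c * y - -d * x - (c * y - d * x) = 2 * (d * x) := by ring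
          rwa [e] at this
        exact (hpi.dvd_or_dvd ((hpi.dvd_or_dvd this).resolve_left hp2)).resolve_left (key c d hcd).2
      · have : (p:ℤ) ∣ 2 * (c * y) := by
          have := dvd_add h3 h2
          have e : c * y - -d * x + (c * y - d * x) = 2 * (c * y) := by ring
          rwa [e] at this
        exact (hpi.dvd_or_dvd ((hpi.dvd_or_dvd this).resolve_left hp2)).resolve_left (key c d hcd).1
    · rintro ⟨h1, h2, h3⟩
      exact ⟨⟨h1, dvd_sub (h3.mul_left c) (h2.mul_left d)⟩, h1, dvd_sub (h3.mul_left c) (h2.mul_left (-d))⟩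
  have hfA : A.Finite := (S_fin (p * n)).subset fun z hz => hz.1
  have hfB : B.Finite := (S_fin (p * n)).subset fun z hz => hz.1
  have := Set.ncard_union_add_ncard_inter A B hfA hfB
  rw [hU, hI, n1, n2] at this
  rw [r, this, r]; ring

lemma good_inc1 {p : ℕ} (hp : p.Prime) (h : p % 8 = 1 ∨ p % 8 = 3) (n : ℤ) (hn : ¬ (p:ℤ) ∣ n) :
    r (p * n) = 2 * r n := by
  have hp0 : (p:ℤ) ≠ 0 := by exact_mod_cast hp.ne_zero
  have := good_inc hp h n
  have he : {z : ℤ × ℤ | z ∈ S (p * n) ∧ (p : ℤ) ∣ z.1 ∧ (p : ℤ) ∣ z.2} = ∅ := by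
    rw [Set.eq_empty_iff_forall_notMem]
    rintro ⟨x, y⟩ ⟨h1, ⟨a, ha⟩, ⟨b, hb⟩⟩
    simp only at ha hb
    subst ha hb
    have h1 : ((p:ℤ) * a) ^ 2 + 2 * (p * b) ^ 2 = p * n := h1
    apply hn
    refine ⟨a ^ 2 + 2 * b ^ 2, ?_⟩
    apply mul_left_cancel₀ hp0
    linarith
  rw [he, Set.ncard_empty] at this
  simpa using this

lemma good_inc2 {p : ℕ} (hp : p.Prime) (h : p % 8 = 1 ∨ p % 8 = 3) (n : ℤ) :
    r (p * (p * n)) + r n = 2 * r (p * n) := by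
  have hp0 : (p:ℤ) ≠ 0 := by exact_mod_cast hp.ne_zero
  have := good_inc hp h (p * n)
  have he : {z : ℤ × ℤ | z ∈ S (p * (p * n)) ∧ (p : ℤ) ∣ z.1 ∧ (p : ℤ) ∣ z.2} =
      (fun z : ℤ × ℤ => (p * z.1, p * z.2)) '' S n := by
    ext ⟨x, y⟩
    simp only [S, Set.mem_setOf_eq, Set.mem_image, Prod.mk.injEq, Prod.exists]
    constructor
    · rintro ⟨hxy, ⟨a, rfl⟩, ⟨b, rfl⟩⟩
      refine ⟨a, b, ?_, rfl, rfl⟩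
      apply mul_left_cancel₀ (mul_ne_zero hp0 hp0)
      linarith
    · rintro ⟨a, b, h, rfl, rfl⟩
      exact ⟨by rw [← h]; ring, ⟨a, rfl⟩, ⟨b, rfl⟩⟩
  rw [he, Set.ncard_image_of_injective] at this
  · exact this
  · rintro ⟨a, b⟩ ⟨a', b'⟩ h
    simp only [Prod.mk.injEq, mul_right_inj' hp0] at h
    ext <;> simp [h.1, h.2]

def loc (p k : ℕ) : ℕ := if p = 2 then 1 else if p % 8 = 1 ∨ p % 8 = 3 then k + 1 else if Even k then 1 else 0

lemma good_pow {p : ℕ} (hp : p.Prime) (h : p % 8 = 1 ∨ p % 8 = 3) (m : ℤ) (hm : ¬ (p:ℤ) ∣ m) (k : ℕ) :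
    r (p ^ k * m) = (k + 1) * r m ∧ r (p ^ (k + 1) * m) = (k + 2) * r m := by
  induction k with
  | zero => simp; exact good_inc1 hp h m hm
  | succ k ih =>
    refine ⟨by rw [ih.2], ?_⟩
    have := good_inc2 hp h (p ^ k * m)
    have e1 : (p:ℤ) * (p ^ k * m) = p ^ (k + 1) * m := by ring
    have e2 : (p:ℤ) * (p ^ (k + 1) * m) = p ^ (k + 1 + 1) * m := by ring
    rw [e1, e2, ih.1, ih.2] at this
    have h3 : (k + 1 + 2) * r m + (k + 1) * r m = 2 * ((k + 2) * r m) := by ring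
    omega

lemma r_pow {p : ℕ} (hp : p.Prime) (m : ℤ) (hm : ¬ (p:ℤ) ∣ m) (k : ℕ) :
    r (p ^ k * m) = loc p k * r m := by
  unfold loc
  split_ifs with h2 h1 hk
  · subst h2
    induction k with
    | zero => simp
    | succ k ih => rw [pow_succ', mul_assoc]; push_cast at *; rw [r_two, ih]
  · exact (good_pow hp h1 m hm k).1
  · have hb : p % 8 = 5 ∨ p % 8 = 7 := by
      have := hp.eq_two_or_odd; omega
    have hp0 : (p:ℤ) ≠ 0 := by exact_mod_cast hp.ne_zero
    obtain ⟨j, rfl⟩ := hk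
    clear hm
    induction j with
    | zero => simp
    | succ j ih =>
      have e : (p:ℤ) ^ (j + 1 + (j + 1)) * m = p * p * (p ^ (j + j) * m) := by ring
      rw [e, r_smul _ _ hp0, ih]
      intro a b hab
      exact bad_dvd hp hb a b (by rw [hab, mul_assoc]; exact dvd_mul_right _ _)
  · have hb : p % 8 = 5 ∨ p % 8 = 7 := by
      have := hp.eq_two_or_odd; omega
    have hp0 : (p:ℤ) ≠ 0 := by exact_mod_cast hp.ne_zero
    rw [Nat.not_even_iff_odd] at hk
    obtain ⟨j, rfl⟩ := hk
    rw [zero_mul]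
    induction j with
    | zero =>
      have : S ((p:ℤ) ^ (2 * 0 + 1) * m) = ∅ := by
        rw [Set.eq_empty_iff_forall_notMem]
        rintro ⟨x, y⟩ hxy
        have hxy : x ^ 2 + 2 * y ^ 2 = (p:ℤ) ^ (2 * 0 + 1) * m := hxy
        rw [mul_zero, zero_add, pow_one] at hxy
        obtain ⟨⟨a, rfl⟩, ⟨b, rfl⟩⟩ := bad_dvd hp hb x y ⟨m, hxy⟩
        apply hm
        refine ⟨a ^ 2 + 2 * b ^ 2, ?_⟩
        apply mul_left_cancel₀ hp0
        linarith
      rw [r, this, Set.ncard_empty]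
    | succ j ih =>
      have e : (p:ℤ) ^ (2 * (j + 1) + 1) * m = p * p * (p ^ (2 * j + 1) * m) := by ring
      rw [e, r_smul _ _ hp0, ih]
      intro a b hab
      exact bad_dvd hp hb a b (by rw [hab, mul_assoc]; exact dvd_mul_right _ _)

lemma r_formula (n : ℕ) : n ≠ 0 → r n = 2 * n.factorization.prod loc := by
  induction n using Nat.recOnPrimePow with
  | zero => simp
  | one => intro _; simp [r_one]
  | prime_pow_mul a p k hp ha hk ih =>
    intro hn
    have ha0 : a ≠ 0 := by rintro rfl; simp at hn
    have hc : Nat.Coprime (p ^ k) a := Nat.Coprime.pow_left k ((Nat.Prime.coprime_iff_not_dvd hp).2 ha)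
    rw [Nat.factorization_mul_of_coprime hc, Finsupp.prod_add_index_of_disjoint]
    · rw [hp.factorization_pow, Finsupp.prod_single_index (by unfold loc; split_ifs <;> simp_all)]
      push_cast
      rw [r_pow hp a (by exact_mod_cast ha), ih ha0]
      ring
    · exact hc.disjoint_primeFactors

lemma fForm_eq {n : ℕ} (hn : n ≠ 0) : fForm n = n.factorization.prod loc := by
  rw [fForm, if_neg hn]
  have : Nat.card {p : ℤ × ℤ // p.1 ^ 2 + 2 * p.2 ^ 2 = (n : ℤ)} = r n := rfl
  rw [this, r_formula n hn]; omega
end BE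

namespace BE
open Finset

lemma loc_zero (p : ℕ) : loc p 0 = 1 := by unfold loc; split_ifs <;> simp_all

lemma Tq_ne2 {p : ℕ} (h : Tq p) : p ≠ 2 := by rintro rfl; rcases h.2 with h | h <;> omega

lemma Tq_ge {p : ℕ} (h : Tq p) : 3 ≤ p := by
  have := h.1.two_le; have := Tq_ne2 h; omega

lemma loc_T {p : ℕ} (h : Tq p) (k : ℕ) : loc p k = k + 1 := by
  unfold loc; rw [if_neg (Tq_ne2 h), if_pos h.2]

lemma fForm_prod {ι : Type*} (I : Finset ι) (φ : ι → ℕ) (a : ι → ℕ)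
    (hφ : Set.InjOn φ I) (hT : ∀ i ∈ I, Tq (φ i)) :
    fForm (∏ i ∈ I, φ i ^ a i) = ∏ i ∈ I, (a i + 1) := by
  classical
  have hne : ∏ i ∈ I, φ i ^ a i ≠ 0 :=
    prod_ne_zero_iff.2 fun i hi => pow_ne_zero _ (hT i hi).1.ne_zero
  have hfac : ∀ p, (∏ i ∈ I, φ i ^ a i).factorization p = ∑ i ∈ I, if φ i = p then a i else 0 := by
    intro p
    rw [Nat.factorization_prod fun i hi => pow_ne_zero _ (hT i hi).1.ne_zero, Finsupp.finsetSum_apply]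
    refine sum_congr rfl fun i hi => ?_
    rw [(hT i hi).1.factorization_pow, Finsupp.single_apply]
  rw [fForm_eq hne, Finsupp.prod_of_support_subset (s := I.image φ), prod_image hφ]
  · refine prod_congr rfl fun i hi => ?_
    rw [loc_T (hT i hi), hfac, sum_eq_single i]
    · simp
    · intro j hj hji
      rw [if_neg]
      exact fun h => hji (hφ hj hi h)
    · exact fun h => absurd hi h
  · intro p hp
    by_contra hc
    rw [Finsupp.mem_support_iff, hfac] at hp
    apply hp
    refine sum_eq_zero fun i hi => if_neg fun h => hc ?_
    exact mem_image.2 ⟨i, hi, h⟩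
  · intro p _; exact loc_zero p

lemma fForm_T {n : ℕ} (hn : n ≠ 0) (h : fForm n ≠ 0) :
    fForm n = ∏ p ∈ n.primeFactors.filter Tq, (n.factorization p + 1) := by
  rw [fForm_eq hn, Finsupp.prod, Nat.support_factorization] at *
  rw [prod_filter]
  refine prod_congr rfl fun p hp => ?_
  have h0 := prod_ne_zero_iff.1 h p hp
  have hpp := (Nat.mem_primeFactors.1 hp).1
  split_ifs with hT
  · exact loc_T hT _
  · unfold loc at *
    have : ¬ (p % 8 = 1 ∨ p % 8 = 3) := fun h => hT ⟨hpp, h⟩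
    simp only [this, if_false] at *
    split_ifs at * <;> simp_all

lemma fForm_zero : fForm 0 = 1 := by simp [fForm]

noncomputable def L (l : ℕ) : ℝ := Real.log (1 + 1 / ((l : ℝ) + 1))

lemma L_pos (l : ℕ) : 0 < L l := Real.log_pos (by
  have : 0 < 1 / ((l : ℝ) + 1) := by positivity
  linarith)

lemma L_le (l : ℕ) : L l ≤ 1 / ((l : ℝ) + 1) := by
  have := Real.log_le_sub_one_of_pos (x := 1 + 1 / ((l : ℝ) + 1)) (by positivity)
  unfold L; linarith

lemma L_le_one (l : ℕ) : L l ≤ 1 := by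
  refine (L_le l).trans ?_
  rw [div_le_one (by positivity)]
  have : (0 : ℝ) ≤ l := l.cast_nonneg
  linarith

lemma L_sum (e : ℕ) : ∑ l ∈ range e, L l = Real.log (e + 1) := by
  induction e with
  | zero => simp
  | succ k ih =>
    rw [sum_range_succ, ih, L, ← Real.log_mul (by positivity) (by positivity)]
    congr 1
    push_cast
    have : (k : ℝ) + 1 ≠ 0 := by positivity
    field_simp

lemma L32_summable : Summable fun l => L l * √(L l) := by
  have h : Summable fun l : ℕ => 1 / ((l : ℝ) + 1) ^ (3 / 2 : ℝ) := by
    have := (summable_nat_add_iff 1).2 (Real.summable_one_div_nat_rpow.2 (show (1 : ℝ) < 3 / 2 by norm_num))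
    simpa using this
  refine Summable.of_nonneg_of_le (fun l => by have := (L_pos l).le; positivity) (fun l => ?_) h
  have h1 : (0 : ℝ) < (l : ℝ) + 1 := by positivity
  have : 1 / ((l : ℝ) + 1) ^ (3 / 2 : ℝ) = 1 / ((l : ℝ) + 1) * √(1 / ((l : ℝ) + 1)) := by
    rw [show (3 / 2 : ℝ) = 1 + 1 / 2 by norm_num, Real.rpow_add h1, Real.rpow_one, ← Real.sqrt_eq_rpow,
      Real.sqrt_div zero_le_one, Real.sqrt_one]
    field_simp
  rw [this]
  exact mul_le_mul (L_le l) (Real.sqrt_le_sqrt (L_le l)) (Real.sqrt_nonneg _) (by positivity)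

lemma L2_summable : Summable fun l => L l ^ 2 := by
  refine Summable.of_nonneg_of_le (fun l => by positivity) (fun l => ?_) L32_summable
  have h := (L_pos l).le
  have : L l ≤ √(L l) := Real.le_sqrt_of_sq_le (by nlinarith [L_le_one l])
  nlinarith

noncomputable def SS : ℝ := ∑' l, L l ^ 2
noncomputable def DL : ℝ := ∑' l, L l * √(L l)

lemma SS_pos : 0 < SS := L2_summable.tsum_pos (fun _ => by positivity) 0 (pow_pos (L_pos 0) 2)
lemma DL_pos : 0 < DL := L32_summable.tsum_pos
  (fun l => by have := (L_pos l).le; positivity) 0 (mul_pos (L_pos 0) (Real.sqrt_pos.2 (L_pos 0)))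

lemma sum_S_le (s : Finset ℕ) : ∑ l ∈ s, L l ^ 2 ≤ SS := L2_summable.sum_le_tsum s fun _ _ => by positivity
lemma sum_D_le (s : Finset ℕ) : ∑ l ∈ s, L l * √(L l) ≤ DL :=
  L32_summable.sum_le_tsum s fun l _ => by have := (L_pos l).le; positivity

lemma c_eq : cBEFS / √2 = 2 * √SS := by
  have : cBEFS = √(8 * SS) := rfl
  rw [this, ← Real.sqrt_div' _ (by norm_num), show 8 * SS / 2 = 2 ^ 2 * SS by ring,
    Real.sqrt_mul (by norm_num), Real.sqrt_sq (by norm_num)]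

end BE

namespace BE
open Finset

lemma wt {y w : ℝ} (hw : 0 < w) (hw1 : w ≤ 1) (h2 : 2 ≤ y * w) :
    √w / Real.log (y * w) ≤ √w / Real.log y + 36 / Real.log y ^ 2 ∧
    √w / Real.log (y * w) ^ 2 ≤ 130 / Real.log y ^ 2 ∧ 0 < Real.log (y * w) ∧
    Real.log (y * w) ≤ Real.log y := by
  have hy : 0 < y := by by_contra h; nlinarith
  have ha : 1 / 2 ≤ Real.log (y * w) := by
    have := Real.log_le_log (by norm_num) h2
    linarith [Real.log_two_gt_d9]
  set a := Real.log (y * w) with haa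
  set t := Real.log w⁻¹ with ht
  have hlog : Real.log y = a + t := by
    rw [haa, ht, Real.log_mul hy.ne' hw.ne', Real.log_inv]; ring
  have ht0 : 0 ≤ t := Real.log_nonneg ((one_le_inv₀ hw).2 hw1)
  set s := √w with hs
  have hs0 : 0 < s := Real.sqrt_pos.2 hw
  have hs1 : s ≤ 1 := Real.sqrt_le_one.2 hw1
  have h4 : t ≤ 4 * √(√(w⁻¹)) := log_le_r4 (inv_pos.2 hw)
  rw [Real.sqrt_inv, Real.sqrt_inv, ← hs] at h4
  set v := √s with hv
  have hv0 : 0 < v := Real.sqrt_pos.2 hs0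
  have hv1 : v ≤ 1 := Real.sqrt_le_one.2 hs1
  have hvs : v * v = s := Real.mul_self_sqrt hs0.le
  have h5 : v * t ≤ 4 := by
    have := mul_le_mul_of_nonneg_left h4 hv0.le
    rwa [mul_left_comm, mul_inv_cancel₀ hv0.ne', mul_one] at this
  have h50 : 0 ≤ v * t := by positivity
  have h6 : s * t ≤ 4 := by rw [← hvs]; nlinarith
  have h7 : s * t ^ 2 ≤ 16 := by rw [← hvs]; nlinarith
  have ha0 : 0 < a := by linarith
  have hta : t / a ≤ 2 * t := by
    rw [div_le_iff₀ ha0]; nlinarith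
  have hta0 : 0 ≤ t / a := by positivity
  rw [hlog]
  have hat : 0 < a + t := by linarith
  refine ⟨?_, ?_, ha0, by linarith⟩
  · have e : s / a = s / (a + t) + (s * t + s * t * (t / a)) / (a + t) ^ 2 := by
      field_simp
    rw [e]
    have : s * t + s * t * (t / a) ≤ 36 := by
      have : s * t * (t / a) ≤ s * t * (2 * t) := by gcongr
      nlinarith
    gcongr
  · have e : s / a ^ 2 = (s * (1 + t / a) ^ 2) / (a + t) ^ 2 := by
      field_simp
    rw [e]
    have : s * (1 + t / a) ^ 2 ≤ 130 := by
      have h8 : s * (1 + t / a) ^ 2 ≤ s * (1 + 2 * t) ^ 2 := by gcongr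
      nlinarith
    gcongr

lemma theta {y w C : ℝ} (hC : 0 ≤ C) (hw : 0 < w) (hw1 : w ≤ 1) (h2 : 2 ≤ y * w) :
    (y * w) ^ 2 / (4 * Real.log (y * w)) + C * ((y * w) ^ 2 / Real.log (y * w) ^ 2) ≤
    y ^ 2 / (4 * Real.log y) * w ^ 2 + (9 + 130 * C) * (y ^ 2 / Real.log y ^ 2) * (w * √w) := by
  obtain ⟨h3, h4, h5, h6⟩ := wt hw hw1 h2
  have hy : 0 < Real.log y := by linarith
  set a := Real.log (y * w)
  set b := Real.log y
  have hss : √w * √w = w := Real.mul_self_sqrt hw.le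
  set s := √w
  have hs : 0 < s := Real.sqrt_pos.2 hw
  have e1 : (y * w) ^ 2 / (4 * a) = y ^ 2 * w * s / 4 * (s / a) := by
    field_simp; rw [pow_two s, hss]
  have e2 : (y * w) ^ 2 / a ^ 2 = y ^ 2 * w * s * (s / a ^ 2) := by
    field_simp; rw [pow_two s, hss]
  have e3 : y ^ 2 / (4 * b) * w ^ 2 + (9 + 130 * C) * (y ^ 2 / b ^ 2) * (w * s) =
      y ^ 2 * w * s / 4 * (s / b + 36 / b ^ 2) + C * (y ^ 2 * w * s * (130 / b ^ 2)) := by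
    rw [← hss]; field_simp; ring
  rw [e1, e2, e3]
  gcongr

lemma TF_empty {z : ℝ} (hz : z < 3) : TF ⌊z⌋₊ = ∅ := by
  rw [TF, filter_eq_empty_iff]
  intro q hq hT
  have h1 := (mem_Icc.1 hq).2
  have h2 := Tq_ge hT
  have : (3 : ℕ) ≤ ⌊z⌋₊ := h2.trans h1
  rw [Nat.le_floor_iff' (by norm_num)] at this
  push_cast at this
  linarith

lemma sum_theta {y B : ℝ} (hB : 0 ≤ B) (hy : 1 < y) (F : ℕ → ℝ) (N : ℕ)
    (h : ∀ l, F l ≤ y ^ 2 / (4 * Real.log y) * L l ^ 2 + B * (y ^ 2 / Real.log y ^ 2) * (L l * √(L l))) :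
    ∑ l ∈ range N, F l ≤ y ^ 2 * SS / (4 * Real.log y) + B * DL * (y ^ 2 / Real.log y ^ 2) := by
  have hl := Real.log_pos hy
  calc ∑ l ∈ range N, F l ≤ ∑ l ∈ range N, (y ^ 2 / (4 * Real.log y) * L l ^ 2 + B * (y ^ 2 / Real.log y ^ 2) * (L l * √(L l))) :=
        sum_le_sum fun l _ => h l
    _ = y ^ 2 / (4 * Real.log y) * ∑ l ∈ range N, L l ^ 2 + B * (y ^ 2 / Real.log y ^ 2) * ∑ l ∈ range N, (L l * √(L l)) := by
        rw [sum_add_distrib, mul_sum, mul_sum]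
    _ ≤ y ^ 2 / (4 * Real.log y) * SS + B * (y ^ 2 / Real.log y ^ 2) * DL := by
        gcongr
        · exact sum_S_le _
        · exact sum_D_le _
    _ = _ := by ring

lemma sigma_bound : ∃ C : ℝ, 0 < C ∧ ∀ y : ℝ, 1 < y → ∀ N : ℕ,
    ∑ l ∈ range N, ∑ q ∈ TF ⌊y * L l⌋₊, (q : ℝ) ≤
      y ^ 2 * SS / (4 * Real.log y) + C * (y ^ 2 / Real.log y ^ 2) := by
  obtain ⟨C, hC, H⟩ := sig_up
  refine ⟨(9 + 130 * C) * DL, by have := DL_pos; positivity, fun y hy N => ?_⟩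
  refine sum_theta (by positivity) hy _ N fun l => ?_
  have hl := Real.log_pos hy
  have hL := L_pos l
  rcases lt_or_ge (y * L l) 3 with h | h
  · rw [TF_empty h, sum_empty]; positivity
  · exact (H _ h).trans (theta hC.le hL (L_le_one l) (by linarith))

lemma Pi_bound : ∃ C : ℝ, 0 < C ∧ ∀ y : ℝ, 1 < y → ∀ N : ℕ,
    ∑ l ∈ range N, ∑ q ∈ TF ⌊y * L l + 1⌋₊, (y * L l + 1 - q) ≤
      y ^ 2 * SS / (4 * Real.log y) + C * (y ^ 2 / Real.log y ^ 2) := by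
  obtain ⟨C, hC, H⟩ := Pi_up
  refine ⟨(9 + 130 * (3 * C + 1)) * DL, by have := DL_pos; positivity, fun y hy N => ?_⟩
  refine sum_theta (by positivity) hy _ N fun l => ?_
  have hl := Real.log_pos hy
  have hL := L_pos l
  rcases lt_or_ge (y * L l) 2 with h | h
  · rw [TF_empty (by linarith), sum_empty]; positivity
  · refine (H _ (by linarith)).trans (le_trans ?_ (theta (by positivity) hL (L_le_one l) h))
    set u := y * L l
    have hu : 0 < Real.log u := Real.log_pos (by linarith)
    have hu1 : Real.log u ≤ Real.log (u + 1) := Real.log_le_log (by linarith) (by linarith)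
    have hu2 : Real.log u ≤ u := by linarith [Real.log_le_sub_one_of_pos (show 0 < u by linarith)]
    have e1 : (u + 1) ^ 2 / (4 * Real.log (u + 1)) ≤ (u ^ 2 + 4 * u) / (4 * Real.log u) := by
      gcongr
      nlinarith
    have e2 : (u + 1) ^ 2 / Real.log (u + 1) ^ 2 ≤ 3 * u ^ 2 / Real.log u ^ 2 := by
      gcongr
      nlinarith
    have e3 : (u ^ 2 + 4 * u) / (4 * Real.log u) = u ^ 2 / (4 * Real.log u) + u * Real.log u / Real.log u ^ 2 := by
      field_simp
    have e4 : u * Real.log u / Real.log u ^ 2 ≤ u ^ 2 / Real.log u ^ 2 := by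
      gcongr; nlinarith
    have e5 : (3 * C + 1) * (u ^ 2 / Real.log u ^ 2) = C * (3 * u ^ 2 / Real.log u ^ 2) + u ^ 2 / Real.log u ^ 2 := by ring
    have e6 := mul_le_mul_of_nonneg_left e2 hC.le
    linarith

lemma pi_bound : ∃ C : ℝ, 0 < C ∧ ∀ y : ℝ, 1 < y → ∀ N : ℕ,
    y / (2 * Real.log y) * (∑ l ∈ range N, L l ^ 2) - C * (y / Real.log y ^ 2) ≤
    ∑ l ∈ range N, L l * piN ⌊y * L l⌋₊ := by
  obtain ⟨C, hC, H⟩ := pi_lo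
  refine ⟨(130 * C + 2) * DL, by have := DL_pos; positivity, fun y hy N => ?_⟩
  have hl := Real.log_pos hy
  have hy0 : 0 < y := by linarith
  have key : ∀ l, y / (2 * Real.log y) * L l ^ 2 - (130 * C + 2) * (y / Real.log y ^ 2) * (L l * √(L l))
      ≤ L l * piN ⌊y * L l⌋₊ := by
    intro l
    have hL := L_pos l
    set w := L l
    have hss : √w * √w = w := Real.mul_self_sqrt hL.le
    have hs : 0 < √w := Real.sqrt_pos.2 hL
    rcases lt_or_ge (y * w) 3 with h | h
    · have h1 : y / (2 * Real.log y) * w ^ 2 ≤ 2 * (y / Real.log y ^ 2) * (w * √w) := by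
        have e : y / (2 * Real.log y) * w ^ 2 = (√w * Real.log y / 2) * (y / Real.log y ^ 2) * (w * √w) := by
          field_simp; rw [pow_two (√w), hss]
        rw [e]
        have : √w * Real.log y ≤ 4 := by
          have h1 := log_le_sqrt hy0
          have h2 : √w * √y ≤ 2 := by
            rw [← Real.sqrt_mul hL.le]
            exact Real.sqrt_le_iff.2 ⟨by norm_num, by linarith⟩
          nlinarith
        gcongr
        linarith
      have h2 : 0 ≤ w * piN ⌊y * w⌋₊ := by unfold piN; positivity
      have h3 : 0 ≤ 130 * C * (y / Real.log y ^ 2) * (w * √w) := by positivity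
      linarith
    · obtain ⟨-, h4, h5, h6⟩ := wt (y := y) hL (L_le_one l) (by linarith)
      have h7 := mul_le_mul_of_nonneg_left (H _ h) hL.le
      refine le_trans ?_ h7
      have e1 : y / (2 * Real.log y) * w ^ 2 ≤ w * (y * w / (2 * Real.log (y * w))) := by
        have : w * (y * w / (2 * Real.log (y * w))) = y / (2 * Real.log (y * w)) * w ^ 2 := by ring
        rw [this]
        gcongr
      have e2 : w * (C * (y * w / Real.log (y * w) ^ 2)) ≤ 130 * C * (y / Real.log y ^ 2) * (w * √w) := by
        have e3 : w * (C * (y * w / Real.log (y * w) ^ 2)) = C * y * w * √w * (√w / Real.log (y * w) ^ 2) := by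
          field_simp; rw [pow_two (√w), hss]
        have e4 : 130 * C * (y / Real.log y ^ 2) * (w * √w) = C * y * w * √w * (130 / Real.log y ^ 2) := by ring
        rw [e3, e4]
        gcongr
      have h3 : 0 ≤ 2 * (y / Real.log y ^ 2) * (w * √w) := by positivity
      linarith
  calc _ ≤ ∑ l ∈ range N, (y / (2 * Real.log y) * L l ^ 2 - (130 * C + 2) * (y / Real.log y ^ 2) * (L l * √(L l))) := by
        rw [sum_sub_distrib, ← mul_sum, ← mul_sum]
        have := mul_le_mul_of_nonneg_left (sum_D_le (range N)) (show 0 ≤ (130 * C + 2) * (y / Real.log y ^ 2) by positivity)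
        linarith
    _ ≤ _ := sum_le_sum fun l _ => key l

end BE

namespace BE
open Finset

lemma prodA_le {k : ℕ} (hk : k ≠ 0) (A : Finset ℕ) (hA : ∀ q ∈ A, q.Prime) :
    ∏ q ∈ A, q ^ k.factorization q ≤ k := by
  have h : ∏ q ∈ A ∪ k.primeFactors, q ^ k.factorization q = k := by
    conv_rhs => rw [← Nat.prod_factorization_pow_eq_self hk]
    rw [Finsupp.prod, Nat.support_factorization]
    symm
    refine prod_subset subset_union_right fun q _ hq => ?_
    rw [← Nat.support_factorization, Finsupp.notMem_support_iff] at hq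
    rw [hq, pow_zero]
  conv_rhs => rw [← h]
  refine prod_le_prod_of_subset_of_one_le' subset_union_left fun q hq _ => ?_
  refine Nat.one_le_pow _ _ ?_
  rcases mem_union.1 hq with h | h
  · exact (hA q h).pos
  · exact (Nat.mem_primeFactors.1 h).1.pos

lemma sum_log_le {k : ℕ} (hk : k ≠ 0) (A : Finset ℕ) (hA : ∀ q ∈ A, q.Prime) :
    ∑ q ∈ A, (k.factorization q : ℝ) * Real.log q ≤ Real.log k := by
  have h := prodA_le hk A hA
  have h0 : ∀ q ∈ A, (q : ℝ) ^ k.factorization q ≠ 0 := fun q hq =>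
    pow_ne_zero _ (Nat.cast_ne_zero.2 (hA q hq).ne_zero)
  have h1 : ((∏ q ∈ A, q ^ k.factorization q : ℕ) : ℝ) ≤ k := by exact_mod_cast h
  push_cast at h1
  have h2 := Real.log_le_log (by
    refine prod_pos fun q hq => pow_pos (Nat.cast_pos.2 (hA q hq).pos) _) h1
  rw [Real.log_prod h0] at h2
  simpa [Real.log_pow] using h2

lemma bern (A : Finset ℕ) (v : ℕ → ℕ) (hA : ∀ q ∈ A, q.Prime) :
    1 + ∑ q ∈ A, (v q : ℝ) * ((q : ℝ) - 1) ≤ ∏ q ∈ A, (q : ℝ) ^ v q := by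
  classical
  induction A using Finset.induction_on with
  | empty => simp
  | insert a s ha ih =>
    rw [sum_insert ha, prod_insert ha]
    have h1 := ih fun q hq => hA q (mem_insert_of_mem hq)
    have ha1 : (1 : ℝ) ≤ a := Nat.one_le_cast.2 (hA a (mem_insert_self _ _)).pos
    have h2 := one_add_mul_le_pow (a := (a : ℝ) - 1) (by linarith) (v a)
    rw [add_sub_cancel] at h2
    have h3 : 0 ≤ ∑ q ∈ s, (v q : ℝ) * ((q : ℝ) - 1) := sum_nonneg fun q hq => by
      have : (1 : ℝ) ≤ q := Nat.one_le_cast.2 (hA q (mem_insert_of_mem hq)).pos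
      have : (0 : ℝ) ≤ (q : ℝ) - 1 := by linarith
      positivity
    have h4 : 0 ≤ (v a : ℝ) * ((a : ℝ) - 1) := mul_nonneg (Nat.cast_nonneg _) (by linarith)
    nlinarith [mul_le_mul h2 h1 (by linarith) (by positivity), mul_nonneg h3 h4]

lemma bern_fac {a : ℕ} (A : Finset ℕ) (hA : ∀ q ∈ A, q.Prime) :
    ∑ q ∈ A, ((a + 1).factorization q : ℝ) * ((q : ℝ) - 1) ≤ a := by
  have h1 := bern A (fun q => (a + 1).factorization q) hA
  have h2 := prodA_le (Nat.succ_ne_zero a) A hA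
  have h3 : ((∏ q ∈ A, q ^ (a + 1).factorization q : ℕ) : ℝ) ≤ ((a + 1 : ℕ) : ℝ) := by exact_mod_cast h2
  push_cast at h3
  linarith

lemma log_T {q : ℕ} (h : Tq q) : 1 ≤ Real.log q := by
  have h3 : (3 : ℝ) ≤ q := by exact_mod_cast Tq_ge h
  rw [Real.le_log_iff_exp_le (by linarith)]
  linarith [Real.exp_one_lt_d9]

lemma sum_fac_le {k : ℕ} (hk : k ≠ 0) (A : Finset ℕ) (hA : ∀ q ∈ A, Tq q) :
    ∑ q ∈ A, (k.factorization q : ℝ) ≤ Real.log k := by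
  refine le_trans (sum_le_sum fun q hq => ?_) (sum_log_le hk A fun q hq => (hA q hq).1)
  exact le_mul_of_one_le_right (Nat.cast_nonneg _) (log_T (hA q hq))

lemma dual {y : ℝ} (hy : 0 < y) (A : Finset ℕ) (hA : ∀ q ∈ A, Tq q) (e : ℕ → ℕ) :
    ∃ N : ℕ, ∑ q ∈ A, Real.log (e q + 1) ≤ (1 / y) * (∑ q ∈ A, (e q : ℝ) * ((q : ℝ) - 1)) +
      (1 / y) * ∑ l ∈ range N, ∑ q ∈ TF ⌊y * L l + 1⌋₊, (y * L l + 1 - q) := by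
  refine ⟨∑ q ∈ A, e q, ?_⟩
  set N := ∑ q ∈ A, e q
  have h1 : ∀ q ∈ A, Real.log (e q + 1) ≤ (1 / y) * ((e q : ℝ) * ((q : ℝ) - 1)) +
      ∑ l ∈ range N, (1 / y) * max (y * L l + 1 - q) 0 := by
    intro q hq
    have hN : e q ≤ N := single_le_sum (f := e) (fun _ _ => Nat.zero_le _) hq
    have h2 : ∑ l ∈ range (e q), (1 / y) * max (y * L l + 1 - q) 0 ≤ ∑ l ∈ range N, (1 / y) * max (y * L l + 1 - q) 0 :=
      sum_le_sum_of_subset_of_nonneg (range_subset_range.2 hN) fun l _ _ => by positivity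
    refine le_trans ?_ (add_le_add_right h2 _)
    rw [← L_sum]
    have h3 : (1 / y) * ((e q : ℝ) * ((q : ℝ) - 1)) = ∑ l ∈ range (e q), (1 / y) * ((q : ℝ) - 1) := by
      rw [sum_const, card_range, nsmul_eq_mul]; ring
    rw [h3, ← sum_add_distrib]
    refine sum_le_sum fun l _ => ?_
    rw [← mul_add]
    have h4 : L l = (1 / y) * (y * L l) := by field_simp
    conv_lhs => rw [h4]
    have h5 := le_max_left (y * L l + 1 - q) 0
    gcongr
    linarith
  refine (sum_le_sum h1).trans ?_
  rw [sum_add_distrib, ← mul_sum, sum_comm]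
  gcongr
  rw [mul_sum]
  refine sum_le_sum fun l _ => ?_
  rw [← mul_sum]
  gcongr
  have hf : ∑ q ∈ A, max (y * L l + 1 - q) 0 = ∑ q ∈ A.filter (fun q : ℕ => (q : ℝ) ≤ y * L l + 1), (y * L l + 1 - q) := by
    rw [sum_filter]
    refine sum_congr rfl fun q _ => ?_
    split_ifs with h
    · exact max_eq_left (by linarith)
    · exact max_eq_right (by linarith)
  rw [hf]
  refine sum_le_sum_of_subset_of_nonneg ?_ ?_
  · intro q hq
    rw [mem_filter] at hq
    have hT := hA q hq.1
    rw [TF, mem_filter, mem_Icc]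
    exact ⟨⟨hT.1.pos, Nat.le_floor hq.2⟩, hT⟩
  · intro q hq _
    rw [TF, mem_filter, mem_Icc] at hq
    have := hq.1.2
    rw [Nat.le_floor_iff' hq.2.1.ne_zero] at this
    linarith

lemma upper : ∃ C : ℝ, 0 < C ∧ ∀ (n : ℕ) (y P : ℝ), n ≠ 0 → 1 < y → 1 < P →
    Real.log (fForm (fForm n)) ≤ P * Real.log (Real.log n + 1) + (1 / y) * (Real.log n / Real.log P) +
      (y * SS / (4 * Real.log y) + C * (y / Real.log y ^ 2)) := by
  obtain ⟨C, hC, H⟩ := Pi_bound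
  refine ⟨C, hC, fun n y P hn hy hP => ?_⟩
  have hly := Real.log_pos hy
  have hlP := Real.log_pos hP
  have hln : 0 ≤ Real.log n := Real.log_natCast_nonneg n
  have hSS := SS_pos
  have hlln : 0 ≤ Real.log (Real.log n + 1) := Real.log_nonneg (by linarith)
  have hnn : 0 ≤ P * Real.log (Real.log n + 1) + (1 / y) * (Real.log n / Real.log P) +
      (y * SS / (4 * Real.log y) + C * (y / Real.log y ^ 2)) := by
    have : 0 ≤ P * Real.log (Real.log n + 1) := mul_nonneg (by linarith) hlln
    positivity
  by_cases hm : fForm n = 0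
  · rw [hm, fForm_zero]; simpa using hnn
  by_cases hf : fForm (fForm n) = 0
  · rw [hf]; simpa using hnn
  rw [fForm_T hm hf]
  set m := fForm n with hmdef
  set A := m.primeFactors.filter Tq
  have hA : ∀ q ∈ A, Tq q := fun q hq => (mem_filter.1 hq).2
  set B := n.primeFactors.filter Tq
  have hB : ∀ q ∈ B, Tq q := fun q hq => (mem_filter.1 hq).2
  have hmB : m = ∏ p ∈ B, (n.factorization p + 1) := fForm_T hn hm
  set B1 := B.filter (fun p : ℕ => (p : ℝ) < P)
  set B2 := B.filter (fun p : ℕ => ¬ (p : ℝ) < P)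
  set e1 : ℕ → ℕ := fun q => ∑ p ∈ B1, (n.factorization p + 1).factorization q
  set e2 : ℕ → ℕ := fun q => ∑ p ∈ B2, (n.factorization p + 1).factorization q
  have hfac : ∀ q, m.factorization q = e1 q + e2 q := by
    intro q
    rw [hmB, Nat.factorization_prod fun p _ => Nat.succ_ne_zero _, Finsupp.finsetSum_apply]
    exact (sum_filter_add_sum_filter_not B _ _).symm
  have t1 : ∑ q ∈ A, (e1 q : ℝ) ≤ P * Real.log (Real.log n + 1) := by
    simp only [e1]
    push_cast
    rw [sum_comm]
    have hc : (B1.card : ℝ) ≤ P := by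
      have : B1 ⊆ Icc 1 ⌊P⌋₊ := fun p hp => by
        have := mem_filter.1 hp
        rw [mem_Icc]
        exact ⟨(hB p this.1).1.pos, Nat.le_floor this.2.le⟩
      have := card_le_card this
      rw [Nat.card_Icc, Nat.add_sub_cancel] at this
      calc (B1.card : ℝ) ≤ (⌊P⌋₊ : ℝ) := by exact_mod_cast this
        _ ≤ P := Nat.floor_le (by linarith)
    calc ∑ p ∈ B1, ∑ q ∈ A, ((n.factorization p + 1).factorization q : ℝ)
        ≤ ∑ p ∈ B1, Real.log (Real.log n + 1) := by
          refine sum_le_sum fun p hp => ?_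
          refine (sum_fac_le (Nat.succ_ne_zero _) A hA).trans ?_
          push_cast
          refine Real.log_le_log (by positivity) ?_
          have := sum_fac_le hn {p} (by simpa using hB p (mem_filter.1 hp).1)
          rw [sum_singleton] at this
          linarith
      _ = B1.card * Real.log (Real.log n + 1) := by rw [sum_const, nsmul_eq_mul]
      _ ≤ _ := by gcongr
  have t2 : ∑ q ∈ A, (e2 q : ℝ) * ((q : ℝ) - 1) ≤ Real.log n / Real.log P := by
    have : ∑ q ∈ A, (e2 q : ℝ) * ((q : ℝ) - 1) = ∑ p ∈ B2, ∑ q ∈ A, ((n.factorization p + 1).factorization q : ℝ) * ((q : ℝ) - 1) := by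
      rw [sum_comm]
      refine sum_congr rfl fun q _ => ?_
      simp only [e2]
      push_cast
      rw [sum_mul]
    rw [this, le_div_iff₀ hlP]
    calc _ ≤ (∑ p ∈ B2, (n.factorization p : ℝ)) * Real.log P := by
          gcongr with p hp
          exact bern_fac A fun q hq => (hA q hq).1
      _ ≤ ∑ p ∈ B2, (n.factorization p : ℝ) * Real.log p := by
          rw [sum_mul]
          refine sum_le_sum fun p hp => ?_
          have := (mem_filter.1 hp).2
          have := Real.log_le_log (by linarith) (not_lt.1 this)
          gcongr
      _ ≤ _ := sum_log_le hn B2 fun p hp => (hB p (mem_filter.1 hp).1).1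
  have hlog : Real.log ((∏ p ∈ A, (m.factorization p + 1) : ℕ) : ℝ) ≤ ∑ q ∈ A, (e1 q : ℝ) + ∑ q ∈ A, Real.log (e2 q + 1) := by
    push_cast
    rw [Real.log_prod fun q _ => by positivity, ← sum_add_distrib]
    refine sum_le_sum fun q _ => ?_
    rw [hfac]
    push_cast
    have h1 : Real.log ((e1 q : ℝ) + e2 q + 1) ≤ Real.log (((e1 q : ℝ) + 1) * (e2 q + 1)) := by
      refine Real.log_le_log (by positivity) ?_
      have : (0 : ℝ) ≤ (e1 q : ℝ) * e2 q := by positivity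
      nlinarith
    rw [Real.log_mul (by positivity) (by positivity)] at h1
    have h2 := Real.log_le_sub_one_of_pos (show (0 : ℝ) < (e1 q : ℝ) + 1 by positivity)
    linarith
  obtain ⟨N, hN⟩ := dual (by linarith) A hA e2 (y := y)
  have h5 := H y hy N
  have h6 : (1 / y) * (∑ q ∈ A, (e2 q : ℝ) * ((q : ℝ) - 1)) ≤ (1 / y) * (Real.log n / Real.log P) := by gcongr
  have h7 : (1 / y) * ∑ l ∈ range N, ∑ q ∈ TF ⌊y * L l + 1⌋₊, (y * L l + 1 - q) ≤
      (1 / y) * (y ^ 2 * SS / (4 * Real.log y) + C * (y ^ 2 / Real.log y ^ 2)) := by gcongr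
  have h8 : (1 / y) * (y ^ 2 * SS / (4 * Real.log y) + C * (y ^ 2 / Real.log y ^ 2)) =
      (y * SS / (4 * Real.log y) + C * (y / Real.log y ^ 2)) := by
    field_simp
  linarith

end BE

namespace BE
open Finset

noncomputable def Eq' (y : ℝ) (q : ℕ) : ℕ := ⌊1 / (Real.exp (q / y) - 1)⌋₊

lemma E_iff {y : ℝ} (hy : 0 < y) {q : ℕ} (hq : 0 < q) (l : ℕ) : l < Eq' y q ↔ (q : ℝ) ≤ y * L l := by
  have hq0 : (0 : ℝ) < q := Nat.cast_pos.2 hq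
  have he : 0 < Real.exp (q / y) - 1 := by
    have := Real.add_one_lt_exp (x := (q : ℝ) / y) (by positivity)
    have : 0 < (q : ℝ) / y := by positivity
    linarith
  have hl : (0 : ℝ) < (l : ℝ) + 1 := by positivity
  rw [Eq', ← Nat.succ_le_iff, Nat.le_floor_iff' (by simp), le_div_iff₀ he, ← div_le_iff₀' hy, L,
    Real.le_log_iff_exp_le (by positivity)]
  push_cast
  rw [← le_div_iff₀' hl]
  constructor <;> intro h <;> linarith

lemma E_le {y : ℝ} (hy : 0 < y) {q : ℕ} (hq : 0 < q) : (Eq' y q : ℝ) ≤ y * (1 / q) := by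
  have hq0 : (0 : ℝ) < q := Nat.cast_pos.2 hq
  have h1 := Real.add_one_le_exp ((q : ℝ) / y)
  have h2 : 0 < (q : ℝ) / y := by positivity
  refine (Nat.floor_le (by apply div_nonneg zero_le_one; linarith)).trans ?_
  calc 1 / (Real.exp (q / y) - 1) ≤ 1 / ((q : ℝ) / y) := by
        gcongr; linarith
    _ = _ := by field_simp

lemma sum_E_le {y : ℝ} (hy : 1 < y) : ((∑ q ∈ TF ⌊y⌋₊, Eq' y q : ℕ) : ℝ) ≤ y * (1 + Real.log y) := by
  push_cast
  calc ∑ q ∈ TF ⌊y⌋₊, (Eq' y q : ℝ) ≤ ∑ q ∈ TF ⌊y⌋₊, y * (1 / (q : ℝ)) := by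
        refine sum_le_sum fun q hq => E_le (by linarith) ?_
        rw [TF, mem_filter, mem_Icc] at hq
        exact hq.1.1
    _ ≤ ∑ q ∈ Icc 1 ⌊y⌋₊, y * (1 / (q : ℝ)) := by
        refine sum_le_sum_of_subset_of_nonneg (filter_subset _ _) fun q _ _ => by positivity
    _ = y * harmonic ⌊y⌋₊ := by
        rw [harmonic_eq_sum_Icc, ← mul_sum]
        push_cast
        simp only [one_div]
    _ ≤ _ := by
        gcongr
        exact harmonic_floor_le_one_add_log y hy.le

lemma TF_mem {z : ℝ} {q : ℕ} : q ∈ TF ⌊z⌋₊ ↔ Tq q ∧ (q : ℝ) ≤ z := by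
  rw [TF, mem_filter, mem_Icc]
  constructor
  · rintro ⟨⟨h1, h2⟩, h3⟩
    exact ⟨h3, (Nat.le_floor_iff' (by omega)).1 h2⟩
  · rintro ⟨h3, h2⟩
    exact ⟨⟨h3.1.pos, Nat.le_floor h2⟩, h3⟩

lemma TF_L {y : ℝ} (hy : 0 < y) (l : ℕ) :
    TF ⌊y * L l⌋₊ = (TF ⌊y⌋₊).filter fun q => l < Eq' y q := by
  ext q
  rw [mem_filter, TF_mem, TF_mem]
  constructor
  · rintro ⟨h1, h2⟩
    refine ⟨⟨h1, h2.trans ?_⟩, (E_iff hy h1.1.pos l).2 h2⟩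
    have := L_le_one l
    nlinarith
  · rintro ⟨⟨h1, -⟩, h2⟩
    exact ⟨h1, (E_iff hy h1.1.pos l).1 h2⟩

lemma swapE {y : ℝ} (hy : 0 < y) (N : ℕ) (g : ℕ → ℕ → ℝ) (hN : ∀ q ∈ TF ⌊y⌋₊, Eq' y q ≤ N) :
    ∑ l ∈ range N, ∑ q ∈ TF ⌊y * L l⌋₊, g l q = ∑ q ∈ TF ⌊y⌋₊, ∑ l ∈ range (Eq' y q), g l q := by
  simp_rw [TF_L hy, sum_filter]
  rw [sum_comm]
  refine sum_congr rfl fun q hq => ?_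
  rw [← sum_filter]
  refine sum_congr ?_ fun _ _ => rfl
  ext l
  have := hN q hq
  simp only [mem_filter, mem_range]
  omega

lemma benefit {y : ℝ} (hy : 0 < y) (N : ℕ) :
    ∑ l ∈ range N, L l * piN ⌊y * L l⌋₊ ≤ ∑ q ∈ TF ⌊y⌋₊, Real.log (Eq' y q + 1) := by
  set M := N + ∑ q ∈ TF ⌊y⌋₊, Eq' y q
  have hM : ∀ q ∈ TF ⌊y⌋₊, Eq' y q ≤ M := fun q hq =>
    (single_le_sum (f := Eq' y) (fun _ _ => Nat.zero_le _) hq).trans (Nat.le_add_left _ _)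
  have h := swapE hy M (fun l _ => L l) hM
  simp_rw [L_sum] at h
  rw [← h]
  calc _ ≤ ∑ l ∈ range M, L l * piN ⌊y * L l⌋₊ := by
        refine sum_le_sum_of_subset_of_nonneg (range_subset_range.2 (Nat.le_add_right _ _)) fun l _ _ => ?_
        exact mul_nonneg (L_pos l).le (Nat.cast_nonneg _)
    _ = _ := by
        refine sum_congr rfl fun l _ => ?_
        rw [sum_const, nsmul_eq_mul, piN, mul_comm]

lemma exists_inj {ι : Type*} (I : Finset ι) (J : Finset ℕ) (h : I.card ≤ J.card) :
    ∃ φ : ι → ℕ, Set.InjOn φ I ∧ ∀ i ∈ I, φ i ∈ J := by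
  classical
  have h' : Fintype.card I ≤ Fintype.card J := by simpa using h
  obtain ⟨f⟩ := Function.Embedding.nonempty_of_card_le h'
  refine ⟨fun i => if hi : i ∈ I then (f ⟨i, hi⟩ : ℕ) else 0, ?_, ?_⟩
  · intro i hi j hj hij
    have hi' : i ∈ I := hi
    have hj' : j ∈ I := hj
    simp only [hi', hj', dif_pos] at hij
    have := f.injective (Subtype.ext hij)
    simpa using this
  · intro i hi
    simp only [hi, dif_pos]
    exact (f ⟨i, hi⟩).2

lemma lower_con : ∃ C K : ℝ, 0 < C ∧ ∀ y : ℝ, 1 < y → K ≤ Real.log y → ∃ n : ℕ, n ≠ 0 ∧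
    Real.log n ≤ (Real.log y + 3 * Real.log (Real.log y)) *
      (y ^ 2 * SS / (4 * Real.log y) + C * (y ^ 2 / Real.log y ^ 2)) ∧
    y * SS / (2 * Real.log y) - C * (y / Real.log y ^ 2) ≤ Real.log (fForm (fForm n)) := by
  obtain ⟨C1, hC1, H1⟩ := sigma_bound
  obtain ⟨C2, hC2, H2⟩ := pi_bound
  obtain ⟨C3, hC3, H3⟩ := pi_lo
  refine ⟨C1 + C2, 4 * C3 + 36, by positivity, fun y hy hK => ?_⟩
  have hy0 : 0 < y := by linarith
  set b := Real.log y with hb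
  have hb36 : 36 ≤ b := by linarith
  have hlb0 : 0 ≤ Real.log b := Real.log_nonneg (by linarith)
  have hlb : 3 * Real.log b ≤ b := by
    have h1 := log_le_sqrt (show 0 < b by linarith)
    have h2 : 6 ≤ √b := Real.le_sqrt_of_sq_le (by linarith)
    nlinarith [Real.mul_self_sqrt (show 0 ≤ b by linarith)]
  set P := y * b ^ 3 with hPdef
  have hlP : Real.log P = b + 3 * Real.log b := by
    rw [hPdef, Real.log_mul hy0.ne' (by positivity), Real.log_pow]
    push_cast; rfl
  have hyP : y ≤ P := by
    have : 1 ≤ b ^ 3 := one_le_pow₀ (by linarith)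
    nlinarith
  have hy3 : 3 ≤ y := by
    have := Real.log_le_sub_one_of_pos hy0
    linarith
  set I := (TF ⌊y⌋₊).sigma (fun q => range (Eq' y q)) with hI
  have hcard : I.card ≤ (TF ⌊P⌋₊).card := by
    rw [← Nat.cast_le (α := ℝ)]
    have h1 : (I.card : ℝ) ≤ y * (1 + b) := by
      rw [hI, card_sigma]
      simp only [card_range]
      exact sum_E_le hy
    have h2 := H3 P (hy3.trans hyP)
    rw [hlP] at h2
    refine h1.trans (le_trans ?_ h2)
    have h3 : P / (2 * (2 * b)) ≤ P / (2 * (b + 3 * Real.log b)) := by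
      gcongr
      linarith
    have h4 : P / (b + 3 * Real.log b) ^ 2 ≤ P / b ^ 2 := by
      gcongr
      linarith
    have h5 : P / (2 * (2 * b)) = y * b * (b / 4) := by rw [hPdef]; field_simp; ring
    have h6 : P / b ^ 2 = y * b := by rw [hPdef]; field_simp
    have h7 := mul_le_mul_of_nonneg_left h4 hC3.le
    have h8 : y * b * 2 ≤ y * b * (b / 4 - C3) := by
      gcongr
      linarith
    have h9 : y * 1 ≤ y * b := by gcongr; linarith
    rw [h6] at h7
    linarith
  obtain ⟨φ, hφ, hφJ⟩ := exists_inj I _ hcard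
  have hTφ : ∀ i ∈ I, Tq (φ i) := fun i hi => (TF_mem.1 (hφJ i hi)).1
  have hTI : ∀ i ∈ I, Tq i.1 := fun i hi => (TF_mem.1 (mem_sigma.1 hi).1).1
  set n := ∏ i ∈ I, φ i ^ (i.1 - 1) with hn
  have hn0 : n ≠ 0 := prod_ne_zero_iff.2 fun i hi => pow_ne_zero _ (hTφ i hi).1.ne_zero
  have hf1 : fForm n = ∏ q ∈ TF ⌊y⌋₊, q ^ Eq' y q := by
    rw [hn, fForm_prod I φ _ hφ hTφ]
    calc ∏ i ∈ I, (i.1 - 1 + 1) = ∏ i ∈ I, i.1 := prod_congr rfl fun i hi => by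
          have := (hTI i hi).1.pos; omega
      _ = _ := by
          rw [hI, prod_sigma]
          simp only [prod_const, card_range]
  have hf2 : fForm (fForm n) = ∏ q ∈ TF ⌊y⌋₊, (Eq' y q + 1) := by
    rw [hf1]
    exact fForm_prod (TF ⌊y⌋₊) (fun q => q) (Eq' y) (fun _ _ _ _ h => h) fun q hq => (TF_mem.1 hq).1
  have hSS := SS_pos
  refine ⟨n, hn0, ?_, ?_⟩
  · have h1 : Real.log n ≤ (b + 3 * Real.log b) * ∑ q ∈ TF ⌊y⌋₊, ∑ l ∈ range (Eq' y q), (q : ℝ) := by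
      rw [hn]
      push_cast
      rw [Real.log_prod fun i hi => pow_ne_zero _ (Nat.cast_ne_zero.2 (hTφ i hi).1.ne_zero)]
      have : ∑ q ∈ TF ⌊y⌋₊, ∑ l ∈ range (Eq' y q), (q : ℝ) = ∑ i ∈ I, (i.1 : ℝ) := by
        rw [hI, sum_sigma]
      rw [this, mul_sum]
      refine sum_le_sum fun i hi => ?_
      rw [Real.log_pow, mul_comm]
      have h2 : Real.log (φ i) ≤ b + 3 * Real.log b := by
        rw [← hlP]
        exact Real.log_le_log (Nat.cast_pos.2 (hTφ i hi).1.pos) (TF_mem.1 (hφJ i hi)).2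
      have h3 : ((i.1 - 1 : ℕ) : ℝ) ≤ i.1 := Nat.cast_le.2 (Nat.sub_le _ _)
      exact mul_le_mul h2 h3 (Nat.cast_nonneg _) (by linarith)
    refine h1.trans ?_
    rw [← swapE hy0 (∑ q ∈ TF ⌊y⌋₊, Eq' y q) (fun _ q => (q : ℝ))
      (fun q hq => single_le_sum (f := Eq' y) (fun _ _ => Nat.zero_le _) hq)]
    have h4 := H1 y hy (∑ q ∈ TF ⌊y⌋₊, Eq' y q)
    have h5 : 0 ≤ C2 * (y ^ 2 / b ^ 2) := by positivity
    refine mul_le_mul_of_nonneg_left ?_ (by linarith)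
    rw [← hb] at h4
    linarith
  · rw [hf2]
    push_cast
    rw [Real.log_prod fun q _ => by positivity]
    have h1 : ∀ N, y / (2 * b) * (∑ l ∈ range N, L l ^ 2) - C2 * (y / b ^ 2) ≤ ∑ q ∈ TF ⌊y⌋₊, Real.log (Eq' y q + 1) :=
      fun N => (H2 y hy N).trans (benefit hy0 N)
    have h2 := le_of_tendsto' ((L2_summable.hasSum.tendsto_sum_nat.const_mul (y / (2 * b))).sub_const (C2 * (y / b ^ 2))) h1
    have h3 : ∑' l, L l ^ 2 = SS := rfl
    rw [h3] at h2
    have h5 : 0 ≤ C1 * (y / b ^ 2) := by positivity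
    have h6 : y / (2 * b) * SS = y * SS / (2 * b) := by ring
    linarith

end BE

namespace BE
open Finset

lemma log6 {b : ℝ} (hb : 144 ≤ b) : 6 * Real.log b ≤ b := by
  have h1 := log_le_sqrt (show 0 < b by linarith)
  have h2 : 12 ≤ √b := Real.le_sqrt_of_sq_le (by linarith)
  nlinarith [Real.mul_self_sqrt (show 0 ≤ b by linarith)]

lemma one_le_log {b : ℝ} (hb : 3 ≤ b) : 1 ≤ Real.log b := by
  rw [Real.le_log_iff_exp_le (by linarith)]
  linarith [Real.exp_one_lt_d9]

lemma up2 : ∃ C K : ℝ, 0 < C ∧ ∀ Y : ℝ, 1 < Y → K ≤ Real.log Y → ∀ n : ℕ, n ≠ 0 →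
    Real.log n ≤ Y ^ 2 * SS / 4 → Real.log (fForm (fForm n)) ≤
      Y * SS / (2 * Real.log Y) + C * (Y * Real.log (Real.log Y) / Real.log Y ^ 2) := by
  obtain ⟨C, hC, H⟩ := upper
  have hSS := SS_pos
  refine ⟨3 + 3 / 2 * SS + C, 144 + Real.log (SS / 4 + 1), by positivity, fun Y hY hK n hn hX => ?_⟩
  have hls : 0 ≤ Real.log (SS / 4 + 1) := Real.log_nonneg (by linarith)
  have hY0 : 0 < Y := by linarith
  set b := Real.log Y with hb
  have hb1 : 144 ≤ b := by linarith
  have h6 := log6 hb1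
  have hl1 : 1 ≤ Real.log b := one_le_log (by linarith)
  have hb0 : 0 < b := by linarith
  have hlP : Real.log (Y / b ^ 3) = b - 3 * Real.log b := by
    rw [Real.log_div hY0.ne' (by positivity), Real.log_pow]; push_cast; rfl
  have hP : 1 < Y / b ^ 3 := by
    have h : 0 < Real.log (Y / b ^ 3) := by rw [hlP]; linarith
    exact (Real.log_pos_iff (by positivity)).1 h
  have h := H n Y (Y / b ^ 3) hn hY hP
  rw [hlP, ← hb] at h
  have hln : 0 ≤ Real.log n := Real.log_natCast_nonneg n
  have t1 : Real.log (Real.log n + 1) ≤ 3 * b := by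
    have h1 : Real.log n + 1 ≤ Y ^ 2 * (SS / 4 + 1) := by nlinarith
    have h2 := Real.log_le_log (by linarith) h1
    rw [Real.log_mul (by positivity) (by positivity), Real.log_pow, ← hb] at h2
    push_cast at h2
    linarith
  have t1' : Y / b ^ 3 * Real.log (Real.log n + 1) ≤ 3 * (Y * Real.log b / b ^ 2) := by
    calc Y / b ^ 3 * Real.log (Real.log n + 1) ≤ Y / b ^ 3 * (3 * b) := by gcongr
      _ = 3 * (Y * 1 / b ^ 2) := by field_simp
      _ ≤ _ := by gcongr
  have t2 : 1 / Y * (Real.log n / (b - 3 * Real.log b)) ≤ Y * SS / (4 * b) + 3 / 2 * SS * (Y * Real.log b / b ^ 2) := by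
    have hd : 0 < b - 3 * Real.log b := by linarith
    calc 1 / Y * (Real.log n / (b - 3 * Real.log b)) ≤ 1 / Y * ((Y ^ 2 * SS / 4) / (b - 3 * Real.log b)) := by gcongr
      _ = Y * SS / 4 * (1 / (b - 3 * Real.log b)) := by field_simp
      _ ≤ Y * SS / 4 * (1 / b + 6 * Real.log b / b ^ 2) := by
          gcongr
          rw [div_add_div _ _ hb0.ne' (by positivity), div_le_div_iff₀ hd (by positivity)]
          have : 0 ≤ b * Real.log b * (b - 6 * Real.log b) := mul_nonneg (by positivity) (by linarith)
          nlinarith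
      _ = _ := by field_simp; ring
  have t3 : Y / b ^ 2 ≤ Y * Real.log b / b ^ 2 := by
    gcongr
    nlinarith
  have t4 := mul_le_mul_of_nonneg_left t3 hC.le
  have t5 : Y * SS / (2 * b) = Y * SS / (4 * b) + Y * SS / (4 * b) := by field_simp; ring
  rw [t5]
  linarith

set_option maxHeartbeats 1000000 in
lemma low2 : ∃ C K : ℝ, 0 < C ∧ ∀ Y : ℝ, 1 < Y → K ≤ Real.log Y → ∃ n : ℕ, n ≠ 0 ∧
    Real.log n ≤ Y ^ 2 * SS / 4 ∧
      Y * SS / (2 * Real.log Y) - C * (Y * Real.log (Real.log Y) / Real.log Y ^ 2) ≤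
      Real.log (fForm (fForm n)) := by
  obtain ⟨C, K, hC, H⟩ := lower_con
  have hSS := SS_pos
  set k := 8 * C / SS with hk
  have hk0 : 0 < k := by positivity
  set κ := (6 + 7 * k) / 2 with hκ
  have hκ0 : 0 < κ := by positivity
  refine ⟨κ * SS / 2 + 4 * C, 144 + 2 * |K| + 16 * κ ^ 2, by positivity, fun Y hY hK => ?_⟩
  have hY0 : 0 < Y := by linarith
  set b := Real.log Y with hb
  have hK0 := abs_nonneg K
  have hKK := le_abs_self K
  have hb1 : 144 ≤ b := by nlinarith [sq_nonneg κ]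
  have h6 := log6 hb1
  have hl1 : 1 ≤ Real.log b := one_le_log (by linarith)
  have hb0 : 0 < b := by linarith
  set δ := Real.log b / b with hδ
  have hδ0 : 0 < δ := by positivity
  have hδ1 : δ ≤ 1 := by rw [hδ, div_le_one hb0]; linarith
  have hbδ : 1 / b ≤ δ := by rw [hδ]; gcongr
  have hκδ : κ * δ ≤ 1 / 2 := by
    have h1 := log_le_sqrt hb0
    have h2 : 4 * κ ≤ √b := Real.le_sqrt_of_sq_le (by nlinarith)
    rw [hδ, mul_div_assoc', div_le_iff₀ hb0]
    nlinarith [Real.mul_self_sqrt hb0.le, Real.sqrt_nonneg b]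
  set a := κ * δ with ha
  have ha0 : 0 < a := by positivity
  set y := Y * (1 - a) with hy
  have hy0 : 0 < y := mul_pos hY0 (by linarith)
  have hyY : y ≤ Y := by nlinarith
  have hly : Real.log y ≤ b := Real.log_le_log hy0 hyY
  have hly2 : b / 2 ≤ Real.log y := by
    have h1 : Y / 2 ≤ y := by nlinarith
    have h2 := Real.log_le_log (by linarith) h1
    rw [Real.log_div hY0.ne' (by norm_num)] at h2
    linarith [Real.log_two_lt_d9]
  set d := Real.log y with hd
  have hd0 : 0 < d := by linarith
  have hy1 : 1 < y := (Real.log_pos_iff hy0.le).1 hd0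
  obtain ⟨n, hn, h1, h2⟩ := H y hy1 (by nlinarith [sq_nonneg κ])
  rw [← hd] at h1 h2
  have hld : Real.log d ≤ Real.log b := Real.log_le_log hd0 hly
  have hld0 : 0 ≤ Real.log d := Real.log_nonneg (by linarith)
  refine ⟨n, hn, h1.trans ?_, le_trans ?_ h2⟩
  · have e : (d + 3 * Real.log d) * (y ^ 2 * SS / (4 * d) + C * (y ^ 2 / d ^ 2)) =
        y ^ 2 * SS / 4 * ((1 + 3 * (Real.log d / d)) * (1 + 4 * C / SS * (1 / d))) := by
      field_simp
    rw [e]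
    have e1 : Real.log d / d ≤ 2 * δ := by
      rw [hδ]
      calc Real.log d / d ≤ Real.log b / (b / 2) := by gcongr
        _ = _ := by field_simp
    have e2 : 1 / d ≤ 2 * δ := by
      calc 1 / d ≤ 1 / (b / 2) := by gcongr
        _ = 2 * (1 / b) := by field_simp
        _ ≤ _ := by gcongr
    have e3 : (1 + 3 * (Real.log d / d)) * (1 + 4 * C / SS * (1 / d)) ≤ (1 + 3 * (2 * δ)) * (1 + 4 * C / SS * (2 * δ)) := by
      gcongr
    have e4 : (1 + 3 * (2 * δ)) * (1 + 4 * C / SS * (2 * δ)) ≤ 1 + 2 * a := by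
      have : 4 * C / SS * (2 * δ) = k * δ := by rw [hk]; ring
      rw [this, ha, hκ]
      nlinarith [mul_nonneg hk0.le (mul_nonneg hδ0.le (sub_nonneg.2 hδ1))]
    calc _ ≤ y ^ 2 * SS / 4 * (1 + 2 * a) := by
          gcongr
          exact e3.trans e4
      _ = Y ^ 2 * SS / 4 * ((1 - a) ^ 2 * (1 + 2 * a)) := by rw [hy]; ring
      _ ≤ Y ^ 2 * SS / 4 * 1 := by
          gcongr
          nlinarith [sq_nonneg a, mul_pos ha0 ha0]
      _ = _ := by ring
  · have f1 : Y * SS / (2 * b) - κ * SS / 2 * (Y * Real.log b / b ^ 2) ≤ y * SS / (2 * d) := by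
      calc Y * SS / (2 * b) - κ * SS / 2 * (Y * Real.log b / b ^ 2) = y * SS / (2 * b) := by
            rw [hy, ha, hδ]; field_simp; try ring
        _ ≤ _ := by gcongr
    have f2 : C * (y / d ^ 2) ≤ 4 * C * (Y * Real.log b / b ^ 2) := by
      calc C * (y / d ^ 2) ≤ C * (Y / (b / 2) ^ 2) := by gcongr
        _ = 4 * C * (Y * 1 / b ^ 2) := by field_simp; try ring
        _ ≤ _ := by gcongr
    linarith

lemma conv : ∃ C K : ℝ, 0 < C ∧ ∀ X : ℝ, 1 ≤ X → K ≤ Real.log X →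
    |2 * √(X / SS) * SS / (2 * Real.log (2 * √(X / SS))) - √X / Real.log X * (2 * √SS)| ≤
      C * (√X / Real.log X) * (Real.log (Real.log X) / Real.log X) ∧
    2 * √(X / SS) * Real.log (Real.log (2 * √(X / SS))) / Real.log (2 * √(X / SS)) ^ 2 ≤
      C * (√X / Real.log X) * (Real.log (Real.log X) / Real.log X) ∧
    Real.log X / 4 ≤ Real.log (2 * √(X / SS)) ∧ 1 < 2 * √(X / SS) := by
  have hSS := SS_pos
  set r := √SS with hr
  have hr0 : 0 < r := Real.sqrt_pos.2 hSS
  have hrr : r * r = SS := Real.mul_self_sqrt hSS.le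
  set c := Real.log (2 / r) with hc
  refine ⟨8 * |c| * r + 32 / r, 4 * |c| + 16, by positivity, fun X hX hK => ?_⟩
  have hX0 : 0 < X := by linarith
  have hsX : 0 < √X := Real.sqrt_pos.2 hX0
  have hYe : 2 * √(X / SS) = 2 / r * √X := by
    rw [Real.sqrt_div hX0.le, ← hr]; ring
  rw [hYe]
  set b := Real.log (2 / r * √X) with hb
  set Z := Real.log X with hZ
  have hbe : b = c + Z / 2 := by
    rw [hb, Real.log_mul (by positivity) hsX.ne', Real.log_sqrt hX0.le]
  have hc1 := le_abs_self c
  have hc2 := neg_abs_le c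
  have hc0 := abs_nonneg c
  have hb4 : Z / 4 ≤ b := by linarith
  have hbZ : b ≤ Z := by linarith
  have hZ0 : 0 < Z := by linarith
  have hb0 : 0 < b := by linarith
  have hW : 1 ≤ Real.log Z := one_le_log (by linarith)
  have hlb : Real.log b ≤ Real.log Z := Real.log_le_log hb0 hbZ
  have hg : ∀ A : ℝ, A * (√X / Z) * (Real.log Z / Z) = A * √X * Real.log Z / Z ^ 2 := by
    intro A; field_simp
  refine ⟨?_, ?_, hb4, (Real.log_pos_iff (by positivity)).1 hb0⟩
  · have e : 2 / r * √X * SS / (2 * b) - √X / Z * (2 * r) = r * √X * (-2 * c) / (b * Z) := by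
      rw [← hrr]
      have : Z = 2 * b - 2 * c := by linarith
      field_simp
      rw [this]; ring
    rw [e, hg, abs_div, abs_mul, abs_mul, abs_mul, abs_of_pos hr0, abs_of_pos hsX, abs_of_pos (mul_pos hb0 hZ0)]
    norm_num
    calc r * √X * (2 * |c|) / (b * Z) ≤ r * √X * (2 * |c|) / (Z / 4 * Z) := by gcongr
      _ = (8 * |c| * r) * √X * 1 / Z ^ 2 := by field_simp; try ring
      _ ≤ _ := by
        gcongr
        have : 0 < 32 / r := by positivity
        linarith
  · rw [hg]
    calc 2 / r * √X * Real.log b / b ^ 2 ≤ 2 / r * √X * Real.log Z / (Z / 4) ^ 2 := by gcongr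
      _ = (32 / r) * √X * Real.log Z / Z ^ 2 := by field_simp; try ring
      _ ≤ _ := by
        gcongr
        have : 0 ≤ 8 * |c| * r := by positivity
        linarith

end BE

/-- `max_{n ≤ x} log f(f(n)) = (√(log x)/log₂ x)·(c/√2 + O(log₃ x/log₂ x))` as `x → ∞`,
for `f(n) = (1/2)·#{(x,y) ∈ ℤ² : x² + 2y² = n}` (and `f(0) = 1`). -/
theorem maxOrder_iterated_form_x2_plus_2y2 :
    ∃ C : ℝ, 0 < C ∧ ∀ᶠ x : ℕ in atTop,
      |(⨆ n ∈ Finset.Icc 1 x, Real.log (fForm (fForm n))) -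
          Real.sqrt (Real.log x) / Real.log (Real.log x) * (cBEFS / Real.sqrt 2)| ≤
        C * (Real.sqrt (Real.log x) / Real.log (Real.log x)) *
          (Real.log (Real.log (Real.log x)) / Real.log (Real.log x)) := by
  obtain ⟨C1, K1, hC1, H1⟩ := BE.up2
  obtain ⟨C2, K2, hC2, H2⟩ := BE.low2
  obtain ⟨C3, K3, hC3, H3⟩ := BE.conv
  refine ⟨C3 + (C1 + C2) * C3, by positivity, ?_⟩
  have hSS := BE.SS_pos
  have t1 : Tendsto (fun x : ℕ => Real.log (x : ℝ)) atTop atTop :=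
    Real.tendsto_log_atTop.comp tendsto_natCast_atTop_atTop
  have t2 : Tendsto (fun x : ℕ => Real.log (Real.log (x : ℝ))) atTop atTop := Real.tendsto_log_atTop.comp t1
  filter_upwards [t1.eventually_ge_atTop 1, t2.eventually_ge_atTop (4 * |K1| + 4 * |K2| + |K3| + 12),
    eventually_ge_atTop 1] with x hX hZ hx
  rw [BE.c_eq]
  have k1 := le_abs_self K1
  have k2 := le_abs_self K2
  have k3 := le_abs_self K3
  have a1 := abs_nonneg K1
  have a2 := abs_nonneg K2
  have a3 := abs_nonneg K3
  obtain ⟨h1, h2, h3, h4⟩ := H3 (Real.log x) hX (by linarith)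
  set Y := 2 * √(Real.log x / BE.SS) with hY
  have hYX : Y ^ 2 * BE.SS / 4 = Real.log x := by
    rw [hY, mul_pow, Real.sq_sqrt (by positivity)]; field_simp; try ring
  have hb0 : 3 ≤ Real.log Y := by linarith
  have U := H1 Y h4 (by linarith)
  obtain ⟨m, hm, hmX, hmf⟩ := H2 Y h4 (by linarith)
  rw [hYX] at U hmX
  have hlb : 1 ≤ Real.log (Real.log Y) := BE.one_le_log hb0
  set B := Y * BE.SS / (2 * Real.log Y) + C1 * (Y * Real.log (Real.log Y) / Real.log Y ^ 2) with hB
  have hB0 : 0 ≤ B := by positivity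
  have hin : ∀ n : ℕ, (⨆ (_ : n ∈ Finset.Icc 1 x), Real.log (fForm (fForm n))) ≤ B := by
    intro n
    refine Real.iSup_le (fun hn => ?_) hB0
    rw [Finset.mem_Icc] at hn
    refine U n (by omega) (Real.log_le_log (by exact_mod_cast hn.1) (by exact_mod_cast hn.2))
  have hup : (⨆ n ∈ Finset.Icc 1 x, Real.log (fForm (fForm n))) ≤ B := Real.iSup_le hin hB0
  have hmem : m ∈ Finset.Icc 1 x := by
    rw [Finset.mem_Icc]
    refine ⟨Nat.pos_of_ne_zero hm, ?_⟩
    have hm0 : (0 : ℝ) < m := by exact_mod_cast Nat.pos_of_ne_zero hm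
    have := (Real.log_le_log_iff hm0 (by exact_mod_cast hx)).1 hmX
    exact_mod_cast this
  have hlow : Real.log (fForm (fForm m)) ≤ ⨆ n ∈ Finset.Icc 1 x, Real.log (fForm (fForm n)) := by
    have h := le_ciSup (f := fun n => ⨆ (_ : n ∈ Finset.Icc 1 x), Real.log (fForm (fForm n)))
      ⟨B, by rintro _ ⟨n, rfl⟩; exact hin n⟩ m
    simp only [ciSup_pos hmem] at h
    exact h
  set g := √(Real.log x) / Real.log (Real.log x)
  set g2 := Real.log (Real.log (Real.log x)) / Real.log (Real.log x)
  rw [abs_le] at h1 ⊢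
  have u1 := mul_le_mul_of_nonneg_left h2 hC1.le
  have u2 := mul_le_mul_of_nonneg_left h2 hC2.le
  have hq : 0 ≤ Y * Real.log (Real.log Y) / Real.log Y ^ 2 := by positivity
  have hgg : 0 ≤ C3 * g * g2 := hq.trans h2
  have v1 := mul_nonneg hC1.le hgg
  have v2 := mul_nonneg hC2.le hgg
  have e : (C3 + (C1 + C2) * C3) * g * g2 = C3 * g * g2 + C1 * (C3 * g * g2) + C2 * (C3 * g * g2) := by ring
  rw [e]
  constructor <;> linarith [h1.1, h1.2]
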